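/- arXiv:2405.00778 — 2 statements merged into one kernel-verified Lean document; each statement's English description precedes it below -/
import Mathlib

section
/- Let p be a prime and let m, n, s, r be integers with 0 ≤ s ≤ m and 0 ≤ r ≤ n. Suppose that s ≤ 3, or m − s ≤ 1, or (m − s = 2 and n − r = 2). Then for every set E ⊆ [m]×[n], E is independent in the tensor matroid T_{m,n}(s,r,𝔽_p) (where 𝔽_p = ℤ/pℤ) if and only if E is independent in the tensor matroid T_{m,n}(s,r,ℚ); that is, the matroids T_{m,n}(s,r,p) and T_{m,n}(s,r,0) coincide. -/
open scoped Classical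

noncomputable section

/-- The field of fractions of the polynomial ring over `F` in variables
`X i k` (`i ∈ [m]`, `k ∈ [s]`) and `Y j l` (`j ∈ [n]`, `l ∈ [r]`). -/
abbrev TField (F : Type*) [Field F] (m n s r : ℕ) :=
  FractionRing (MvPolynomial ((Fin m × Fin s) ⊕ (Fin n × Fin r)) F)

/-- The vector `u_i ⊗ v_j ∈ K_F^{[s]×[r]}` with `(k,l)`-entry `X_{ik} · Y_{jl}`. -/
noncomputable def tvec (F : Type*) [Field F] (m n s r : ℕ) (e : Fin m × Fin n) :
    Fin s × Fin r → TField F m n s r := fun kl =>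
  algebraMap (MvPolynomial ((Fin m × Fin s) ⊕ (Fin n × Fin r)) F) (TField F m n s r)
      (MvPolynomial.X (Sum.inl (e.1, kl.1))) *
  algebraMap (MvPolynomial ((Fin m × Fin s) ⊕ (Fin n × Fin r)) F) (TField F m n s r)
      (MvPolynomial.X (Sum.inr (e.2, kl.2)))

/-- `E` is independent in the tensor matroid `T_{m,n}(s,r,F)`: the family
`{u_i ⊗ v_j : (i,j) ∈ E}` is linearly independent over `K_F`. -/
def TensorIndep (F : Type*) [Field F] (m n s r : ℕ) (E : Set (Fin m × Fin n)) : Prop :=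
  LinearIndependent (TField F m n s r) (fun e : E => tvec F m n s r e)

/-- `E` is spanning in the tensor matroid `T_{m,n}(s,r,F)`: the family
`{u_i ⊗ v_j : (i,j) ∈ E}` spans `K_F^{[s]×[r]}`. -/
def TensorSpanning (F : Type*) [Field F] (m n s r : ℕ) (E : Set (Fin m × Fin n)) : Prop :=
  Submodule.span (TField F m n s r) (tvec F m n s r '' E) = ⊤

/-!
A nonzero minor of the integer polynomial matrix of the `u_i ⊗ v_j` modulo `p` is nonzero over `ℚ`,
so one direction is specialization. For the converse, each case finds a certificate of independence
that does not depend on the field. If `s ≥ m`, independence only bounds the row sizes of `E`.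

For positive coranks `a = m - s` and `b = n - r`, Gale duality identifies the complements of bases
of the tensor matroid with bases of the birigidity matroid of points in dimensions `a` and `b`. If
`a = 1`, the Maxwell count is necessary for birigid independence, and by Lovász's theorem on generic
hyperplane sections of flats it is sufficient over every infinite field. If `a = b = 2`, the
Jacobian criterion turns birigid independence over `ℚ` into algebraic independence of the
polynomials `x_{i0} y_{j0} + x_{i1} y_{j1}`. Up to vertex factors these are differences of vertex
coordinates, so a valuation that separates their Laurent monomials yields an ultrametric tree on the
vertices; nearest neighbour interchanges make it a caterpillar, whose order of the leaves splits the
edges as a bipartite forest. Over any field, the points `(1, T ^ k)` with exponents `k` in that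
order then have independent rigidity rows.

If `s ≤ 3` and the tensors of `E` are independent, then `∑_j dim (U_j ⊓ V) ≤ r dim V` for every
subspace `V` of `K^s`, where `U_j` is spanned by the `u_i` with `(i, j) ∈ E`. Conversely, a relation
`∑_j x_j ⊗ v_j = 0` with `x_j ∈ U_j` can be perturbed in the generic `v_j`: their rank is maximal,
so `⨁_j U_j` has an image in `K^s ⊗ K^r` that contains all `x_j ⊗ w`. In dimension at most `3` this
forces a subspace `V` violating the inequality, and such a `V` can be moved to any other field,
because there the position of `V` relative to points in general position is combinatorial.
-/

open scoped Matrix Kronecker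

section Specialization

theorem exists_det_submatrix_ne_zero {ι κ K : Type*} [Field K] [Fintype ι] [DecidableEq ι]
    [Finite κ] {A : Matrix ι κ K} (hA : LinearIndependent K A.row) :
    ∃ e : ι → κ, (A.submatrix id e).det ≠ 0 := by
  cases nonempty_fintype κ
  have hspan : Submodule.span K (Set.range A.col) = ⊤ :=
    Submodule.eq_top_of_finrank_eq <| by
      rw [← Matrix.rank_eq_finrank_span_cols, hA.rank_matrix, Module.finrank_fintype_fun_eq_card]
  obtain ⟨κ', a, -, ha, hli⟩ := exists_linearIndependent' K A.col
  let B := Module.Basis.mk hli (ha.trans hspan).ge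
  let e := (Pi.basisFun K ι).indexEquiv B
  refine ⟨a ∘ e, ?_⟩
  have hcols : LinearIndependent K (A.submatrix id (a ∘ e)).col := hli.comp e e.injective
  rwa [Matrix.linearIndependent_cols_iff_isUnit, Matrix.isUnit_iff_isUnit_det,
    isUnit_iff_ne_zero] at hcols

theorem linearIndependent_of_specialization {R K L ι κ : Type*} [CommRing R] [Field K] [Field L]
    [Finite ι] [Finite κ] {ψ : R →+* K} (hψ : Function.Injective ψ) (φ : R →+* L) (w : ι → κ → R)
    (h : LinearIndependent L fun i k => φ (w i k)) :
    LinearIndependent K fun i k => ψ (w i k) := by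
  cases nonempty_fintype ι
  obtain ⟨e, he⟩ := exists_det_submatrix_ne_zero (A := Matrix.of fun i k => φ (w i k)) h
  let M : Matrix ι ι R := Matrix.of fun i j => w i (e j)
  have hφ : φ M.det ≠ 0 := by rwa [RingHom.map_det]
  have hM : (ψ.mapMatrix M).det ≠ 0 := by
    rw [← RingHom.map_det]
    exact (map_ne_zero_iff ψ hψ).2 fun h0 => hφ (by rw [h0, map_zero])
  exact (Matrix.linearIndependent_rows_of_det_ne_zero hM).of_comp (LinearMap.funLeft K K e)

/-- Every subfamily with at most `dim V` members is linearly independent; equivalently, the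
matroid of `u` is uniform of rank `dim V` (or free). -/
def InGeneralPosition (K : Type*) {ι V : Type*} [Field K] [AddCommGroup V] [Module K V]
    (u : ι → V) : Prop :=
  ∀ A : Finset ι, A.card ≤ Module.finrank K V → LinearIndepOn K u A

theorem inGeneralPosition_of_algebraicIndependent {F K ι σ : Type*} [Field F] [Field K]
    [Algebra F K] [Finite σ] {u : ι → σ → K}
    (hu : AlgebraicIndependent F fun x : ι × σ => u x.1 x.2) : InGeneralPosition K u := by
  cases nonempty_fintype σ
  intro A hA
  obtain ⟨g⟩ : Nonempty (A ↪ σ) := by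
    simpa [Function.Embedding.nonempty_iff_card_le] using hA
  let φ : MvPolynomial (ι × σ) F →+* F := MvPolynomial.eval
    fun x => if h : x.1 ∈ A then (Pi.single (g ⟨x.1, h⟩) 1 : σ → F) x.2 else 0
  have hsingle : LinearIndependent F fun i : A => (Pi.single (g i) 1 : σ → F) :=
    (Pi.linearIndependent_single_one σ F).comp g g.injective
  have h := linearIndependent_of_specialization
    (ψ := (MvPolynomial.aeval (R := F) fun x : ι × σ => u x.1 x.2).toRingHom) hu φ
    (fun (i : A) k => MvPolynomial.X (i.1, k)) (by simpa [φ] using hsingle)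
  change LinearIndependent K fun i : A => u i
  simpa using h

end Specialization

section GenericTensors

theorem linearIndepOn_kronecker_swap {K ι κ σ τ : Type*} [Field K] {u : Matrix ι σ K}
    {v : Matrix κ τ K} {E : Set (ι × κ)} (h : LinearIndepOn K (u ⊗ₖ v).row E) :
    LinearIndepOn K (v ⊗ₖ u).row (Prod.swap ⁻¹' E) := by
  have hswap : Function.Injective fun e : Prod.swap ⁻¹' E => (⟨e.1.swap, e.2⟩ : E) :=
    fun a b hab => Subtype.ext (Prod.swap_injective (congrArg Subtype.val hab))
  refine LinearIndependent.of_comp (LinearMap.funLeft K K Prod.swap) ?_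
  convert LinearIndependent.comp h _ hswap using 1
  funext e x
  exact mul_comm _ _

variable (F : Type*) [Field F] (m n s r : ℕ)

/-- The matrix whose rows are the totally generic vectors `u_1, …, u_m`. -/
def genericLeft : Matrix (Fin m) (Fin s) (TField F m n s r) := fun i k =>
  algebraMap (MvPolynomial ((Fin m × Fin s) ⊕ (Fin n × Fin r)) F) _ (.X (.inl (i, k)))

/-- The matrix whose rows are the totally generic vectors `v_1, …, v_n`. -/
def genericRight : Matrix (Fin n) (Fin r) (TField F m n s r) := fun j l =>
  algebraMap (MvPolynomial ((Fin m × Fin s) ⊕ (Fin n × Fin r)) F) _ (.X (.inr (j, l)))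

theorem algebraicIndependent_algebraMap_X :
    AlgebraicIndependent F fun x : (Fin m × Fin s) ⊕ (Fin n × Fin r) =>
      algebraMap (MvPolynomial _ F) (TField F m n s r) (.X x) :=
  (MvPolynomial.algebraicIndependent_X _ F).map'
    (f := Algebra.algHom F (MvPolynomial _ F) (TField F m n s r)) (IsFractionRing.injective _ _)

theorem inGeneralPosition_genericLeft :
    InGeneralPosition (TField F m n s r) (genericLeft F m n s r).row :=
  inGeneralPosition_of_algebraicIndependent <|
    (algebraicIndependent_algebraMap_X F m n s r).comp _ Sum.inl_injective

theorem inGeneralPosition_genericRight :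
    InGeneralPosition (TField F m n s r) (genericRight F m n s r).row :=
  inGeneralPosition_of_algebraicIndependent <|
    (algebraicIndependent_algebraMap_X F m n s r).comp _ Sum.inr_injective

variable {F m n s r} {E : Set (Fin m × Fin n)}

/-- The entries of `u_i ⊗ v_j` as polynomials over an arbitrary ring, so that they can be
specialized. -/
def tvecPoly (R : Type*) [CommRing R] (e : Fin m × Fin n) (x : Fin s × Fin r) :
    MvPolynomial ((Fin m × Fin s) ⊕ (Fin n × Fin r)) R :=
  .X (.inl (e.1, x.1)) * .X (.inr (e.2, x.2))

theorem tensorIndep_iff_linearIndependent_tvecPoly :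
    TensorIndep F m n s r E ↔ LinearIndependent (TField F m n s r)
      fun (e : E) (x : Fin s × Fin r) =>
        algebraMap (MvPolynomial _ F) (TField F m n s r) (tvecPoly F e.1 x) := by
  simp only [tvecPoly, map_mul]
  rfl

theorem tensorIndep_of_linearIndepOn {L : Type*} [Field L] [Algebra F L]
    {u : Matrix (Fin m) (Fin s) L} {v : Matrix (Fin n) (Fin r) L}
    (h : LinearIndepOn L (u ⊗ₖ v).row E) : TensorIndep F m n s r E := by
  let φ := (MvPolynomial.aeval (R := F)
    (Sum.elim (fun x : Fin m × Fin s => u x.1 x.2) fun x : Fin n × Fin r => v x.1 x.2)).toRingHom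
  refine tensorIndep_iff_linearIndependent_tvecPoly.2 <|
    linearIndependent_of_specialization (IsFractionRing.injective _ _) φ _ ?_
  change LinearIndependent L fun (e : E) (x : Fin s × Fin r) => u e.1.1 x.1 * v e.1.2 x.2 at h
  simpa [φ, tvecPoly] using h

theorem tensorIndep_swap (h : TensorIndep F m n s r E) :
    TensorIndep F n m r s (Prod.swap ⁻¹' E) :=
  tensorIndep_of_linearIndepOn (L := TField F m n s r) <|
    linearIndepOn_kronecker_swap (u := genericLeft F m n s r) (v := genericRight F m n s r) h

theorem tensorIndep_rat (h : TensorIndep F m n s r E) : TensorIndep ℚ m n s r E := by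
  let σ := (Fin m × Fin s) ⊕ (Fin n × Fin r)
  let φ : MvPolynomial σ ℤ →+* TField F m n s r :=
    (algebraMap (MvPolynomial σ F) _).comp (MvPolynomial.map (Int.castRingHom F))
  let ψ : MvPolynomial σ ℤ →+* TField ℚ m n s r :=
    (algebraMap (MvPolynomial σ ℚ) _).comp (MvPolynomial.map (Int.castRingHom ℚ))
  have hψ : Function.Injective ψ :=
    (IsFractionRing.injective (MvPolynomial σ ℚ) _).comp
      (MvPolynomial.map_injective _ Int.cast_injective)
  rw [tensorIndep_iff_linearIndependent_tvecPoly] at h ⊢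
  have key := linearIndependent_of_specialization hψ φ (fun e : E => tvecPoly ℤ e.1)
    (by simpa only [φ, tvecPoly, RingHom.comp_apply, map_mul, MvPolynomial.map_X] using h)
  simpa only [ψ, tvecPoly, RingHom.comp_apply, map_mul, MvPolynomial.map_X] using key

end GenericTensors

section Duality

theorem linearIndepOn_iff_forall_sum_smul {R I W : Type*} [Ring R] [Fintype I] [AddCommGroup W]
    [Module R W] {z : I → W} {s : Set I} :
    LinearIndepOn R z s ↔ ∀ c : I → R, (∀ i ∉ s, c i = 0) → ∑ i, c i • z i = 0 → c = 0 := by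
  rw [linearIndepOn_iff]
  constructor
  · intro h c hc h0
    have hl := h ((Finsupp.linearEquivFunOnFinite R R I).symm c)
      (fun i hi => by_contra fun his => Finsupp.mem_support_iff.1 hi (hc i his))
      (by rw [Finsupp.linearCombination_eq_fintype_linearCombination_apply R]
          simpa [Fintype.linearCombination_apply] using h0)
    simpa using hl
  · intro h l hl h0
    refine DFunLike.coe_injective (h l (fun i hi => ?_) ?_)
    · exact Finsupp.notMem_support_iff.1 fun hil => hi (hl hil)
    · rwa [Finsupp.linearCombination_apply,
        Finsupp.sum_fintype _ _ fun i => zero_smul R (z i)] at h0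

theorem rank_eq_card_of_mulVec_injective {K ι σ : Type*} [Field K] [Fintype σ] {X : Matrix ι σ K}
    (hX : Function.Injective X.mulVec) : X.rank = Fintype.card σ := by
  rw [Matrix.rank, LinearMap.finrank_range_of_inj (f := X.mulVecLin) hX,
    Module.finrank_fintype_fun_eq_card]

variable {K ι κ σ τ α β : Type*} [Field K] [Fintype ι] [Fintype κ] [Fintype σ] [Fintype τ]

theorem span_eq_top_iff_forall_dotProduct_eq_zero {s : Set (σ → K)} :
    Submodule.span K s = ⊤ ↔ ∀ x : σ → K, (∀ v ∈ s, v ⬝ᵥ x = 0) → x = 0 := by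
  constructor
  · intro h x hx
    have hle : Submodule.span K s ≤ LinearMap.ker ((dotProductBilin K K).flip x) :=
      Submodule.span_le.2 hx
    exact dotProduct_eq_zero x fun w => by
      rw [dotProduct_comm]
      exact hle (h ▸ Submodule.mem_top)
  · intro h
    by_contra hne
    obtain ⟨f, hf, hle⟩ := Submodule.exists_le_ker_of_lt_top _ (lt_top_iff_ne_top.2 hne)
    have hdot : ∀ w, f w = w ⬝ᵥ fun k => f (Pi.single k 1) := fun w => by
      simp_rw [f.pi_apply_eq_sum_univ w, dotProduct, smul_eq_mul, ← Pi.single_apply, Pi.single_comm]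
    have h0 := h _ fun v hv => (hdot v).symm.trans (hle (Submodule.subset_span hv))
    exact hf (LinearMap.ext fun w => by rw [hdot, h0, dotProduct_zero, LinearMap.zero_apply])

/- Gale duality: `z` describes the relations among the linear forms given by the rows of `A`. -/
theorem span_row_image_eq_top_iff_linearIndepOn_compl {W : Type*} [AddCommGroup W] [Module K W]
    {A : Matrix ι σ K} (hA : Function.Injective A.mulVec) {z : ι → W}
    (h : Function.Exact A.mulVec (Fintype.linearCombination K z)) (s : Set ι) :
    Submodule.span K (A.row '' s) = ⊤ ↔ LinearIndepOn K z sᶜ := by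
  rw [span_eq_top_iff_forall_dotProduct_eq_zero, linearIndepOn_iff_forall_sum_smul]
  constructor
  · intro hs c hc h0
    obtain ⟨x, rfl⟩ := (h c).1 h0
    rw [hs x (by rintro _ ⟨i, hi, rfl⟩; exact hc i (Set.notMem_compl_iff.2 hi)),
      Matrix.mulVec_zero]
  · intro hs x hx
    refine hA ((hs _ (fun i hi => ?_) ((h _).2 ⟨x, rfl⟩)).trans (Matrix.mulVec_zero A).symm)
    exact hx _ ⟨i, Set.notMem_compl_iff.1 hi, rfl⟩

theorem transpose_mul_eq_zero_of_exact {X : Matrix ι σ K} {P : Matrix ι α K}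
    (h : Function.Exact X.mulVec Pᵀ.mulVec) : Pᵀ * X = 0 :=
  Matrix.ext_iff_mulVec.2 fun x => by
    rw [← Matrix.mulVec_mulVec, Matrix.zero_mulVec]
    exact (h _).2 ⟨x, rfl⟩

theorem exact_mulVec_transpose [Fintype α] {X : Matrix ι σ K} {P : Matrix ι α K}
    (h : Function.Exact X.mulVec Pᵀ.mulVec) : Function.Exact P.mulVec Xᵀ.mulVec := by
  have hzero : Xᵀ * P = 0 := by
    simpa using congrArg Matrix.transpose (transpose_mul_eq_zero_of_exact h)
  have hle : LinearMap.range P.mulVecLin ≤ LinearMap.ker Xᵀ.mulVecLin := by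
    rintro _ ⟨x, rfl⟩
    rw [LinearMap.mem_ker, Matrix.mulVecLin_apply, Matrix.mulVecLin_apply, Matrix.mulVec_mulVec,
      hzero, Matrix.zero_mulVec]
  have hrange : LinearMap.ker Pᵀ.mulVecLin = LinearMap.range X.mulVecLin :=
    Submodule.ext h
  have hP := LinearMap.finrank_range_add_finrank_ker Pᵀ.mulVecLin
  have hX := LinearMap.finrank_range_add_finrank_ker Xᵀ.mulVecLin
  have hrank : Module.finrank K (LinearMap.range P.mulVecLin) =
      Module.finrank K (LinearMap.ker Xᵀ.mulVecLin) := by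
    rw [hrange] at hP
    change Matrix.rank _ + Matrix.rank _ = _ at hP
    change Matrix.rank _ + _ = _ at hX
    change Matrix.rank _ = _
    rw [Matrix.rank_transpose] at hP hX
    omega
  intro y
  exact (SetLike.ext_iff.1 (Submodule.eq_of_le_of_finrank_eq hle hrank) y).symm

theorem mulVec_injective_transpose_toMatrix' [Fintype α] [DecidableEq ι]
    {g : (ι → K) →ₗ[K] (α → K)} (hg : Function.Surjective g) :
    Function.Injective (LinearMap.toMatrix' g)ᵀ.mulVec := by
  refine (injective_iff_map_eq_zero (LinearMap.toMatrix' g)ᵀ.mulVecLin).2 fun x hx => ?_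
  refine dotProduct_eq_zero x fun z => ?_
  obtain ⟨y, rfl⟩ := hg z
  rw [← LinearMap.toMatrix'_mulVec g y, Matrix.dotProduct_mulVec, ← Matrix.mulVec_transpose]
  exact (congrArg (· ⬝ᵥ y) hx).trans (zero_dotProduct y)

theorem exists_exact_mulVec [Fintype α] {X : Matrix ι σ K} (hX : Function.Injective X.mulVec)
    (hcard : Fintype.card ι = Fintype.card σ + Fintype.card α) :
    ∃ P : Matrix ι α K, Function.Injective P.mulVec ∧ Function.Exact X.mulVec Pᵀ.mulVec := by
  classical
  have hrank := rank_eq_card_of_mulVec_injective hX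
  have hdim : Module.finrank K ((ι → K) ⧸ LinearMap.range X.mulVecLin) =
      Module.finrank K (α → K) := by
    have h := Submodule.finrank_quotient_add_finrank (LinearMap.range X.mulVecLin)
    rw [Matrix.rank] at hrank
    rw [Module.finrank_fintype_fun_eq_card] at h ⊢
    omega
  let e := LinearEquiv.ofFinrankEq _ _ hdim
  let g := e.toLinearMap ∘ₗ (LinearMap.range X.mulVecLin).mkQ
  refine ⟨(LinearMap.toMatrix' g)ᵀ, mulVec_injective_transpose_toMatrix'
    (e.surjective.comp (Submodule.mkQ_surjective _)), fun y => ?_⟩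
  rw [Matrix.transpose_transpose, LinearMap.toMatrix'_mulVec]
  simp [g]

theorem exists_mul_eq_one_of_mulVec_injective {X : Matrix ι σ K} [DecidableEq σ]
    (hX : Function.Injective X.mulVec) : ∃ X' : Matrix σ ι K, X' * X = 1 := by
  classical
  obtain ⟨g, hg⟩ := X.mulVecLin.exists_leftInverse_of_injective (LinearMap.ker_eq_bot.2 hX)
  refine ⟨LinearMap.toMatrix' g, ?_⟩
  rw [← LinearMap.toMatrix'_id, ← hg, LinearMap.toMatrix'_comp, ← Matrix.toLin'_apply',
    LinearMap.toMatrix'_toLin']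

theorem mul_mul_eq_of_transpose_mul_eq_zero {κ : Type*} {X : Matrix ι σ K} {P : Matrix ι α K}
    (h : Function.Exact X.mulVec Pᵀ.mulVec) [DecidableEq σ] {X' : Matrix σ ι K} (hX' : X' * X = 1)
    {R : Matrix ι κ K} (hR : Pᵀ * R = 0) : X * (X' * R) = R := by
  ext i j
  obtain ⟨x, hx⟩ := (h (R.col j)).1 (funext fun a => congrFun (congrFun hR a) j)
  have hcol : X *ᵥ (X' *ᵥ R.col j) = R.col j := by
    rw [← hx, Matrix.mulVec_mulVec x X' X, hX', Matrix.one_mulVec]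
  exact congrFun hcol i

theorem mulVec_injective_kronecker {ι κ : Type*} [Finite ι] [Finite κ]
    {X : Matrix ι σ K} {Y : Matrix κ τ K}
    (hX : Function.Injective X.mulVec) (hY : Function.Injective Y.mulVec) :
    Function.Injective (X ⊗ₖ Y).mulVec := by
  classical
  cases nonempty_fintype ι
  cases nonempty_fintype κ
  obtain ⟨X', hX'⟩ := exists_mul_eq_one_of_mulVec_injective hX
  obtain ⟨Y', hY'⟩ := exists_mul_eq_one_of_mulVec_injective hY
  refine Function.LeftInverse.injective (g := (X' ⊗ₖ Y').mulVec) fun x => ?_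
  rw [Matrix.mulVec_mulVec, ← Matrix.mul_kronecker_mul, hX', hY', Matrix.one_kronecker_one,
    Matrix.one_mulVec]

end Duality

section Birigidity

/-- The row indexed by the edge `e = (i, j)` of the bipartite rigidity matrix of the points `p_i`
and `q_j`, the rows of `P` and `Q`: it carries `q_j` in the block of `i` and `p_i` in the block
of `j`. -/
def rigidityRow {R ι κ α β : Type*} [Zero R] [DecidableEq ι] [DecidableEq κ] (P : Matrix ι α R)
    (Q : Matrix κ β R) (e : ι × κ) : (ι × β) ⊕ (κ × α) → R :=
  Sum.elim (fun x => if e.1 = x.1 then Q e.2 x.2 else 0)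
    fun x => if e.2 = x.1 then P e.1 x.2 else 0

/-- Independence in the birigidity matroid of Kalai, Nevo and Novik, realized by the rows of
`P` and `Q`; it is dual to independence of tensors. -/
def BirigidIndep {K ι κ α β : Type*} [Field K] [DecidableEq ι] [DecidableEq κ] (P : Matrix ι α K)
    (Q : Matrix κ β K) (G : Set (ι × κ)) : Prop :=
  LinearIndepOn K (rigidityRow P Q) G

variable {K ι κ σ τ α β : Type*} [Field K] [Fintype ι] [Fintype κ] [Fintype σ] [Fintype τ]
  [DecidableEq ι] [DecidableEq κ]
  {X : Matrix ι σ K} {Y : Matrix κ τ K} {P : Matrix ι α K} {Q : Matrix κ β K}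

theorem sum_smul_rigidityRow_eq_zero_iff {R : Matrix κ ι K} :
    ∑ e, R.vec e • rigidityRow P Q e = 0 ↔ Qᵀ * R = 0 ∧ R * P = 0 := by
  have hleft : ∀ i b, (∑ e, R.vec e • rigidityRow P Q e) (.inl (i, b)) = (Qᵀ * R) b i := by
    intro i b
    simp [rigidityRow, Fintype.sum_prod_type, Matrix.mul_apply, mul_comm]
  have hright : ∀ j a, (∑ e, R.vec e • rigidityRow P Q e) (.inr (j, a)) = (R * P) j a := by
    intro j a
    simp [rigidityRow, Fintype.sum_prod_type, Matrix.mul_apply]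
  simp only [funext_iff, Sum.forall, Prod.forall, hleft, hright, Pi.zero_apply, ← Matrix.ext_iff,
    Matrix.zero_apply]
  rw [forall_comm]

theorem exact_kronecker_rigidityRow (hX : Function.Injective X.mulVec)
    (hY : Function.Injective Y.mulVec) (hXP : Function.Exact X.mulVec Pᵀ.mulVec)
    (hYQ : Function.Exact Y.mulVec Qᵀ.mulVec) :
    Function.Exact (X ⊗ₖ Y).mulVec (Fintype.linearCombination K (rigidityRow P Q)) := by
  classical
  intro c
  obtain ⟨R, rfl⟩ := Matrix.vec_bijective.2 c
  rw [Fintype.linearCombination_apply, sum_smul_rigidityRow_eq_zero_iff]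
  constructor
  · rintro ⟨hQ, hP⟩
    obtain ⟨X', hX'⟩ := exists_mul_eq_one_of_mulVec_injective hX
    obtain ⟨Y', hY'⟩ := exists_mul_eq_one_of_mulVec_injective hY
    have hRX : X * (X' * Rᵀ) = Rᵀ := mul_mul_eq_of_transpose_mul_eq_zero hXP hX' <| by
      rw [← Matrix.transpose_mul, hP, Matrix.transpose_zero]
    have hRY : Y * (Y' * R) = R := mul_mul_eq_of_transpose_mul_eq_zero hYQ hY' hQ
    refine ⟨(Y' * (X' * Rᵀ)ᵀ).vec, ?_⟩
    rw [Matrix.kronecker_mulVec_vec, Matrix.mul_assoc, Matrix.mul_assoc, ← Matrix.transpose_mul,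
      hRX, Matrix.transpose_transpose, hRY]
  · rintro ⟨b, hb⟩
    obtain ⟨B, rfl⟩ := Matrix.vec_bijective.2 b
    have hPX : Xᵀ * P = 0 := by
      simpa using congrArg Matrix.transpose (transpose_mul_eq_zero_of_exact hXP)
    rw [Matrix.kronecker_mulVec_vec, Matrix.vec_inj] at hb
    rw [← hb]
    constructor
    · rw [← Matrix.mul_assoc, ← Matrix.mul_assoc, transpose_mul_eq_zero_of_exact hYQ,
        Matrix.zero_mul, Matrix.zero_mul]
    · rw [Matrix.mul_assoc, hPX, Matrix.mul_zero]

end Birigidity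

section TensorDuality

theorem span_image_eq_top_of_inGeneralPosition {K ι V : Type*} [Field K] [AddCommGroup V]
    [Module K V] [FiniteDimensional K V] {u : ι → V} (hu : InGeneralPosition K u) {A : Finset ι}
    (hA : A.card = Module.finrank K V) : Submodule.span K (u '' A) = ⊤ := by
  rw [Set.image_eq_range]
  exact (hu A hA.le).span_eq_top_of_card_eq_finrank' (by simpa using hA)

variable {K ι κ σ τ α β : Type*} [Field K] [Fintype ι] [Fintype κ] [Fintype σ] [Fintype τ]
  [Fintype α] [Fintype β] {X : Matrix ι σ K} {Y : Matrix κ τ K} {P : Matrix ι α K}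
  {Q : Matrix κ β K}

theorem mulVec_injective_of_inGeneralPosition (hX : InGeneralPosition K X.row)
    (hcard : Fintype.card σ ≤ Fintype.card ι) : Function.Injective X.mulVec := by
  obtain ⟨A, -, hA⟩ := Finset.exists_subset_card_eq (s := (Finset.univ : Finset ι)) hcard
  have hspan := span_image_eq_top_of_inGeneralPosition hX (hA.trans (by simp))
  refine (injective_iff_map_eq_zero X.mulVecLin).2 fun x hx => ?_
  refine span_eq_top_iff_forall_dotProduct_eq_zero.1 hspan x ?_
  rintro _ ⟨i, -, rfl⟩
  exact congrFun hx i

theorem inGeneralPosition_of_exact (hX : InGeneralPosition K X.row)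
    (h : Function.Exact X.mulVec Pᵀ.mulVec)
    (hcard : Fintype.card ι = Fintype.card σ + Fintype.card α) : InGeneralPosition K P.row := by
  classical
  intro A hA
  obtain ⟨B, hAB, hB⟩ := Finset.exists_superset_card_eq (n := Fintype.card α) (by simpa using hA)
    (by omega)
  have hBc : Bᶜ.card = Fintype.card σ := by rw [Finset.card_compl]; omega
  have hspan : Submodule.span K (X.row '' (Bᶜ : Finset ι)) = ⊤ :=
    span_image_eq_top_of_inGeneralPosition hX (by simpa using hBc)
  have hexact : Function.Exact X.mulVec (Fintype.linearCombination K P.row) := by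
    convert h using 1
    ext c a
    simp [Fintype.linearCombination_apply, Matrix.mulVec, dotProduct, mul_comm]
  rw [span_row_image_eq_top_iff_linearIndepOn_compl
    (mulVec_injective_of_inGeneralPosition hX (by omega)) hexact, Finset.coe_compl,
    compl_compl] at hspan
  exact hspan.mono hAB

variable [DecidableEq ι] [DecidableEq κ]

/- A basis of the tensor matroid is the complement of a birigid-independent set. -/
theorem exists_birigidIndep_of_linearIndepOn_kronecker (hX : InGeneralPosition K X.row)
    (hY : InGeneralPosition K Y.row) (hι : Fintype.card ι = Fintype.card σ + Fintype.card α)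
    (hκ : Fintype.card κ = Fintype.card τ + Fintype.card β) {E : Set (ι × κ)}
    (hE : LinearIndepOn K (X ⊗ₖ Y).row E) :
    ∃ (P : Matrix ι α K) (Q : Matrix κ β K) (G : Set (ι × κ)), InGeneralPosition K P.row ∧
      InGeneralPosition K Q.row ∧ BirigidIndep P Q G ∧ E ⊆ Gᶜ ∧
      Gᶜ.ncard = Fintype.card σ * Fintype.card τ := by
  have hX' := mulVec_injective_of_inGeneralPosition hX (by omega)
  have hY' := mulVec_injective_of_inGeneralPosition hY (by omega)
  obtain ⟨P, -, hXP⟩ := exists_exact_mulVec (α := α) hX' hι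
  obtain ⟨Q, -, hYQ⟩ := exists_exact_mulVec (α := β) hY' hκ
  have hXY := mulVec_injective_kronecker hX' hY'
  obtain ⟨B, -, hEB, hspan, hB⟩ := exists_linearIndepOn_extension hE (Set.subset_univ E)
  have htop : Submodule.span K ((X ⊗ₖ Y).row '' B) = ⊤ := by
    refine span_eq_top_iff_forall_dotProduct_eq_zero.2 fun x hx =>
      (injective_iff_map_eq_zero (X ⊗ₖ Y).mulVecLin).1 hXY x (funext fun e => ?_)
    have hle : Submodule.span K ((X ⊗ₖ Y).row '' B) ≤
        LinearMap.ker ((dotProductBilin K K).flip x) := Submodule.span_le.2 hx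
    exact hle (hspan ⟨e, trivial, rfl⟩)
  refine ⟨P, Q, Bᶜ, inGeneralPosition_of_exact hX hXP hι, inGeneralPosition_of_exact hY hYQ hκ,
    (span_row_image_eq_top_iff_linearIndepOn_compl hXY
      (exact_kronecker_rigidityRow hX' hY' hXP hYQ) B).1 htop, by rwa [compl_compl], ?_⟩
  rw [compl_compl, ← Nat.card_coe_set_eq, Nat.card_eq_fintype_card]
  have hcard := finrank_span_eq_card hB
  rw [← Set.image_eq_range, htop, finrank_top, Module.finrank_fintype_fun_eq_card,
    Fintype.card_prod] at hcard
  exact hcard.symm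

theorem exists_linearIndepOn_kronecker_of_birigidIndep (hP : Function.Injective P.mulVec)
    (hQ : Function.Injective Q.mulVec) (hι : Fintype.card ι = Fintype.card σ + Fintype.card α)
    (hκ : Fintype.card κ = Fintype.card τ + Fintype.card β) {G : Set (ι × κ)}
    (hG : BirigidIndep P Q G) (hcard : Gᶜ.ncard = Fintype.card σ * Fintype.card τ) :
    ∃ (X : Matrix ι σ K) (Y : Matrix κ τ K), LinearIndepOn K (X ⊗ₖ Y).row Gᶜ := by
  obtain ⟨X, hX, hPX⟩ := exists_exact_mulVec (α := σ) hP (by omega)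
  obtain ⟨Y, hY, hQY⟩ := exists_exact_mulVec (α := τ) hQ (by omega)
  have hspan := (span_row_image_eq_top_iff_linearIndepOn_compl (mulVec_injective_kronecker hX hY)
    (exact_kronecker_rigidityRow hX hY (exact_mulVec_transpose hPX) (exact_mulVec_transpose hQY))
    Gᶜ).2 (by rwa [compl_compl])
  refine ⟨X, Y, linearIndependent_of_top_le_span_of_card_eq_finrank ?_ ?_⟩
  · rw [← Set.image_eq_range, hspan]
  · rw [← Nat.card_eq_fintype_card, Nat.card_coe_set_eq, hcard,
      Module.finrank_fintype_fun_eq_card, Fintype.card_prod]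

variable {F : Type*} [Field F] {s r a b : ℕ} {E G : Set (Fin (s + a) × Fin (r + b))}

theorem exists_birigidIndep_of_tensorIndep (hE : TensorIndep F (s + a) (r + b) s r E) :
    ∃ (P : Matrix (Fin (s + a)) (Fin a) (TField F (s + a) (r + b) s r))
      (Q : Matrix (Fin (r + b)) (Fin b) (TField F (s + a) (r + b) s r))
      (G : Set (Fin (s + a) × Fin (r + b))),
      InGeneralPosition (TField F (s + a) (r + b) s r) P.row ∧
      InGeneralPosition (TField F (s + a) (r + b) s r) Q.row ∧
      BirigidIndep P Q G ∧ E ⊆ Gᶜ ∧ Gᶜ.ncard = s * r := by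
  have h := exists_birigidIndep_of_linearIndepOn_kronecker (α := Fin a) (β := Fin b)
    (inGeneralPosition_genericLeft F (s + a) (r + b) s r)
    (inGeneralPosition_genericRight F (s + a) (r + b) s r) (by simp) (by simp) hE
  simpa only [Fintype.card_fin] using h

theorem tensorIndep_compl_of_birigidIndep {L : Type*} [Field L] [Algebra F L]
    {P : Matrix (Fin (s + a)) (Fin a) L} {Q : Matrix (Fin (r + b)) (Fin b) L}
    (hP : Function.Injective P.mulVec) (hQ : Function.Injective Q.mulVec) (hG : BirigidIndep P Q G)
    (hcard : Gᶜ.ncard = s * r) : TensorIndep F (s + a) (r + b) s r Gᶜ := by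
  obtain ⟨X, Y, h⟩ := exists_linearIndepOn_kronecker_of_birigidIndep (σ := Fin s) (τ := Fin r)
    hP hQ (by simp) (by simp) hG (by simpa using hcard)
  exact tensorIndep_of_linearIndepOn h

end TensorDuality

section FullRank

theorem linearIndepOn_kronecker_row_iff {K ι κ σ τ : Type*} [Field K] [Finite ι] [Finite κ]
    {u : Matrix ι σ K} {v : Matrix κ τ K} (hu : LinearIndependent K u.row) {E : Set (ι × κ)} :
    LinearIndepOn K (u ⊗ₖ v).row E ↔ ∀ i, LinearIndepOn K v.row {j | (i, j) ∈ E} := by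
  classical
  cases nonempty_fintype ι
  cases nonempty_fintype κ
  have hsum : ∀ c : ι × κ → K,
      ∑ e, c e • (u ⊗ₖ v).row e = 0 ↔ ∀ i, ∑ j, c (i, j) • v.row j = 0 := fun c => by
    have hcoord : ∀ k l, (∑ e, c e • (u ⊗ₖ v).row e) (k, l) =
        (∑ i, (∑ j, c (i, j) • v.row j) l • u.row i) k := fun k l => by
      simp only [Fintype.sum_prod_type, Finset.sum_apply, Pi.smul_apply, smul_eq_mul,
        Finset.sum_mul]
      exact Finset.sum_congr rfl fun i _ => Finset.sum_congr rfl fun j _ => by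
        change c (i, j) * (u i k * v j l) = c (i, j) * v j l * u i k
        ring
    constructor
    · exact fun h i => funext fun l => Fintype.linearIndependent_iff.1 hu
        (fun i => (∑ j, c (i, j) • v.row j) l) (funext fun k => by rw [← hcoord, h]; rfl) i
    · exact fun h => funext fun x => by
        rw [← Prod.mk.eta (p := x), hcoord]
        simp only [h, Pi.zero_apply, zero_smul, Finset.sum_const_zero]
  simp only [linearIndepOn_iff_forall_sum_smul, hsum]
  constructor
  · intro h i d hd h0
    have hc := h (fun e => if e.1 = i then d e.2 else 0)
      (fun e he => ite_eq_right_iff.2 fun hei => hd e.2 (hei ▸ he))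
      (fun i' => by by_cases hi : i' = i <;> simp [hi, h0])
    exact funext fun j => by simpa using congrFun hc (i, j)
  · exact fun h c hc h0 => funext fun e =>
      congrFun (h e.1 (fun j => c (e.1, j)) (fun j hj => hc _ hj) (h0 e.1)) e.2

theorem InGeneralPosition.linearIndependent {K ι V : Type*} [Field K] [AddCommGroup V]
    [Module K V] [Fintype ι] {u : ι → V} (hu : InGeneralPosition K u)
    (hcard : Fintype.card ι ≤ Module.finrank K V) : LinearIndependent K u := by
  rw [← linearIndepOn_univ_iff, ← Finset.coe_univ]
  exact hu _ hcard

theorem InGeneralPosition.linearIndepOn_iff {K ι V : Type*} [Field K] [AddCommGroup V]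
    [Module K V] [Module.Finite K V] [Finite ι] {u : ι → V} (hu : InGeneralPosition K u)
    {S : Set ι} : LinearIndepOn K u S ↔ S.ncard ≤ Module.finrank K V := by
  classical
  cases nonempty_fintype ι
  constructor
  · intro h
    rw [← Nat.card_coe_set_eq, Nat.card_eq_fintype_card]
    exact h.fintype_card_le_finrank
  · intro h
    rw [Set.ncard_eq_toFinset_card'] at h
    simpa using hu _ h

theorem InGeneralPosition.comp {K ι ι' V : Type*} [Field K] [AddCommGroup V] [Module K V]
    {u : ι → V} (hu : InGeneralPosition K u) {f : ι' → ι} (hf : f.Injective) :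
    InGeneralPosition K (u ∘ f) := fun A hA => by
  have h := hu (A.map ⟨f, hf⟩) (by rwa [Finset.card_map])
  rw [Finset.coe_map] at h
  exact h.comp_of_image hf.injOn

theorem tensorIndep_iff_of_le_left {F : Type*} [Field F] {m n s r : ℕ} (h : m ≤ s)
    {E : Set (Fin m × Fin n)} :
    TensorIndep F m n s r E ↔ ∀ i, {j | (i, j) ∈ E}.ncard ≤ r := by
  have hu := (inGeneralPosition_genericLeft F m n s r).linearIndependent (by simpa using h)
  have hv := inGeneralPosition_genericRight F m n s r
  refine (linearIndepOn_kronecker_row_iff (v := genericRight F m n s r) hu).trans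
    (forall_congr' fun i => ?_)
  rw [hv.linearIndepOn_iff, Module.finrank_fintype_fun_eq_card, Fintype.card_fin]

theorem tensorIndep_iff_swap {F : Type*} [Field F] {m n s r : ℕ} {E : Set (Fin m × Fin n)} :
    TensorIndep F m n s r E ↔ TensorIndep F n m r s (Prod.swap ⁻¹' E) :=
  ⟨tensorIndep_swap, tensorIndep_swap⟩

theorem tensorIndep_of_rat_of_le {F : Type*} [Field F] {m n s r : ℕ} (h : m ≤ s ∨ n ≤ r)
    {E : Set (Fin m × Fin n)} (hE : TensorIndep ℚ m n s r E) : TensorIndep F m n s r E := by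
  rcases h with h | h
  · exact (tensorIndep_iff_of_le_left h).2 ((tensorIndep_iff_of_le_left h).1 hE)
  · rw [tensorIndep_iff_swap, tensorIndep_iff_of_le_left h] at hE ⊢
    exact hE

end FullRank

section GenericSubspace

theorem exists_mem_forall_notMem {K V κ : Type*} [Field K] [Infinite K] [AddCommGroup V]
    [Module K V] [Finite κ] {W : Submodule K V} {S : κ → Submodule K V} (h : ∀ k, ¬ W ≤ S k) :
    ∃ c ∈ W, ∀ k, c ∉ S k := by
  by_contra! hcover
  obtain ⟨k, hk⟩ := Subspace.exists_eq_top_of_iUnion_eq_univ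
    (p := fun k => (S k).comap W.subtype)
    (Set.eq_univ_of_forall fun c => Set.mem_iUnion.2 (hcover c c.2))
  exact h k (Submodule.comap_subtype_eq_top.1 hk)

theorem finrank_map_add_finrank_inf_ker {K V W : Type*} [Field K] [AddCommGroup V] [Module K V]
    [FiniteDimensional K V] [AddCommGroup W] [Module K W] (f : V →ₗ[K] W) (S : Submodule K V) :
    Module.finrank K (S.map f) + Module.finrank K (S ⊓ LinearMap.ker f : Submodule K V) =
      Module.finrank K S := by
  rw [← LinearMap.finrank_range_add_finrank_ker (f.domRestrict S), LinearMap.range_domRestrict,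
    LinearMap.ker_domRestrict, ← Submodule.finrank_map_subtype_eq, Submodule.map_comap_subtype]

variable {K V β κ ε : Type*} [Field K] [AddCommGroup V] [Module K V] [Fintype β] {c : V}

theorem disjoint_ker_comp_mkQ_span_singleton {W : Type*} [AddCommGroup W] [Module K W]
    {S : Submodule K V} {H : V ⧸ (K ∙ c) →ₗ[K] W} (hc : c ∉ S)
    (hS : Disjoint (S.map (K ∙ c).mkQ) (LinearMap.ker H)) :
    Disjoint S (LinearMap.ker (H ∘ₗ (K ∙ c).mkQ)) := by
  have hc0 : c ≠ 0 := fun h => hc (h ▸ S.zero_mem)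
  refine LinearMap.disjoint_ker.2 fun x hx hx0 => ?_
  have hxc := LinearMap.disjoint_ker.1 hS _ (Submodule.mem_map_of_mem hx) hx0
  rw [Submodule.mkQ_apply, Submodule.Quotient.mk_eq_zero] at hxc
  exact Submodule.disjoint_def.1 ((Submodule.disjoint_span_singleton' hc0).2 hc) x hx hxc

theorem exists_injective_of_finrank_le [FiniteDimensional K V]
    (h : Module.finrank K V ≤ Fintype.card β) : ∃ H : V →ₗ[K] (β → K), Function.Injective H := by
  obtain ⟨g⟩ : Nonempty (Fin (Module.finrank K V) ↪ β) := by
    simpa [Function.Embedding.nonempty_iff_card_le] using h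
  refine ⟨Function.ExtendByZero.linearMap K g ∘ₗ (Module.finBasis K V).equivFun.toLinearMap, ?_⟩
  exact (Function.extend_injective g.injective (0 : β → K)).comp (LinearEquiv.injective _)

theorem linearIndepOn_insert_of_mkQ [DecidableEq ε] {T : Finset ε} {e₀ : ε} (he₀ : e₀ ∉ T)
    (hc : c ≠ 0) {y : ε → V} (hy : LinearIndepOn K (fun e => (K ∙ c).mkQ (y e)) T) :
    LinearIndepOn K (Function.update y e₀ c) (insert e₀ T : Finset ε) := by
  have hyT : LinearIndepOn K (fun e => (K ∙ c).mkQ (Function.update y e₀ c e)) T :=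
    (linearIndepOn_congr fun e he => by
      rw [Function.update_of_ne (ne_of_mem_of_not_mem he he₀)]).1 hy
  rw [Finset.coe_insert, linearIndepOn_insert (by simpa using he₀), Function.update_self]
  refine ⟨LinearIndependent.of_comp _ hyT, fun hmem => hc ?_⟩
  have hdisj := Submodule.range_ker_disjoint hyT
  rw [Submodule.ker_mkQ, ← Set.image_eq_range] at hdisj
  exact Submodule.disjoint_def.1 hdisj c hmem (Submodule.mem_span_singleton_self c)

theorem card_add_le_finrank_iSup_map_mkQ [FiniteDimensional K V] [DecidableEq ε] {d : ℕ}
    {T : Finset ε} {e₀ : ε} (he₀ : e₀ ∉ T) {F : ε → Submodule K V}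
    (hF : ∀ J ⊆ insert e₀ T, J.Nonempty → J.card + d ≤ Module.finrank K ↥(⨆ e ∈ J, F e))
    (hc : ∀ J ⊆ T, ¬ F e₀ ≤ ⨆ e ∈ J, F e → c ∉ ⨆ e ∈ J, F e) {J : Finset ε} (hJT : J ⊆ T)
    (hJ : J.Nonempty) :
    J.card + d ≤ Module.finrank K ↥(⨆ e ∈ J, (F e).map (K ∙ c).mkQ) := by
  have hmap := finrank_map_add_finrank_inf_ker (K ∙ c).mkQ (⨆ e ∈ J, F e)
  rw [Submodule.ker_mkQ] at hmap
  have hsup : ⨆ e ∈ J, (F e).map (K ∙ c).mkQ = (⨆ e ∈ J, F e).map (K ∙ c).mkQ := by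
    simp only [Submodule.map_iSup]
  rw [hsup]
  by_cases hle : F e₀ ≤ ⨆ e ∈ J, F e
  · have hinf : Module.finrank K ↥((⨆ e ∈ J, F e) ⊓ K ∙ c) ≤ 1 :=
      (Submodule.finrank_mono inf_le_right).trans ((finrank_span_le_card {c}).trans (by simp))
    have hins := hF (insert e₀ J) (Finset.insert_subset_insert _ hJT) (Finset.insert_nonempty _ _)
    rw [Finset.card_insert_of_notMem fun h => he₀ (hJT h), Finset.iSup_insert,
      sup_eq_right.2 hle] at hins
    omega
  · have hcJ := hc J hJT hle
    have hc0 : c ≠ 0 := fun h => hcJ (h ▸ Submodule.zero_mem _)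
    rw [((Submodule.disjoint_span_singleton' hc0).2 hcJ).eq_bot, finrank_bot] at hmap
    have := hF J (hJT.trans (Finset.subset_insert _ _)) hJ
    omega

variable [Infinite K] [Finite κ]

theorem exists_forall_disjoint_ker (V : Type*) [AddCommGroup V] [Module K V]
    [FiniteDimensional K V] {N : κ → Submodule K V}
    (hN : ∀ k, Module.finrank K (N k) ≤ Fintype.card β) :
    ∃ H : V →ₗ[K] (β → K), ∀ k, Disjoint (N k) (LinearMap.ker H) := by
  induction hd : Module.finrank K V generalizing V with
  | zero =>
    obtain ⟨H, hH⟩ := exists_injective_of_finrank_le (K := K) (V := V) (β := β) (by omega)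
    exact ⟨H, fun k => by simp [LinearMap.ker_eq_bot.2 hH]⟩
  | succ d ih =>
    by_cases hle : Module.finrank K V ≤ Fintype.card β
    · obtain ⟨H, hH⟩ := exists_injective_of_finrank_le (K := K) (V := V) (β := β) hle
      exact ⟨H, fun k => by simp [LinearMap.ker_eq_bot.2 hH]⟩
    have : Nontrivial V := Module.nontrivial_of_finrank_pos (R := K) (by omega)
    obtain ⟨c, -, hc⟩ := exists_mem_forall_notMem (W := ⊤) (S := fun k : Option κ => k.elim ⊥ N)
      (by
        rintro (_ | k) htop
        · exact bot_ne_top (top_le_iff.1 htop)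
        · have hfin := Submodule.finrank_mono htop
          rw [finrank_top] at hfin
          exact hle (hfin.trans (hN k)))
    have hc0 : c ≠ 0 := fun h => hc none (h ▸ Submodule.zero_mem _)
    have hq := (K ∙ c).finrank_quotient_add_finrank
    rw [finrank_span_singleton hc0] at hq
    obtain ⟨H, hH⟩ := ih (V ⧸ (K ∙ c)) (N := fun k => (N k).map (K ∙ c).mkQ)
      (fun k => (Submodule.finrank_map_le _ _).trans (hN k)) (by omega)
    exact ⟨H ∘ₗ (K ∙ c).mkQ, fun k => disjoint_ker_comp_mkQ_span_singleton (hc (some k)) (hH k)⟩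

theorem exists_mem_forall_notMem_iSup [FiniteDimensional K V] (T : Finset ε)
    (F : ε → Submodule K V) {U : Submodule K V} {N : κ → Submodule K V} {d : ℕ}
    (hU : d < Module.finrank K U) (hN : ∀ k, Module.finrank K (N k) ≤ d) :
    ∃ c ∈ U, (∀ k, c ∉ N k) ∧ ∀ J ⊆ T, ¬ U ≤ ⨆ e ∈ J, F e → c ∉ ⨆ e ∈ J, F e := by
  let S : κ ⊕ {J : T.powerset // ¬ U ≤ ⨆ e ∈ J.1, F e} → Submodule K V :=
    Sum.elim N fun J => ⨆ e ∈ J.1.1, F e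
  obtain ⟨c, hcU, hcS⟩ := exists_mem_forall_notMem (W := U) (S := S) (by
    rintro (k | J)
    · exact fun hle => ((Submodule.finrank_mono hle).trans (hN k)).not_gt hU
    · exact J.2)
  exact ⟨c, hcU, fun k => hcS (.inl k), fun J hJ hle =>
    hcS (.inr ⟨⟨J, Finset.mem_powerset.2 hJ⟩, hle⟩)⟩

/- Lovász: a subspace in general position of codimension `d` meets the flats `F e` in independent
vectors. One such vector `c` is fixed at a time, generically, and everything else is projected
along it. -/
theorem exists_linearIndepOn_mem_inf_ker (V : Type*) [AddCommGroup V] [Module K V]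
    [FiniteDimensional K V] (T : Finset ε) {F : ε → Submodule K V}
    (hF : ∀ J ⊆ T, J.Nonempty →
      J.card + Fintype.card β ≤ Module.finrank K ↥(⨆ e ∈ J, F e))
    {N : κ → Submodule K V} (hN : ∀ k, Module.finrank K (N k) ≤ Fintype.card β) :
    ∃ H : V →ₗ[K] (β → K), (∀ k, Disjoint (N k) (LinearMap.ker H)) ∧
      ∃ x : ε → V, (∀ e ∈ T, x e ∈ F e ⊓ LinearMap.ker H) ∧ LinearIndepOn K x T := by
  classical
  induction T using Finset.induction_on generalizing V with
  | empty =>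
    obtain ⟨H, hH⟩ := exists_forall_disjoint_ker V hN
    exact ⟨H, hH, 0, by simp, by simp⟩
  | insert e₀ T he₀ ih =>
    have hF₀ : Fintype.card β < Module.finrank K (F e₀) := by
      have h := hF {e₀} (by simp) (by simp)
      rw [Finset.iSup_singleton, Finset.card_singleton] at h
      omega
    obtain ⟨c, hcF, hcN, hcJ⟩ := exists_mem_forall_notMem_iSup T F hF₀ hN
    have hc0 : c ≠ 0 := fun h => hcJ ∅ (by simp)
      (fun hle => by
        have hbot : F e₀ = ⊥ := by simpa using hle
        rw [hbot, finrank_bot] at hF₀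
        omega) (h ▸ Submodule.zero_mem _)
    obtain ⟨H, hH, x, hx, hli⟩ := ih (V ⧸ (K ∙ c)) (F := fun e => (F e).map (K ∙ c).mkQ)
      (fun J hJT hJ => card_add_le_finrank_iSup_map_mkQ he₀ hF hcJ hJT hJ)
      (N := fun k => (N k).map (K ∙ c).mkQ)
      (fun k => (Submodule.finrank_map_le _ _).trans (hN k))
    choose! y hyF hyx using fun e he => (hx e he).1
    refine ⟨H ∘ₗ (K ∙ c).mkQ,
      fun k => disjoint_ker_comp_mkQ_span_singleton (hcN k) (hH k),
      Function.update y e₀ c, fun e he => ?_, linearIndepOn_insert_of_mkQ he₀ hc0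
        ((linearIndepOn_congr fun e he => hyx e he).2 hli)⟩
    rcases Finset.mem_insert.1 he with rfl | heT
    · have hmk := (Submodule.Quotient.mk_eq_zero (K ∙ c)).2 (Submodule.mem_span_singleton_self c)
      simpa [hmk] using hcF
    · rw [Function.update_of_ne (ne_of_mem_of_not_mem heT he₀)]
      exact ⟨hyF e heT, (congrArg H (hyx e heT)).trans (hx e heT).2⟩

end GenericSubspace

section MaxwellCount

variable {K ι κ α β : Type*} [Field K] [DecidableEq ι] [DecidableEq κ] {P : Matrix ι α K}
  {Q : Matrix κ β K} {G : Set (ι × κ)}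

theorem BirigidIndep.mono {G' : Set (ι × κ)} (h : BirigidIndep P Q G) (hG : G' ⊆ G) :
    BirigidIndep P Q G' :=
  LinearIndepOn.mono h hG

theorem BirigidIndep.submatrix {ι' κ' : Type*} [DecidableEq ι'] [DecidableEq κ']
    (h : BirigidIndep P Q G) {f : ι' → ι} {g : κ' → κ} (hf : f.Injective) (hg : g.Injective) :
    BirigidIndep (P.submatrix f id) (Q.submatrix g id) (Prod.map f g ⁻¹' G) := by
  let φ : (ι' × β) ⊕ (κ' × α) → (ι × β) ⊕ (κ × α) := Sum.map (Prod.map f id) (Prod.map g id)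
  have hφ : φ.Injective :=
    Sum.map_injective.2 ⟨hf.prodMap Function.injective_id, hg.prodMap Function.injective_id⟩
  have hrow : ∀ e, Function.ExtendByZero.linearMap K φ
      (rigidityRow (P.submatrix f id) (Q.submatrix g id) e) =
        rigidityRow P Q (Prod.map f g e) := fun e => funext fun z => by
    change Function.extend φ _ (0 : (ι × β) ⊕ (κ × α) → K) z = _
    by_cases hz : ∃ y, φ y = z
    · obtain ⟨y, rfl⟩ := hz
      rw [hφ.extend_apply]
      rcases y with y | y <;> simp [φ, rigidityRow, hf.eq_iff, hg.eq_iff]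
    · rw [Function.extend_apply' _ _ _ hz]
      rcases z with ⟨i, b⟩ | ⟨j, a⟩
      · exact (if_neg fun hi => hz ⟨.inl (e.1, b), congrArg (fun i => Sum.inl (i, b)) hi⟩).symm
      · exact (if_neg fun hj => hz ⟨.inr (e.2, a), congrArg (fun j => Sum.inr (j, a)) hj⟩).symm
  refine LinearIndependent.of_comp (Function.ExtendByZero.linearMap K φ) ?_
  have hinj : Function.Injective fun e : Prod.map f g ⁻¹' G => (⟨Prod.map f g e, e.2⟩ : G) :=
    fun e e' he => Subtype.ext (hf.prodMap hg (congrArg Subtype.val he))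
  convert LinearIndependent.comp h _ hinj using 1
  exact funext fun e => hrow e

/-- The linear map `(Z, Y) ↦ Pᵀ Z - Yᵀ Q`, which kills every row of the rigidity matrix. -/
def rigidityConstraint [Fintype ι] [Fintype κ] (P : Matrix ι α K) (Q : Matrix κ β K) :
    ((ι × β) ⊕ (κ × α) → K) →ₗ[K] (α × β → K) where
  toFun z x := ∑ i, P i x.1 * z (.inl (i, x.2)) - ∑ j, z (.inr (j, x.1)) * Q j x.2
  map_add' z z' := funext fun x => by
    simp only [Pi.add_apply, mul_add, add_mul, Finset.sum_add_distrib]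
    ring
  map_smul' t z := funext fun x => by
    simp only [Pi.smul_apply, smul_eq_mul, RingHom.id_apply, mul_sub, Finset.mul_sum]
    simp only [mul_left_comm, mul_assoc]

theorem rigidityConstraint_rigidityRow [Fintype ι] [Fintype κ] (e : ι × κ) :
    rigidityConstraint P Q (rigidityRow P Q e) = 0 :=
  funext fun x => by simp [rigidityConstraint, rigidityRow]

theorem rigidityConstraint_surjective {K ι κ α β : Type*} [Field K] [Fintype ι] [Fintype κ]
    [Fintype α] {P : Matrix ι α K} {Q : Matrix κ β K} (hP : Function.Injective P.mulVec) :
    Function.Surjective (rigidityConstraint P Q) := by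
  classical
  obtain ⟨P', hP'⟩ := exists_mul_eq_one_of_mulVec_injective hP
  intro y
  refine ⟨Sum.elim (fun x => ∑ a, P' a x.1 * y (a, x.2)) 0, funext fun x => ?_⟩
  have hPP : Pᵀ * P'ᵀ = 1 := by rw [← Matrix.transpose_mul, hP', Matrix.transpose_one]
  have h := congrFun (congrFun (Matrix.mul_assoc Pᵀ P'ᵀ (Matrix.of fun a b => y (a, b))) x.1) x.2
  rw [hPP, Matrix.one_mul] at h
  simpa [rigidityConstraint, Matrix.mul_apply] using h.symm

theorem BirigidIndep.ncard_add_le [Fintype ι] [Fintype κ] [Fintype α] [Fintype β]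
    (h : BirigidIndep P Q G) (hP : Function.Injective P.mulVec) :
    G.ncard + Fintype.card α * Fintype.card β ≤
      Fintype.card ι * Fintype.card β + Fintype.card κ * Fintype.card α := by
  classical
  have hker := (rigidityConstraint P Q).finrank_range_add_finrank_ker
  rw [LinearMap.range_eq_top.2 (rigidityConstraint_surjective hP), finrank_top] at hker
  have hspan : Submodule.span K (rigidityRow P Q '' G) ≤ LinearMap.ker (rigidityConstraint P Q) :=
    Submodule.span_le.2 <| by
      rintro _ ⟨e, -, rfl⟩
      exact rigidityConstraint_rigidityRow e
  have hcard := finrank_span_eq_card h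
  rw [← Set.image_eq_range, ← Nat.card_eq_fintype_card, Nat.card_coe_set_eq] at hcard
  have hle := Submodule.finrank_mono hspan
  simp only [Module.finrank_fintype_fun_eq_card, Fintype.card_sum, Fintype.card_prod] at hker
  omega

theorem BirigidIndep.card_add_le [Finite ι] [Finite κ] [Fintype α] [Fintype β]
    (h : BirigidIndep P Q G) (hP : InGeneralPosition K P.row) {J : Finset (ι × κ)}
    (hJG : (J : Set (ι × κ)) ⊆ G) (hJ : Fintype.card α ≤ (J.image Prod.fst).card) :
    J.card + Fintype.card α * Fintype.card β ≤
      (J.image Prod.fst).card * Fintype.card β + (J.image Prod.snd).card * Fintype.card α := by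
  cases nonempty_fintype ι
  cases nonempty_fintype κ
  let f : J.image Prod.fst → ι := Subtype.val
  let g : J.image Prod.snd → κ := Subtype.val
  have hrestrict := (h.mono hJG).submatrix (f := f) (g := g) Subtype.val_injective
    Subtype.val_injective
  have hpre : Prod.map f g '' (Prod.map f g ⁻¹' J) = J := by
    refine Set.image_preimage_eq_of_subset fun e he => ?_
    exact ⟨(⟨e.1, Finset.mem_image_of_mem _ he⟩, ⟨e.2, Finset.mem_image_of_mem _ he⟩), rfl⟩
  have hinj : (Prod.map f g).Injective := Subtype.val_injective.prodMap Subtype.val_injective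
  have hcount := hrestrict.ncard_add_le <|
    mulVec_injective_of_inGeneralPosition (hP.comp Subtype.val_injective) 
      (by rwa [Fintype.card_coe])
  rwa [← Set.ncard_image_of_injective _ hinj, hpre, Set.ncard_coe_finset, Fintype.card_coe,
    Fintype.card_coe] at hcount

end MaxwellCount

section CorankOne

variable {K ι κ β : Type*} [Field K] [DecidableEq ι]

theorem finrank_iSup_range_single {W : Type*} [AddCommGroup W] [Module K W]
    [Module.Finite K W] [Finite ι] (A : Finset ι) :
    Module.finrank K ↥(⨆ i ∈ A, LinearMap.range (LinearMap.single K (fun _ : ι => W) i)) =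
      A.card * Module.finrank K W := by
  have hsup := LinearMap.iSup_range_single_eq_iInf_ker_proj K (fun _ : ι => W)
    (isCompl_compl (x := (A : Set ι))) A.finite_toSet
  simp only [Finset.mem_coe] at hsup
  rw [hsup, (LinearMap.iInfKerProjEquiv K (fun _ : ι => W) disjoint_compl_right
    (Set.union_compl_self _).ge).finrank_eq, Module.finrank_pi_fintype]
  simp

/-- The map that applies `H` to each block of the first component and negates the second one; it
serves to read off rows of the rigidity matrix from vectors in the kernel of `H`. -/
def blockwise (H : (ι → β → K) × (κ → K) →ₗ[K] (β → K)) :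
    (ι → β → K) × (κ → K) →ₗ[K] ((ι × β) ⊕ (κ × Fin 1) → K) :=
  LinearMap.pi (Sum.elim
    (fun z => LinearMap.proj z.2 ∘ₗ H ∘ₗ LinearMap.inl K _ _ ∘ₗ LinearMap.single K _ z.1 ∘ₗ
      LinearMap.proj z.1 ∘ₗ LinearMap.fst K _ _)
    fun z => -(LinearMap.proj z.1 ∘ₗ LinearMap.snd K _ _))

variable {H : (ι → β → K) × (κ → K) →ₗ[K] (β → K)}

theorem blockwise_inl (z : (ι → β → K) × (κ → K)) (i : ι) (b : β) :
    blockwise H z (.inl (i, b)) = H (Pi.single i (z.1 i), 0) b := rfl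

theorem blockwise_inr (z : (ι → β → K) × (κ → K)) (j : κ) (a : Fin 1) :
    blockwise H z (.inr (j, a)) = -z.2 j := rfl

theorem ker_blockwise (hH : ∀ i, Function.Injective fun y => H (Pi.single i y, 0)) :
    LinearMap.ker (blockwise H) = ⊥ := by
  refine LinearMap.ker_eq_bot'.2 fun z hz => Prod.ext (funext fun i => hH i ?_)
    (funext fun j => neg_eq_zero.1 (congrFun hz (.inr (j, 0))))
  change H (Pi.single i (z.1 i), 0) = H (Pi.single i 0, 0)
  rw [Pi.single_zero]
  exact (funext fun b => congrFun hz (.inl (i, b))).trans (map_zero H).symm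

variable [DecidableEq κ]

/-- The vectors of `(ι → β → K) × (κ → K)` supported on the two ends of the edge `e`. -/
def edgeFlat (K β : Type*) [Field K] (e : ι × κ) : Submodule K ((ι → β → K) × (κ → K)) :=
  (LinearMap.range (LinearMap.single K (fun _ => β → K) e.1)).prod
    (LinearMap.range (LinearMap.single K (fun _ => K) e.2))

theorem le_finrank_iSup_edgeFlat [Fintype β] [Finite ι] [Finite κ] (J : Finset (ι × κ)) :
    (J.image Prod.fst).card * Fintype.card β + (J.image Prod.snd).card ≤
      Module.finrank K ↥(⨆ e ∈ J, edgeFlat K β e) := by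
  let R : Submodule K (ι → β → K) :=
    ⨆ i ∈ J.image Prod.fst, LinearMap.range (LinearMap.single K (fun _ => β → K) i)
  let S : Submodule K (κ → K) :=
    ⨆ j ∈ J.image Prod.snd, LinearMap.range (LinearMap.single K (fun _ => K) j)
  have hle : R.prod S ≤ ⨆ e ∈ J, edgeFlat K β e := by
    have hsup : R.prod S = R.map (LinearMap.inl K _ _) ⊔ S.map (LinearMap.inr K _ _) := by
      rw [Submodule.map_inl, Submodule.map_inr, Submodule.prod_sup_prod, sup_bot_eq, bot_sup_eq]
    rw [hsup]
    refine sup_le (Submodule.map_le_iff_le_comap.2 <| iSup₂_le fun i hi => ?_)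
      (Submodule.map_le_iff_le_comap.2 <| iSup₂_le fun j hj => ?_)
    · obtain ⟨e, he, rfl⟩ := Finset.mem_image.1 hi
      exact fun y hy => (le_iSup₂ (f := fun e _ => edgeFlat K β e) e he)
        (Submodule.mem_prod.2 ⟨hy, zero_mem _⟩)
    · obtain ⟨e, he, rfl⟩ := Finset.mem_image.1 hj
      exact fun t ht => (le_iSup₂ (f := fun e _ => edgeFlat K β e) e he)
        (Submodule.mem_prod.2 ⟨zero_mem _, ht⟩)
  have hprod : Module.finrank K (R.prod S) = Module.finrank K R + Module.finrank K S := by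
    have h := LinearMap.finrank_range_of_inj (f := R.subtype.prodMap S.subtype)
      (Subtype.val_injective.prodMap Subtype.val_injective)
    rwa [LinearMap.range_prodMap, Submodule.range_subtype, Submodule.range_subtype,
      Module.finrank_prod] at h
  have hR : Module.finrank K R = (J.image Prod.fst).card * Fintype.card β := by
    rw [finrank_iSup_range_single, Module.finrank_fintype_fun_eq_card]
  have hS : Module.finrank K S = (J.image Prod.snd).card := by
    rw [finrank_iSup_range_single, Module.finrank_self, mul_one]
  rw [← hR, ← hS, ← hprod]
  exact Submodule.finrank_mono hle

variable {Q : Matrix κ β K}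

theorem exists_blockwise_eq_smul_rigidityRow (hQ : ∀ j, H (0, Pi.single j 1) = Q j) {e : ι × κ}
    {x : (ι → β → K) × (κ → K)} (hx : x ∈ edgeFlat K β e ⊓ LinearMap.ker H) :
    ∃ t : K, blockwise H x = t • rigidityRow (Matrix.of fun _ _ => 1) Q e := by
  obtain ⟨⟨⟨y, hy⟩, ⟨t, ht⟩⟩, hker⟩ := hx
  rw [SetLike.mem_coe, LinearMap.mem_ker] at hker
  have hblock : H (Pi.single e.1 y, 0) = -t • Q e.2 := by
    have hsum : x = (Pi.single e.1 y, 0) + t • (0, Pi.single e.2 1) := by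
      refine Prod.ext (by simp [← hy]) ?_
      simp [← ht, ← Pi.single_smul]
    rw [hsum, map_add, map_smul, hQ] at hker
    rw [neg_smul, eq_neg_of_add_eq_zero_left hker]
  refine ⟨-t, funext ?_⟩
  rintro (⟨i, b⟩ | ⟨j, a⟩)
  · rw [blockwise_inl, ← hy]
    rcases eq_or_ne e.1 i with rfl | hi
    · simp [rigidityRow, hblock]
    · have hzero : H (0, 0) = 0 := map_zero H
      simp [rigidityRow, hi, hzero]
  · rw [blockwise_inr, ← ht]
    rcases eq_or_ne e.2 j with rfl | hj
    · simp [rigidityRow]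
    · simp [rigidityRow, hj]

theorem birigidIndep_one_of_linearIndepOn_edgeFlat (hQ : ∀ j, H (0, Pi.single j 1) = Q j)
    (hH : ∀ i, Function.Injective fun y => H (Pi.single i y, 0)) {G : Set (ι × κ)}
    {x : ι × κ → (ι → β → K) × (κ → K)} (hx : ∀ e ∈ G, x e ∈ edgeFlat K β e ⊓ LinearMap.ker H)
    (hli : LinearIndepOn K x G) :
    BirigidIndep (Matrix.of fun _ _ => 1 : Matrix ι (Fin 1) K) Q G := by
  choose t ht using fun e : G => exists_blockwise_eq_smul_rigidityRow hQ (hx e e.2)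
  have hrows : LinearIndependent K fun e : G => blockwise H (x e) :=
    hli.map' _ (ker_blockwise hH)
  have ht0 (e) : t e ≠ 0 := fun h0 => hrows.ne_zero e (by rw [ht, h0, zero_smul])
  refine (LinearIndependent.units_smul_iff _ (w := fun e => Units.mk0 (t e) (ht0 e))).1 ?_
  convert hrows using 1
  exact funext fun e => (ht e).symm

theorem exists_birigidIndep_one [Infinite K] [Finite ι] [Fintype κ] [Fintype β]
    (hβ : Fintype.card β ≤ Fintype.card κ) {G : Set (ι × κ)}
    (hG : ∀ J : Finset (ι × κ), ↑J ⊆ G → J.Nonempty →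
      J.card + Fintype.card β ≤
        (J.image Prod.fst).card * Fintype.card β + (J.image Prod.snd).card) :
    ∃ Q : Matrix κ β K, Function.Injective Q.mulVec ∧
      BirigidIndep (Matrix.of fun _ _ => 1 : Matrix ι (Fin 1) K) Q G := by
  have hGfin : G.Finite := G.toFinite
  obtain ⟨f, hf⟩ := exists_injective_of_finrank_le (K := K) (V := β → K) (β := κ) (by simpa)
  let block : Option ι → (β → K) →ₗ[K] (ι → β → K) × (κ → K) := fun k =>
    k.elim (LinearMap.inr K _ _ ∘ₗ f) fun i =>
      LinearMap.inl K _ _ ∘ₗ LinearMap.single K (fun _ => β → K) i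
  obtain ⟨H, hN, x, hx, hli⟩ := exists_linearIndepOn_mem_inf_ker _ hGfin.toFinset
    (F := edgeFlat K β) (fun J hJ hJne => (hG J (hGfin.subset_toFinset.1 hJ) hJne).trans
      (le_finrank_iSup_edgeFlat J)) (N := fun k => LinearMap.range (block k))
    fun k => (LinearMap.finrank_range_le _).trans_eq (Module.finrank_fintype_fun_eq_card K)
  rw [hGfin.coe_toFinset] at hli
  have hinj : ∀ k, Function.Injective (block k) → Function.Injective (H ∘ₗ block k) := by
    intro k hk
    refine (injective_iff_map_eq_zero _).2 fun y hy => hk ?_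
    rw [map_zero]
    exact LinearMap.disjoint_ker.1 (hN k) _ (LinearMap.mem_range_self _ y) hy
  refine ⟨(LinearMap.toMatrix' (H ∘ₗ LinearMap.inr K (ι → β → K) (κ → K)))ᵀ,
    mulVec_injective_transpose_toMatrix' ?_, birigidIndep_one_of_linearIndepOn_edgeFlat
      (fun j => ?_) (fun i => hinj (some i) ?_) (fun e he => hx e (by simpa using he)) hli⟩
  · have hnone := LinearMap.injective_iff_surjective.1 (hinj none (LinearMap.inr_injective.comp hf))
    exact .of_comp (g := f) hnone
  · ext b
    simp [LinearMap.toMatrix'_apply]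
  · exact LinearMap.inl_injective.comp (Pi.single_injective (M := fun _ => β → K) i)

theorem tensorIndep_of_rat_of_corank_one_left {F : Type*} [Field F] {n s r : ℕ}
    {E : Set (Fin (s + 1) × Fin n)} (hE : TensorIndep ℚ (s + 1) n s r E) :
    TensorIndep F (s + 1) n s r E := by
  rcases le_total n r with hn | hr
  · exact tensorIndep_of_rat_of_le (.inr hn) hE
  obtain ⟨b, rfl⟩ := Nat.exists_eq_add_of_le hr
  obtain ⟨P, Q, G, hP, -, hG, hEG, hcard⟩ := exists_birigidIndep_of_tensorIndep hE
  obtain ⟨Q', hQ', hG'⟩ := exists_birigidIndep_one (K := AlgebraicClosure F) (β := Fin b)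
    (ι := Fin (s + 1)) (κ := Fin (r + b)) (G := G) (by simp) fun J hJG hJ => by
      simpa using hG.card_add_le hP hJG (by simpa using hJ)
  have hone : Function.Injective
      (Matrix.of fun _ _ => 1 : Matrix (Fin (s + 1)) (Fin 1) (AlgebraicClosure F)).mulVec := by
    intro x y hxy
    ext i
    simpa [Matrix.mulVec, dotProduct, Subsingleton.elim i 0] using congrFun hxy 0
  exact LinearIndepOn.mono (tensorIndep_compl_of_birigidIndep hone hQ' hG' hcard) hEG

end CorankOne

section Jacobian

open MvPolynomial

variable {k σ ι : Type*} [Field k]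

theorem pderiv_aeval [Fintype ι] (z : ι → MvPolynomial σ k) (x : σ) (f : MvPolynomial ι k) :
    pderiv x (aeval z f) = ∑ e, aeval z (pderiv e f) * pderiv x (z e) := by
  classical
  induction f using MvPolynomial.induction_on with
  | C a => simp [MvPolynomial.algebraMap_eq]
  | add f g hf hg => simp only [map_add, hf, hg, add_mul, Finset.sum_add_distrib]
  | mul_X f e hf =>
    have hX : ∑ i, aeval z (pderiv i (X e : MvPolynomial ι k)) * pderiv x (z i) =
        pderiv x (z e) := by
      rw [Finset.sum_eq_single_of_mem e (Finset.mem_univ e)] <;> simp +contextual [pderiv_X]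
    simp only [map_mul, aeval_X, Derivation.leibniz, smul_eq_mul, hf, map_add, add_mul,
      Finset.sum_add_distrib, mul_assoc, ← Finset.mul_sum, hX]

theorem eq_C_of_forall_pderiv_eq_zero [CharZero k] {f : MvPolynomial ι k}
    (hf : ∀ e, pderiv e f = 0) : f = C (f.coeff 0) := by
  classical
  ext d
  rcases eq_or_ne d 0 with rfl | hd
  · simp
  obtain ⟨e, he⟩ := Finsupp.ne_iff.1 hd
  have hle : Finsupp.single e 1 ≤ d := Finsupp.single_le_iff.2 (Nat.one_le_iff_ne_zero.2 he)
  have hcoeff := congrArg (coeff (d - Finsupp.single e 1)) (hf e)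
  rw [coeff_pderiv, coeff_zero, tsub_add_cancel_of_le hle, mul_eq_zero] at hcoeff
  rw [coeff_C, if_neg hd.symm]
  exact hcoeff.resolve_right (Nat.cast_add_one_ne_zero _)

theorem totalDegree_pderiv_le (f : MvPolynomial ι k) (e : ι) :
    (pderiv e f).totalDegree ≤ f.totalDegree - 1 := by
  refine Finset.sup_le fun d hd => ?_
  rw [mem_support_iff, coeff_pderiv] at hd
  have hle := le_totalDegree (mem_support_iff.2 (left_ne_zero_of_mul hd))
  rw [Finsupp.sum_add_index' (fun _ => rfl) (fun _ _ _ => rfl),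
    Finsupp.sum_single_index rfl] at hle
  exact Nat.le_sub_of_add_le hle

theorem algebraicIndependent_of_linearIndependent_pderiv [CharZero k] [Finite ι]
    {z : ι → MvPolynomial σ k}
    (h : LinearIndependent (MvPolynomial σ k) fun e x => pderiv x (z e)) :
    AlgebraicIndependent k z := by
  have := Fintype.ofFinite ι
  rw [algebraicIndependent_iff]
  intro f hf
  induction hn : f.totalDegree using Nat.strong_induction_on generalizing f with | _ n ih
  have hpderiv (e : ι) : aeval z (pderiv e f) = 0 :=
    Fintype.linearIndependent_iff.1 h (fun e => aeval z (pderiv e f)) (by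
      ext1 x
      rw [Finset.sum_apply, Pi.zero_apply]
      exact (pderiv_aeval z x f).symm.trans (by rw [hf, map_zero])) e
  have hC : f = C (f.coeff 0) := by
    by_cases hdeg : f.totalDegree = 0
    · exact totalDegree_eq_zero_iff_eq_C.1 hdeg
    · refine eq_C_of_forall_pderiv_eq_zero fun e => ih _ ?_ _ (hpderiv e) rfl
      have := totalDegree_pderiv_le f e
      omega
  rw [hC, aeval_C, MvPolynomial.algebraMap_eq, C_eq_zero] at hf
  rw [hC, hf, C_0]

variable {L κ α : Type*} [Field L] [Algebra k L] [Fintype α]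

theorem pderiv_sum_X_mul_X [DecidableEq ι] [DecidableEq κ] (e : ι × κ)
    (x : (ι × α) ⊕ (κ × α)) :
    pderiv x (∑ c, X (.inl (e.1, c)) * X (.inr (e.2, c)) : MvPolynomial _ k) =
      rigidityRow (.of fun i c => X (.inl (i, c))) (.of fun j c => X (.inr (j, c))) e x := by
  classical
  rcases x with ⟨i, c⟩ | ⟨j, c⟩
  · by_cases h : e.1 = i <;> simp [rigidityRow, pderiv_X, Pi.single_apply, h]
  · by_cases h : e.2 = j <;> simp [rigidityRow, pderiv_X, Pi.single_apply, h]

theorem BirigidIndep.algebraicIndependent [CharZero k] [DecidableEq ι] [DecidableEq κ]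
    [Finite ι] [Finite κ] {P : Matrix ι α L} {Q : Matrix κ α L} {G : Set (ι × κ)}
    (h : BirigidIndep P Q G) :
    AlgebraicIndependent k fun e : G =>
      (∑ c, X (.inl (e.1.1, c)) * X (.inr (e.1.2, c)) : MvPolynomial ((ι × α) ⊕ (κ × α)) k) := by
  let R := MvPolynomial ((ι × α) ⊕ (κ × α)) k
  let w (e : G) : (ι × α) ⊕ (κ × α) → MvPolynomial ((ι × α) ⊕ (κ × α)) k :=
    rigidityRow (.of fun i c => X (.inl (i, c))) (.of fun j c => X (.inr (j, c))) e.1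
  let φ : MvPolynomial ((ι × α) ⊕ (κ × α)) k →ₐ[k] L :=
    aeval (Sum.elim (fun x => P x.1 x.2) fun x => Q x.1 x.2)
  have hφ (e : G) (x : (ι × α) ⊕ (κ × α)) : φ (w e x) = rigidityRow P Q e.1 x := by
    rcases x with x | x <;> simp [w, φ, rigidityRow, apply_ite φ]
  have hLw : LinearIndependent L fun e x => φ (w e x) := by
    simpa only [hφ] using! h
  have hfrac := linearIndependent_of_specialization
    (IsFractionRing.injective R (FractionRing R)) φ.toRingHom w hLw
  have hw : LinearIndependent R w :=
    (hfrac.restrict_scalars' R).of_comp ((Algebra.linearMap R (FractionRing R)).compLeft _)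
  refine algebraicIndependent_of_linearIndependent_pderiv ?_
  convert! hw using 3 with e x
  exact pderiv_sum_X_mul_X e.1 x

end Jacobian

section Laurent

variable {ι L : Type*} [Field L] [Fintype ι]

/-- The Laurent monomials in the elements of a family, as a monoid homomorphism. -/
def laurentMonomial (z : ι → Lˣ) : Multiplicative (ι → ℤ) →* L where
  toFun c := ∏ e, (z e : L) ^ c.toAdd e
  map_one' := by simp
  map_mul' c d := by simp [zpow_add₀, Finset.prod_mul_distrib]

theorem linearIndependent_laurentMonomial {k : Type*} [Field k] [Algebra k L] {z : ι → Lˣ}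
    (hz : AlgebraicIndependent k fun e => (z e : L)) :
    LinearIndependent k fun c : ι → ℤ => laurentMonomial z (.ofAdd c) := by
  refine linearIndependent_iff_finset_linearIndependent.2 fun T => ?_
  obtain ⟨N, hN⟩ := T.finite_toSet.bddBelow
  let d (c : T) : ι →₀ ℕ := Finsupp.equivFunOnFinite.symm fun e => (c.1 e - N e).toNat
  have hd (c : T) (e : ι) : (d c e : ℤ) = c.1 e - N e :=
    Int.toNat_of_nonneg (sub_nonneg.2 (hN c.2 e))
  have hdinj : Function.Injective d := fun c c' h => Subtype.ext <| funext fun e => by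
    have := hd c e
    rw [h, hd c' e] at this
    linarith
  have hshift (c : T) : LinearMap.mulLeft k (laurentMonomial z (.ofAdd (-N)))
      (laurentMonomial z (.ofAdd c.1)) = MvPolynomial.aeval (fun e => (z e : L))
        (MvPolynomial.basisMonomials ι k (d c)) := by
    rw [LinearMap.mulLeft_apply, ← map_mul, ← ofAdd_add, MvPolynomial.coe_basisMonomials,
      MvPolynomial.aeval_monomial, map_one, one_mul, Finsupp.prod_fintype _ _ (by simp)]
    refine Finset.prod_congr rfl fun e _ => ?_
    rw [← zpow_natCast, hd c e, toAdd_ofAdd, Pi.add_apply, Pi.neg_apply, neg_add_eq_sub]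
  refine LinearIndependent.of_comp (LinearMap.mulLeft k (laurentMonomial z (.ofAdd (-N)))) ?_
  have hmon := (((MvPolynomial.basisMonomials ι k).linearIndependent.map'
    (MvPolynomial.aeval fun e => (z e : L)).toLinearMap
      (LinearMap.ker_eq_bot.2 hz)).comp d hdinj)
  convert! hmon using 1
  exact funext hshift

theorem exists_valuationSubring_of_linearIndependent {k Γ : Type*} [Field k] [Algebra k L]
    [AddCommGroup Γ] [LinearOrder Γ] [IsOrderedAddMonoid Γ] (mon : Multiplicative Γ →* L)
    (h : LinearIndependent k fun γ : Γ => mon (.ofAdd γ)) :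
    ∃ B : ValuationSubring L, ∀ γ : Γ, 0 < γ → B.valuation (mon (.ofAdd γ)) < 1 := by
  let mk (γ : Γ) : L := mon (.ofAdd γ)
  have hmul (γ δ : Γ) : mk (γ + δ) = mk γ * mk δ := map_mul mon _ _
  let A : Submodule k L := Submodule.span k (mk '' Set.Ici 0)
  let I : Submodule k L := Submodule.span k (mk '' Set.Ioi 0)
  have hone : 1 ∈ A := Submodule.subset_span ⟨0, le_rfl, map_one mon⟩
  have hAA {x y : L} (hx : x ∈ A) (hy : y ∈ A) : x * y ∈ A := by
    have hle : A * A ≤ A := by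
      rw [Submodule.span_mul_span, Submodule.span_le]
      rintro _ ⟨_, ⟨γ, hγ, rfl⟩, _, ⟨δ, hδ, rfl⟩, rfl⟩
      exact Submodule.subset_span ⟨γ + δ, Set.mem_Ici.2 (add_nonneg hγ hδ), hmul γ δ⟩
    exact hle (Submodule.mul_mem_mul hx hy)
  have hAI {x y : L} (hx : x ∈ A) (hy : y ∈ I) : x * y ∈ I := by
    have hle : A * I ≤ I := by
      rw [Submodule.span_mul_span, Submodule.span_le]
      rintro _ ⟨_, ⟨γ, hγ, rfl⟩, _, ⟨δ, hδ, rfl⟩, rfl⟩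
      exact Submodule.subset_span ⟨γ + δ, Set.mem_Ioi.2 (add_pos_of_nonneg_of_pos hγ hδ), hmul γ δ⟩
    exact hle (Submodule.mul_mem_mul hx hy)
  let R : Subalgebra k L := A.toSubalgebra hone fun _ _ => hAA
  let J : Ideal R.toSubring :=
    { carrier := {x | (x : L) ∈ I}
      add_mem' := fun hx hy => I.add_mem hx hy
      zero_mem' := I.zero_mem
      smul_mem' := fun a _ hx => hAI a.2 hx }
  have hJ : J ≠ ⊤ := by
    rw [Ideal.ne_top_iff_one]
    have hnot := h.notMem_span_image (s := Set.Ioi 0) (x := 0) (lt_irrefl 0)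
    rwa [ofAdd_zero, map_one] at hnot
  obtain ⟨B, -, hB⟩ := Ideal.image_subset_nonunits_valuationSubring J hJ
  have hIA : I ≤ A := Submodule.span_mono (Set.image_mono Set.Ioi_subset_Ici_self)
  refine ⟨B, fun γ hγ => ?_⟩
  have hγI : mk γ ∈ I := Submodule.subset_span ⟨γ, hγ, rfl⟩
  exact (ValuationSubring.mem_nonunits_iff B).1 (hB ⟨⟨mk γ, hIA hγI⟩, hγI, rfl⟩)

theorem exists_valuationSubring_of_algebraicIndependent {k : Type*} [Field k] [Algebra k L]
    {z : ι → L} (hz : AlgebraicIndependent k z) :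
    ∃ B : ValuationSubring L, ∀ c : ι → ℤ, B.valuation (∏ e, z e ^ c e) = 1 → c = 0 := by
  let u (e : ι) : Lˣ := Units.mk0 (z e) (hz.ne_zero e)
  let _ : LinearOrder ι := IsWellOrder.linearOrder WellOrderingRel
  obtain ⟨B, hB⟩ := exists_valuationSubring_of_linearIndependent (Γ := Lex (ι → ℤ))
    (laurentMonomial u) (linearIndependent_laurentMonomial (z := u) hz)
  refine ⟨B, fun c hc => ?_⟩
  rcases lt_trichotomy (toLex c) 0 with hneg | hzero | hpos
  · have hinv : B.valuation (∏ e, z e ^ (-c) e) < 1 := hB (-toLex c) (neg_pos.2 hneg)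
    simp only [Pi.neg_apply, zpow_neg, Finset.prod_inv_distrib, map_inv₀, hc, inv_one] at hinv
    exact absurd hinv (lt_irrefl 1)
  · exact hzero
  · exact absurd hc (hB _ hpos).ne

end Laurent

section Caterpillar

open Submodule

variable {k U X V : Type*} [Field k] [AddCommGroup U] [Module k U] [AddCommGroup X] [Module k X]

theorem nearest_neighbour_interchange (W : Submodule k U) (p q c : U)
    (h : W ⊔ span k {p + q} ⊔ span k {c} = ⊤) :
    W ⊔ span k {p} ⊔ span k {q + c} = ⊤ ∨ W ⊔ span k {q} ⊔ span k {p + c} = ⊤ := by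
  have htop {M : Submodule k U} (hW : W ≤ M) (hp : p ∈ M) (hq : q ∈ M) (hc : c ∈ M) : M = ⊤ := by
    rw [eq_top_iff, ← h]
    exact sup_le (sup_le hW ((span_singleton_le_iff_mem _ _).2 (add_mem hp hq)))
      ((span_singleton_le_iff_mem _ _).2 hc)
  have hmem : p ∈ W ⊔ span k {p + q} ⊔ span k {c} := h ▸ mem_top
  simp only [mem_sup, mem_span_singleton] at hmem
  obtain ⟨_, ⟨w, hw, _, ⟨s, rfl⟩, rfl⟩, _, ⟨t, rfl⟩, hpw⟩ := hmem
  by_cases hst : s = t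
  · right
    set M := W ⊔ span k {q} ⊔ span k {p + c}
    have hWM : W ≤ M := le_sup_left.trans le_sup_left
    have hq : q ∈ M := mem_sup_left (mem_sup_right (mem_span_singleton_self q))
    have hpc : p + c ∈ M := mem_sup_right (mem_span_singleton_self _)
    have hp : p ∈ M := by
      have hpeq : p = w + s • q + s • (p + c) := by
        nth_rewrite 1 [← hpw]
        subst hst
        module
      rw [hpeq]
      exact add_mem (add_mem (hWM hw) (M.smul_mem s hq)) (M.smul_mem s hpc)
    exact htop hWM hp hq ((add_mem_cancel_left hp).1 hpc)
  · left
    set M := W ⊔ span k {p} ⊔ span k {q + c}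
    have hWM : W ≤ M := le_sup_left.trans le_sup_left
    have hp : p ∈ M := mem_sup_left (mem_sup_right (mem_span_singleton_self p))
    have hqc : q + c ∈ M := mem_sup_right (mem_span_singleton_self _)
    have hq : q ∈ M := by
      have hw_eq : w = p - s • (p + q) - t • c := by
        nth_rewrite 1 [← hpw]
        module
      have hqeq : (s - t) • q = (1 - s) • p - w - t • (q + c) := by
        rw [hw_eq]
        module
      rw [← M.smul_mem_iff (sub_ne_zero.2 hst), hqeq]
      exact sub_mem (sub_mem (M.smul_mem _ hp) (hWM hw)) (M.smul_mem t hqc)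
    exact htop hWM hp hq ((add_mem_cancel_left hq).1 hqc)

/-- The span of the cut vectors `β A B` over the inner nodes `A + B` of a binary tree, where a
subtree stands for the sum of the vectors `x v` over its leaves `v`. -/
def cutSpan (β : X →ₗ[k] X →ₗ[k] U) (x : V → X) : FreeAddMagma V → Submodule k U
  | .of _ => ⊥
  | .add A B => cutSpan β x A ⊔ cutSpan β x B ⊔
      span k {β (FreeAddMagma.lift x A) (FreeAddMagma.lift x B)}

/-- The span of the cut vectors of the caterpillar tree with a given list of leaves. -/
def caterpillarSpan (β : X →ₗ[k] X →ₗ[k] U) (x : V → X) : List V → Submodule k U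
  | [] => ⊥
  | v :: l => caterpillarSpan β x l ⊔ span k {β (x v) (l.map x).sum}

/-- The multiset of leaves of a binary tree. -/
def leaves : FreeAddMagma V →ₙ+ Multiset V := FreeAddMagma.lift fun v => {v}

variable {β : X →ₗ[k] X →ₗ[k] U} {x : V → X}

theorem cutSpan_of (v : V) : cutSpan β x (.of v) = ⊥ := rfl

theorem cutSpan_add (A B : FreeAddMagma V) :
    cutSpan β x (A + B) = cutSpan β x A ⊔ cutSpan β x B ⊔
      span k {β (FreeAddMagma.lift x A) (FreeAddMagma.lift x B)} := rfl

theorem sum_map_leaves (A : FreeAddMagma V) :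
    ((leaves A).map x).sum = FreeAddMagma.lift x A := by
  induction A using FreeAddMagma.recOnAdd with
  | ih1 v => simp [leaves]
  | ih2 A B hA hB => simp [hA, hB]

theorem exists_caterpillar_add_of_length_lt (hβ : ∀ x y, β x y = β y x) {N : ℕ}
    (ih : ∀ A : FreeAddMagma V, A.length < N → ∀ W, W ⊔ cutSpan β x A = ⊤ →
      ∃ l : List V, l = leaves A ∧ W ⊔ caterpillarSpan β x l = ⊤)
    (A B : FreeAddMagma V) (hN : A.length + B.length ≤ N) (W : Submodule k U)
    (hW : W ⊔ cutSpan β x (A + B) = ⊤) :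
    ∃ l : List V, l = leaves (A + B) ∧ W ⊔ caterpillarSpan β x l = ⊤ := by
  induction B using FreeAddMagma.recOnAdd generalizing A W with
  | ih1 v =>
    obtain ⟨l, hl, hlW⟩ := ih A (by simp at hN; omega)
      (W ⊔ span k {β (x v) (FreeAddMagma.lift x A)}) (by
        rw [← hW, cutSpan_add, cutSpan_of, sup_bot_eq, FreeAddMagma.lift_of, hβ (x v)]
        ac_rfl)
    have hsum : (l.map x).sum = FreeAddMagma.lift x A := by
      rw [← sum_map_leaves, ← hl, Multiset.map_coe, Multiset.sum_coe]
    refine ⟨v :: l, ?_, ?_⟩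
    · rw [map_add, ← hl, add_comm]
      rfl
    · rw [← hlW, caterpillarSpan, hsum]
      ac_rfl
  | ih2 C D hC hD =>
    simp only [FreeAddMagma.length] at hN hC hD
    simp only [cutSpan_add, map_add] at hW hC hD ⊢
    rcases nearest_neighbour_interchange (W ⊔ cutSpan β x A ⊔ cutSpan β x C ⊔ cutSpan β x D)
        (β (FreeAddMagma.lift x A) (FreeAddMagma.lift x C))
        (β (FreeAddMagma.lift x A) (FreeAddMagma.lift x D))
        (β (FreeAddMagma.lift x C) (FreeAddMagma.lift x D)) (by rw [← hW]; ac_rfl) with hcut | hcut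
    · obtain ⟨l, hl, hlW⟩ := hD (A + C) (by simp; omega) W (by
        simp only [cutSpan_add, map_add, LinearMap.add_apply]
        rw [← hcut]
        ac_rfl)
      exact ⟨l, by rw [hl, map_add, add_assoc], hlW⟩
    · obtain ⟨l, hl, hlW⟩ := hC (A + D) (by simp; omega) W (by
        simp only [cutSpan_add, map_add, LinearMap.add_apply, hβ (FreeAddMagma.lift x D)]
        rw [← hcut, add_comm (β (FreeAddMagma.lift x A) (FreeAddMagma.lift x C))]
        ac_rfl)
      exact ⟨l, by rw [hl, map_add]; abel, hlW⟩

theorem exists_caterpillar (hβ : ∀ x y, β x y = β y x) (A : FreeAddMagma V) (W : Submodule k U)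
    (hW : W ⊔ cutSpan β x A = ⊤) :
    ∃ l : List V, l = leaves A ∧ W ⊔ caterpillarSpan β x l = ⊤ := by
  induction hn : A.length using Nat.strong_induction_on generalizing A W with | _ n ih
  induction A using FreeAddMagma.recOnAdd with
  | ih1 v => exact ⟨[v], rfl, by simpa [caterpillarSpan, cutSpan_of] using hW⟩
  | ih2 A B =>
    refine exists_caterpillar_add_of_length_lt hβ (fun A' hA' W' hW' => ih _ hA' A' W' hW' rfl)
      A B hn.le W hW

end Caterpillar

section Ultrametric

open Submodule

variable {ι V Γ : Type*}

theorem exists_partition_of_ultrametric [LinearOrder Γ] {d : V → V → Γ}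
    (hsymm : ∀ x y, d x y = d y x) (hultra : ∀ x y z, d x z ≤ max (d x y) (d y z))
    {S : Finset V} (hS : S.Nontrivial) :
    ∃ A B : Finset V, ∃ δ, A.Nonempty ∧ B.Nonempty ∧ Disjoint A B ∧ A ∪ B = S ∧
      ∀ x ∈ A, ∀ y ∈ B, d x y = δ := by
  have hoff : S.offDiag.Nonempty := by
    obtain ⟨x, hx, y, hy, hxy⟩ := hS
    exact ⟨(x, y), Finset.mem_offDiag.2 ⟨hx, hy, hxy⟩⟩
  obtain ⟨⟨p, q⟩, hpq, hmax⟩ :=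
    Finset.exists_max_image S.offDiag (fun e => d e.1 e.2) hoff
  simp only [Finset.mem_offDiag, Prod.forall] at hpq hmax
  obtain ⟨hp, hq, hne⟩ := hpq
  refine ⟨{x ∈ S | x = p ∨ d x p < d p q}, {x ∈ S | ¬(x = p ∨ d x p < d p q)}, d p q,
    ⟨p, by simp [hp]⟩, ⟨q, by simp [hq, hne.symm, hsymm q p]⟩,
    Finset.disjoint_filter_filter_not _ _ _, Finset.filter_union_filter_not_eq _ _, ?_⟩
  intro x hx y hy
  simp only [Finset.mem_filter, not_or, not_lt] at hx hy
  obtain ⟨hy, hyp, hyδ⟩ := hy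
  obtain ⟨hx, hxδ⟩ := hx
  have hxy : x ≠ y := by
    rintro rfl
    exact hxδ.elim hyp hyδ.not_gt
  refine (hmax x y ⟨hx, hy, hxy⟩).antisymm ?_
  rcases hxδ with rfl | hxδ
  · exact hyδ.trans_eq (hsymm y x)
  · rw [hsymm x y]
    exact (le_max_iff.1 (hyδ.trans (hultra y x p))).resolve_right hxδ.not_ge

theorem prod_filter_mem_union {M : Type*} [CommMonoid M] [Fintype ι] [DecidableEq V]
    (a b : ι → V) {A B : Finset V} (hAB : Disjoint A B) (F : ι → M) :
    ∏ e with a e ∈ A ∪ B ∧ b e ∈ A ∪ B, F e =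
      (∏ e with a e ∈ A ∧ b e ∈ A, F e) * (∏ e with a e ∈ B ∧ b e ∈ B, F e) *
        ∏ e with (a e ∈ A ∧ b e ∈ B) ∨ (a e ∈ B ∧ b e ∈ A), F e := by
  simp_rw [Finset.prod_filter, ← Finset.prod_mul_distrib]
  refine Finset.prod_congr rfl fun e _ => ?_
  have ha : a e ∈ A → a e ∉ B := fun h => Finset.disjoint_left.1 hAB h
  have hb : b e ∈ A → b e ∉ B := fun h => Finset.disjoint_left.1 hAB h
  by_cases haA : a e ∈ A <;> by_cases hbA : b e ∈ A <;> by_cases haB : a e ∈ B <;>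
    by_cases hbB : b e ∈ B <;> simp_all

theorem prod_zpow_eq_zpow_sum [CommGroupWithZero Γ] {x : Γ} (hx : x ≠ 0) (T : Finset ι)
    (c : ι → ℤ) : ∏ e ∈ T, x ^ c e = x ^ ∑ e ∈ T, c e := by
  induction T using Finset.cons_induction with
  | empty => simp
  | cons e T he ih => rw [Finset.prod_cons, Finset.sum_cons, ih, zpow_add₀ hx]

theorem prod_zpow_eq_one_of_sum_eq_zero [CommGroupWithZero Γ] {T : Finset ι} {x : ι → Γ} {δ : Γ}
    (hx : ∀ e ∈ T, x e = δ) (hx0 : ∀ e ∈ T, x e ≠ 0) {c : ι → ℤ} (hc : ∑ e ∈ T, c e = 0) :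
    ∏ e ∈ T, x e ^ c e = 1 := by
  rcases T.eq_empty_or_nonempty with rfl | ⟨e₀, he₀⟩
  · rfl
  · rw [Finset.prod_congr rfl fun e he => by rw [hx e he],
      prod_zpow_eq_zpow_sum (hx e₀ he₀ ▸ hx0 e₀ he₀), hc, zpow_zero]

/-- The symmetric bilinear map polarising the indicator functions of vertex sets: on the indicators
of disjoint sets `A` and `B` it gives the indicator of the set of edges of the graph with edges
`a e — b e` that join `A` to `B`. -/
def crossing (a b : ι → V) : (V → ℚ) →ₗ[ℚ] (V → ℚ) →ₗ[ℚ] (ι → ℚ) :=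
  LinearMap.mk₂ ℚ (fun x y e => x (a e) * y (b e) + y (a e) * x (b e))
    (fun _ _ _ => by ext; simp; ring) (fun _ _ _ => by ext; simp; ring)
    (fun _ _ _ => by ext; simp; ring) (fun _ _ _ => by ext; simp; ring)

theorem crossing_comm (a b : ι → V) (x y : V → ℚ) : crossing a b x y = crossing a b y x :=
  funext fun _ => add_comm _ _

/-- The indicator function of a vertex. -/
def vertex (v : V) : V → ℚ := Pi.single v 1

theorem sum_map_vertex {s : Multiset V} (hs : s.Nodup) (v : V) :
    (s.map vertex).sum v = if v ∈ s then 1 else 0 := by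
  have hsum : (s.map vertex).sum = ∑ u ∈ s.toFinset, vertex u := by
    rw [Finset.sum, Multiset.toFinset_val, hs.dedup]
  simp [hsum, vertex, Finset.sum_apply, Pi.single_apply]

theorem crossing_lift_of_disjoint (a b : ι → V) {S T : Finset V} (h : Disjoint S T)
    {A B : FreeAddMagma V} (hA : leaves A = S.val) (hB : leaves B = T.val) (e : ι) :
    crossing a b (FreeAddMagma.lift vertex A) (FreeAddMagma.lift vertex B) e =
      if (a e ∈ S ∧ b e ∈ T) ∨ (a e ∈ T ∧ b e ∈ S) then 1 else 0 := by
  have ha : a e ∈ S → a e ∉ T := fun hS => Finset.disjoint_left.1 h hS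
  simp only [crossing, LinearMap.mk₂_apply, ← sum_map_leaves, hA, hB, sum_map_vertex S.nodup,
    sum_map_vertex T.nodup, Finset.mem_val]
  by_cases haS : a e ∈ S <;> by_cases haT : a e ∈ T <;> simp_all

theorem exists_tree_of_ultrametric [Fintype ι] [LinearOrderedCommGroupWithZero Γ] {a b : ι → V}
    (hab : ∀ e, a e ≠ b e) {d : V → V → Γ} (hsymm : ∀ x y, d x y = d y x)
    (hultra : ∀ x y z, d x z ≤ max (d x y) (d y z)) (hd : ∀ e, d (a e) (b e) ≠ 0) {S : Finset V}
    (hS : S.Nonempty) :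
    ∃ A : FreeAddMagma V, leaves A = S.val ∧ ∀ c : ι → ℤ,
      (∀ f ∈ cutSpan (crossing a b) vertex A, (Int.cast ∘ c) ⬝ᵥ f = 0) →
        ∏ e with a e ∈ S ∧ b e ∈ S, d (a e) (b e) ^ c e = 1 := by
  induction hn : S.card using Nat.strong_induction_on generalizing S with | _ n ih
  obtain ⟨v, rfl⟩ | hnt := hS.exists_eq_singleton_or_nontrivial
  · refine ⟨.of v, rfl, fun c _ => Finset.prod_eq_one fun e he => ?_⟩
    simp only [Finset.mem_filter, Finset.mem_singleton] at he
    exact absurd (he.2.1.trans he.2.2.symm) (hab e)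
  · obtain ⟨S, T, δ, hS', hT, hST, rfl, hδ⟩ := exists_partition_of_ultrametric hsymm hultra hnt
    rw [Finset.card_union_of_disjoint hST] at hn
    obtain ⟨A, hA, hAprod⟩ := ih _ (by have := hT.card_pos; omega) hS' rfl
    obtain ⟨B, hB, hBprod⟩ := ih _ (by have := hS'.card_pos; omega) hT rfl
    refine ⟨A + B, ?_, fun c hc => ?_⟩
    · rw [map_add, hA, hB, ← Finset.disjUnion_eq_union _ _ hST, Finset.disjUnion_val]
    · rw [cutSpan_add] at hc
      have hcross := hc _ (mem_sup_right (mem_span_singleton_self _))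
      simp only [dotProduct, crossing_lift_of_disjoint a b hST hA hB, mul_ite, mul_one, mul_zero,
        ← Finset.sum_filter, Function.comp_apply] at hcross
      rw [prod_filter_mem_union a b hST, hAprod c fun f hf => hc f (mem_sup_left (mem_sup_left hf)),
        hBprod c fun f hf => hc f (mem_sup_left (mem_sup_right hf)), one_mul, one_mul]
      refine prod_zpow_eq_one_of_sum_eq_zero (δ := δ) (fun e he => ?_) (fun e _ => hd e)
        (mod_cast hcross)
      obtain ⟨ha, hb⟩ | ⟨ha, hb⟩ := (Finset.mem_filter.1 he).2
      · exact hδ _ ha _ hb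
      · rw [hsymm, hδ _ hb _ ha]

theorem eq_top_of_forall_int_dotProduct [Fintype ι] {S : Submodule ℚ (ι → ℚ)}
    (h : ∀ c : ι → ℤ, (∀ f ∈ S, (Int.cast ∘ c) ⬝ᵥ f = 0) → c = 0) : S = ⊤ := by
  rw [← span_eq S, span_eq_top_iff_forall_dotProduct_eq_zero]
  intro x hx
  obtain ⟨N, hN⟩ := IsLocalization.exist_integer_multiples_of_finite (nonZeroDivisors ℤ) x
  choose c hc using hN
  have hcx : Int.cast ∘ c = (N : ℤ) • x := funext hc
  have hc0 : c = 0 := h c fun f hf => by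
    rw [hcx, smul_dotProduct, dotProduct_comm, hx f hf, smul_zero]
  have hNx : (N : ℤ) • x = 0 := by
    rw [← hcx, hc0]
    ext
    simp
  exact (smul_eq_zero.1 hNx).resolve_left (nonZeroDivisors.coe_ne_zero N)

theorem prod_comp_zpow_eq [Fintype ι] [Fintype V] [DecidableEq V] [CommGroupWithZero Γ] {γ : V → Γ}
    (hγ : ∀ v, γ v ≠ 0) (t : ι → V) (c : ι → ℤ) :
    ∏ e, γ (t e) ^ c e = ∏ v, γ v ^ ∑ e with t e = v, c e := by
  rw [← Finset.prod_fiberwise _ t]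
  refine Finset.prod_congr rfl fun v _ => ?_
  rw [← prod_zpow_eq_zpow_sum (hγ v)]
  exact Finset.prod_congr rfl fun e he => by rw [(Finset.mem_filter.1 he).2]

theorem prod_mul_zpow_eq_one [Fintype ι] [Finite V] [CommGroupWithZero Γ] {a b : ι → V}
    {γ : V → Γ} (hγ : ∀ v, γ v ≠ 0) {c : ι → ℤ}
    (hc : ∀ f : V → ℚ, (Int.cast ∘ c) ⬝ᵥ (f ∘ a + f ∘ b) = 0) :
    ∏ e, (γ (a e) * γ (b e)) ^ c e = 1 := by
  have := Fintype.ofFinite V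
  simp_rw [mul_zpow, Finset.prod_mul_distrib]
  rw [prod_comp_zpow_eq hγ a, prod_comp_zpow_eq hγ b, ← Finset.prod_mul_distrib]
  refine Finset.prod_eq_one fun v _ => ?_
  rw [← zpow_add₀ (hγ v)]
  have hvertex : ∀ t : ι → V, (Int.cast ∘ c) ⬝ᵥ (vertex v ∘ t) = (∑ e with t e = v, c e : ℤ) :=
    fun t => by simp [dotProduct, vertex, Pi.single_apply, Finset.sum_filter]
  have hv := hc (vertex v)
  rw [dotProduct_add, hvertex, hvertex] at hv
  rw [show _ + _ = (0 : ℤ) by exact_mod_cast hv, zpow_zero]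

theorem exists_tree_sup_eq_top [Fintype ι] [Fintype V] [Nonempty V]
    [LinearOrderedCommGroupWithZero Γ] {a b : ι → V} (hab : ∀ e, a e ≠ b e) {d : V → V → Γ}
    (hsymm : ∀ x y, d x y = d y x) (hultra : ∀ x y z, d x z ≤ max (d x y) (d y z))
    (hd : ∀ e, d (a e) (b e) ≠ 0) {γ : V → Γ} (hγ : ∀ v, γ v ≠ 0)
    (h : ∀ c : ι → ℤ, ∏ e, (γ (a e) * γ (b e) * d (a e) (b e)) ^ c e = 1 → c = 0) :
    ∃ A : FreeAddMagma V, leaves A = Finset.univ.val ∧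
      LinearMap.range (LinearMap.funLeft ℚ ℚ a + LinearMap.funLeft ℚ ℚ b) ⊔
        cutSpan (crossing a b) vertex A = ⊤ := by
  obtain ⟨A, hA, hprod⟩ := exists_tree_of_ultrametric hab hsymm hultra hd Finset.univ_nonempty
  refine ⟨A, hA, eq_top_of_forall_int_dotProduct fun c hc => h c ?_⟩
  have hcut := hprod c fun f hf => hc f (mem_sup_right hf)
  simp only [Finset.mem_univ, and_self, Finset.filter_true] at hcut
  simp_rw [mul_zpow _ (d _ _), Finset.prod_mul_distrib, hcut, mul_one]
  exact prod_mul_zpow_eq_one hγ fun f => hc _ (mem_sup_left ⟨f, rfl⟩)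

/-- The end of each edge `a e — b e` that comes first in the order given by `ord`. -/
def lowerEnd (ord : V → ℕ) (a b : ι → V) (e : ι) : V := if ord (a e) < ord (b e) then a e else b e

/-- The end of each edge `a e — b e` that comes last in the order given by `ord`. -/
def upperEnd (ord : V → ℕ) (a b : ι → V) (e : ι) : V := if ord (a e) < ord (b e) then b e else a e

/-- The edges `t e — b e` form a forest in the bipartite graph on two copies of `V`, in which `t e`
lies in the first copy and `b e` in the second one: every function on the edges is a sum of a
function of `t e` and a function of `b e`. -/
def IsBipartiteForest (t b : ι → V) : Prop :=
  LinearMap.range (LinearMap.funLeft ℚ ℚ t) ⊔ LinearMap.range (LinearMap.funLeft ℚ ℚ b) = ⊤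

theorem caterpillarSpan_le_range_lowerEnd {a b : ι → V} (hab : ∀ e, a e ≠ b e) {ord : V → ℕ}
    (hord : Function.Injective ord) {l : List V} (hl : l.Pairwise fun u v => ord u < ord v)
    (hup : ∀ v ∈ l, ∀ u, ord v < ord u → u ∈ l) :
    caterpillarSpan (crossing a b) vertex l ≤
      LinearMap.range (LinearMap.funLeft ℚ ℚ (lowerEnd ord a b)) := by
  induction l with
  | nil => exact bot_le
  | cons v l ih =>
    obtain ⟨hv, hl⟩ := List.pairwise_cons.1 hl
    have hmem : ∀ u, u ∈ l ↔ ord v < ord u := fun u => ⟨hv u, fun hvu =>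
      (List.mem_cons.1 (hup v List.mem_cons_self u hvu)).resolve_left fun h => hvu.ne' (h ▸ rfl)⟩
    refine sup_le (ih hl fun w hw u hwu => (hmem u).2 ((hv w hw).trans hwu)) ?_
    rw [span_singleton_le_iff_mem]
    refine ⟨vertex v, funext fun e => ?_⟩
    have hne : ord (a e) ≠ ord (b e) := fun h => hab e (hord h)
    have hnodup : (l : Multiset V).Nodup := hl.imp fun h => ne_of_apply_ne ord h.ne
    have hsum : (l.map vertex).sum = ((l : Multiset V).map vertex).sum := rfl
    simp only [crossing, LinearMap.mk₂_apply, hsum, sum_map_vertex hnodup, Multiset.mem_coe, hmem,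
      LinearMap.funLeft_apply, lowerEnd, vertex, Pi.single_apply]
    grind

theorem exists_isBipartiteForest [Fintype ι] [Finite V] [Nonempty V]
    [LinearOrderedCommGroupWithZero Γ] {a b : ι → V} (hab : ∀ e, a e ≠ b e) {d : V → V → Γ}
    (hsymm : ∀ x y, d x y = d y x) (hultra : ∀ x y z, d x z ≤ max (d x y) (d y z))
    (hd : ∀ e, d (a e) (b e) ≠ 0) {γ : V → Γ} (hγ : ∀ v, γ v ≠ 0)
    (h : ∀ c : ι → ℤ, ∏ e, (γ (a e) * γ (b e) * d (a e) (b e)) ^ c e = 1 → c = 0) :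
    ∃ ord : V → ℕ, Function.Injective ord ∧
      IsBipartiteForest (lowerEnd ord a b) (upperEnd ord a b) := by
  have := Fintype.ofFinite V
  obtain ⟨A, hA, htop⟩ := exists_tree_sup_eq_top hab hsymm hultra hd hγ h
  obtain ⟨l, hl, htop⟩ := exists_caterpillar (crossing_comm a b) A _ htop
  rw [hA] at hl
  have hmem : ∀ v, v ∈ l := fun v => by
    rw [← Multiset.mem_coe, hl]
    exact Finset.mem_univ v
  have hnodup : l.Nodup := by
    rw [← Multiset.coe_nodup, hl]
    exact Finset.univ.nodup
  have hord : Function.Injective (l.idxOf ·) := fun u v h => (List.idxOf_inj (hmem u)).1 h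
  have hsorted : l.Pairwise fun u v => l.idxOf u < l.idxOf v := by
    rw [List.pairwise_iff_getElem]
    intro i j hi hj hij
    rwa [hnodup.idxOf_getElem, hnodup.idxOf_getElem]
  refine ⟨(l.idxOf ·), hord, ?_⟩
  rw [IsBipartiteForest, eq_top_iff, ← htop]
  refine sup_le ?_ (le_sup_of_le_left
    (caterpillarSpan_le_range_lowerEnd hab hord hsorted fun _ _ u _ => hmem u))
  rintro _ ⟨x, rfl⟩
  refine mem_sup.2 ⟨_, ⟨x, rfl⟩, _, ⟨x, rfl⟩, funext fun e => ?_⟩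
  simp only [Pi.add_apply, LinearMap.add_apply, LinearMap.funLeft_apply, lowerEnd, upperEnd]
  split_ifs
  · rfl
  · exact add_comm _ _

end Ultrametric

section CorankTwo

variable {ι κ V K : Type*} [Field K]

theorem two_mul_card_image_le_card_support [Fintype ι] [DecidableEq V] [DecidableEq K] {t : ι → V}
    {c : ι → K} (hc : ∀ v, ∑ e with t e = v, c e = 0) :
    2 * (Finset.image t {e | c e ≠ 0}).card ≤ Finset.card {e | c e ≠ 0} := by
  rw [Finset.card_eq_sum_card_image t {e | c e ≠ 0}, mul_comm, ← smul_eq_mul]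
  refine Finset.card_nsmul_le_sum _ _ _ fun v hv => ?_
  obtain ⟨e, he, rfl⟩ := Finset.mem_image.1 hv
  by_contra! hlt
  refine (Finset.mem_filter.1 he).2 ?_
  rw [← hc (t e), Finset.sum_eq_single_of_mem e (by simp)]
  intro e' he' hne
  by_contra hce'
  exact hne (Finset.card_le_one.1 (Nat.le_of_lt_succ hlt) _ (by simp_all) _ (by simp_all))

theorem IsBipartiteForest.eq_zero_of_sum_eq_zero [Fintype ι] {t b : ι → V}
    (h : IsBipartiteForest t b) {c : ι → K} (ht : ∀ v, ∑ e with t e = v, c e = 0)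
    (hb : ∀ v, ∑ e with b e = v, c e = 0) : c = 0 := by
  let S : Finset ι := {e | c e ≠ 0}
  let φ : ((S.image t → ℚ) × (S.image b → ℚ)) →ₗ[ℚ] (S → ℚ) :=
    (LinearMap.funLeft ℚ ℚ fun e : S => ⟨t e, Finset.mem_image_of_mem t e.2⟩).coprod
      (LinearMap.funLeft ℚ ℚ fun e : S => ⟨b e, Finset.mem_image_of_mem b e.2⟩)
  have hsurj : Function.Surjective φ := fun f => by
    obtain ⟨_, ⟨x, rfl⟩, _, ⟨y, rfl⟩, hxy⟩ := Submodule.mem_sup.1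
      (h ▸ Submodule.mem_top : (fun e => if he : e ∈ S then f ⟨e, he⟩ else 0) ∈ _)
    refine ⟨(fun v => x v, fun v => y v), funext fun e => ?_⟩
    simpa [φ, LinearMap.funLeft_apply] using congrFun hxy e
  have hinj : Function.Injective φ := by
    refine (LinearMap.injective_iff_surjective_of_finrank_eq_finrank (le_antisymm ?_ ?_)).2 hsurj
    · have htS : 2 * (S.image t).card ≤ S.card := two_mul_card_image_le_card_support ht
      have hbS : 2 * (S.image b).card ≤ S.card := two_mul_card_image_le_card_support hb
      simp only [Module.finrank_prod, Module.finrank_fintype_fun_eq_card, Fintype.card_coe]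
      omega
    · exact LinearMap.finrank_le_finrank_of_surjective hsurj
  by_contra hc
  obtain ⟨e, he⟩ := Function.ne_iff.1 hc
  have hker : φ (fun _ => 1, fun _ => -1) = φ 0 := by
    ext
    simp [φ]
  have hone := congrFun (congrArg Prod.fst (hinj hker))
    ⟨t e, Finset.mem_image_of_mem t (Finset.mem_filter.2 ⟨Finset.mem_univ e, he⟩)⟩
  exact one_ne_zero hone

theorem mulVec_injective_of_one_self [Nontrivial ι] {x : ι → K} (hx : Function.Injective x) :
    Function.Injective (Matrix.of fun i => ![1, x i]).mulVec := by
  obtain ⟨i, j, hij⟩ := exists_pair_ne ι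
  refine (injective_iff_map_eq_zero (Matrix.of fun i => ![1, x i]).mulVecLin).2 fun y hy => ?_
  have hi := congrFun hy i
  have hj := congrFun hy j
  simp only [Matrix.mulVecLin_apply, Matrix.mulVec, dotProduct, Fin.sum_univ_two, Matrix.of_apply,
    Matrix.cons_val_zero, Matrix.cons_val_one, Pi.zero_apply, one_mul] at hi hj
  have hy1 : y 1 = 0 := (mul_eq_zero.1 (by linear_combination hi - hj :
    (x i - x j) * y 1 = 0)).resolve_left (sub_ne_zero.2 (hx.ne hij))
  have hy0 : y 0 = 0 := by simpa [hy1] using hi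
  ext c
  fin_cases c
  · exact hy0
  · exact hy1

/-- The matrix with rows `rigidityRow P Q e` for `P i = (1, T ^ ord i)` and `Q j = (1, T ^ ord j)`,
after multiplying the coordinate `(v, 0)` by `T ^ ord v` and dividing the row of the edge `e` by
`T ^ ord v` for the lower end `v` of `e`. -/
def scaledRigidityRow (F : Type*) [Field F] [DecidableEq ι] [DecidableEq κ] (ord : ι ⊕ κ → ℕ)
    (e : ι × κ) : (ι × Fin 2) ⊕ (κ × Fin 2) → Polynomial F :=
  Sum.elim
    (fun x => if e.1 = x.1 then
      .X ^ (ord (![.inl e.1, .inr e.2] x.2) - min (ord (.inl e.1)) (ord (.inr e.2))) else 0)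
    (fun x => if e.2 = x.1 then
      .X ^ (ord (![.inr e.2, .inl e.1] x.2) - min (ord (.inl e.1)) (ord (.inr e.2))) else 0)

theorem eval_zero_scaledRigidityRow [DecidableEq ι] [DecidableEq κ] {ord : ι ⊕ κ → ℕ}
    (hord : Function.Injective ord) (e : ι × κ) (x : (ι × Fin 2) ⊕ (κ × Fin 2)) :
    (scaledRigidityRow K ord e x).eval 0 =
      if ![lowerEnd ord (.inl ∘ Prod.fst) (.inr ∘ Prod.snd),
          upperEnd ord (.inl ∘ Prod.fst) (.inr ∘ Prod.snd)] (x.elim Prod.snd Prod.snd) e =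
        x.map Prod.fst Prod.fst then 1 else 0 := by
  have hne : ord (.inl e.1) ≠ ord (.inr e.2) := fun h => Sum.inl_ne_inr (hord h)
  rcases x with ⟨v, c⟩ | ⟨v, c⟩ <;> fin_cases c <;> rcases hne.lt_or_gt with h | h <;>
    simp only [scaledRigidityRow, Sum.elim_inl, Sum.elim_inr] <;> split_ifs <;>
    simp_all [lowerEnd, upperEnd, Nat.sub_eq_zero_iff_le, le_of_lt, not_lt_of_gt]

theorem linearIndependent_eval_scaledRigidityRow [DecidableEq ι] [DecidableEq κ] [Finite ι]
    [Finite κ] {ord : ι ⊕ κ → ℕ} (hord : Function.Injective ord) {G : Set (ι × κ)}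
    (hG : IsBipartiteForest (lowerEnd ord (fun e : G => .inl e.1.1) fun e => .inr e.1.2)
      (upperEnd ord (fun e : G => .inl e.1.1) fun e => .inr e.1.2)) :
    LinearIndependent K fun (e : G) x =>
      Polynomial.evalRingHom 0 (scaledRigidityRow K ord e x) := by
  have := Fintype.ofFinite G
  refine Fintype.linearIndependent_iff.2 fun c hc => ?_
  have hsum (x : (ι × Fin 2) ⊕ (κ × Fin 2)) :
      ∑ e : G with ![lowerEnd ord (.inl ∘ Prod.fst) (.inr ∘ Prod.snd),
        upperEnd ord (.inl ∘ Prod.fst) (.inr ∘ Prod.snd)] (x.elim Prod.snd Prod.snd) e.1 =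
          x.map Prod.fst Prod.fst, c e = 0 := by
    rw [Finset.sum_filter]
    refine Eq.trans ?_ (congrFun hc x)
    simp [eval_zero_scaledRigidityRow hord]
  refine congrFun (hG.eq_zero_of_sum_eq_zero ?_ ?_) <;> rintro (v | v)
  · convert! hsum (.inl (v, 0))
  · convert! hsum (.inr (v, 0))
  · convert! hsum (.inl (v, 1))
  · convert! hsum (.inr (v, 1))

theorem birigidIndep_one_pow_of_isBipartiteForest [DecidableEq ι] [DecidableEq κ]
    [Finite ι] [Finite κ] {F L : Type*} [Field F] [Field L] {ψ : Polynomial F →+* L}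
    (hψ : Function.Injective ψ) {ord : ι ⊕ κ → ℕ} (hord : Function.Injective ord) {G : Set (ι × κ)}
    (hG : IsBipartiteForest (lowerEnd ord (fun e : G => .inl e.1.1) fun e => .inr e.1.2)
      (upperEnd ord (fun e : G => .inl e.1.1) fun e => .inr e.1.2)) :
    BirigidIndep (Matrix.of fun i => ![1, ψ .X ^ ord (.inl i)])
      (Matrix.of fun j => ![1, ψ .X ^ ord (.inr j)]) G := by
  have hX : ψ .X ≠ 0 := (map_ne_zero_iff ψ hψ).2 Polynomial.X_ne_zero
  let low (e : G) : ℕ := min (ord (.inl e.1.1)) (ord (.inr e.1.2))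
  let D : ((ι × Fin 2) ⊕ (κ × Fin 2) → L) →ₗ[L] ((ι × Fin 2) ⊕ (κ × Fin 2) → L) :=
    LinearMap.mulLeft L (Sum.elim (fun x => ![ψ .X ^ ord (.inl x.1), 1] x.2)
      fun x => ![ψ .X ^ ord (.inr x.1), 1] x.2)
  have hind := (linearIndependent_of_specialization hψ (Polynomial.evalRingHom 0)
    (fun e : G => scaledRigidityRow F ord e)
    (linearIndependent_eval_scaledRigidityRow hord hG)).units_smul
    fun e => Units.mk0 (ψ .X ^ low e) (pow_ne_zero _ hX)
  refine LinearIndependent.of_comp D ?_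
  convert! hind using 1
  ext ⟨⟨i, j⟩, he⟩ x
  have hlow {v : ι ⊕ κ} (hv : low ⟨(i, j), he⟩ ≤ ord v) :
      ψ .X ^ low ⟨(i, j), he⟩ * ψ (.X ^ (ord v - low ⟨(i, j), he⟩)) = ψ .X ^ ord v := by
    rw [map_pow, ← pow_add, add_tsub_cancel_of_le hv]
  have hi := hlow (v := .inl i) (min_le_left _ _)
  have hj := hlow (v := .inr j) (min_le_right _ _)
  rcases x with ⟨v, c⟩ | ⟨v, c⟩ <;> fin_cases c <;>
    simp only [low, Function.comp_apply, D, rigidityRow, scaledRigidityRow, LinearMap.mulLeft_apply,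
      Pi.mul_apply, Pi.smul_apply', Units.smul_def, Units.val_mk0, Sum.elim_inl,
      Sum.elim_inr] at hi hj ⊢ <;>
    split_ifs <;> simp_all

theorem exists_isBipartiteForest_of_algebraicIndependent {k : Type*} [Field k] [Algebra k K]
    [Finite ι] [Finite κ] [Nonempty ι] {x : (ι × Fin 2) ⊕ (κ × Fin 2) → K} (hx : ∀ v, x v ≠ 0)
    {G : Set (ι × κ)}
    (h : AlgebraicIndependent k fun e : G => ∑ c, x (.inl (e.1.1, c)) * x (.inr (e.1.2, c))) :
    ∃ ord : ι ⊕ κ → ℕ, Function.Injective ord ∧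
      IsBipartiteForest (lowerEnd ord (fun e : G => .inl e.1.1) fun e => .inr e.1.2)
        (upperEnd ord (fun e : G => .inl e.1.1) fun e => .inr e.1.2) := by
  have := Fintype.ofFinite G
  let lead : ι ⊕ κ → K := Sum.elim (fun i => x (.inl (i, 1))) fun j => x (.inr (j, 0))
  let root : ι ⊕ κ → K := Sum.elim (fun i => x (.inl (i, 0)) / x (.inl (i, 1)))
    fun j => -(x (.inr (j, 1)) / x (.inr (j, 0)))
  have hfactor (e : G) : ∑ c, x (.inl (e.1.1, c)) * x (.inr (e.1.2, c)) =
      lead (.inl e.1.1) * lead (.inr e.1.2) * (root (.inl e.1.1) - root (.inr e.1.2)) := by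
    have hi := hx (.inl (e.1.1, 1))
    have hj := hx (.inr (e.1.2, 0))
    simp only [lead, root, Sum.elim_inl, Sum.elim_inr, Fin.sum_univ_two]
    field_simp
    ring
  simp_rw [hfactor] at h
  obtain ⟨B, hB⟩ := exists_valuationSubring_of_algebraicIndependent h
  refine exists_isBipartiteForest (d := fun v w => B.valuation (root v - root w))
    (γ := fun v => B.valuation (lead v)) (fun e => Sum.inl_ne_inr)
    (fun v w => Valuation.map_sub_swap _ _ _) (fun u v w => ?_) (fun e => ?_) (fun v => ?_)
    fun c hc => hB c ?_
  · simpa only [sub_add_sub_cancel] using B.valuation.map_add (root u - root v) (root v - root w)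
  · exact (map_ne_zero _).2 (right_ne_zero_of_mul (h.ne_zero e))
  · rcases v with i | j
    · exact (map_ne_zero _).2 (hx _)
    · exact (map_ne_zero _).2 (hx _)
  · simpa only [map_prod, map_zpow₀, map_mul] using hc

theorem exists_isBipartiteForest_of_birigidIndep (k : Type*) {L : Type*} [Field k] [CharZero k]
    [Field L] [Algebra k L] [DecidableEq ι] [DecidableEq κ] [Finite ι] [Finite κ] [Nonempty ι]
    {P : Matrix ι (Fin 2) L} {Q : Matrix κ (Fin 2) L} {G : Set (ι × κ)}
    (h : BirigidIndep P Q G) :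
    ∃ ord : ι ⊕ κ → ℕ, Function.Injective ord ∧
      IsBipartiteForest (lowerEnd ord (fun e : G => .inl e.1.1) fun e => .inr e.1.2)
        (upperEnd ord (fun e : G => .inl e.1.1) fun e => .inr e.1.2) := by
  let R := MvPolynomial ((ι × Fin 2) ⊕ (κ × Fin 2)) k
  refine exists_isBipartiteForest_of_algebraicIndependent (k := k)
    (x := fun v => algebraMap R (FractionRing R) (.X v)) (fun v => ?_) ?_
  · exact (FaithfulSMul.algebraMap_eq_zero_iff R (FractionRing R)).not.2 (MvPolynomial.X_ne_zero v)
  · simpa only [← map_mul, ← map_sum] using!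
      h.algebraicIndependent.map' (f := IsScalarTower.toAlgHom k R (FractionRing R))
        (IsFractionRing.injective _ _)

theorem tensorIndep_of_rat_of_corank_two {F : Type*} [Field F] {s r : ℕ}
    {E : Set (Fin (s + 2) × Fin (r + 2))} (hE : TensorIndep ℚ (s + 2) (r + 2) s r E) :
    TensorIndep F (s + 2) (r + 2) s r E := by
  obtain ⟨P, Q, G, -, -, hG, hEG, hcard⟩ := exists_birigidIndep_of_tensorIndep hE
  obtain ⟨ord, hord, hforest⟩ := exists_isBipartiteForest_of_birigidIndep (k := ℚ) hG
  let L := FractionRing (Polynomial F)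
  let ψ : Polynomial F →+* L := algebraMap _ _
  have hψ : Function.Injective ψ := IsFractionRing.injective _ _
  have hpow : Function.Injective fun n : ℕ => ψ .X ^ n := fun a b hab => by
    have hab' : (.X ^ a : Polynomial F) = .X ^ b := hψ (by simpa only [map_pow] using hab)
    simpa using congrArg Polynomial.natDegree hab'
  refine LinearIndepOn.mono (tensorIndep_compl_of_birigidIndep (L := L)
    (mulVec_injective_of_one_self ?_) (mulVec_injective_of_one_self ?_)
    (birigidIndep_one_pow_of_isBipartiteForest hψ hord hforest) hcard) hEG
  · exact hpow.comp (hord.comp Sum.inl_injective)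
  · exact hpow.comp (hord.comp Sum.inr_injective)

end CorankTwo

section GeneralPosition

variable {K ι V : Type*} [Field K] [AddCommGroup V] [Module K V] {u : ι → V} {A B : Finset ι}

theorem InGeneralPosition.finrank_span_image (hu : InGeneralPosition K u)
    (hA : A.card ≤ Module.finrank K V) : Module.finrank K (Submodule.span K (u '' A)) = A.card := by
  rw [Set.image_eq_range, finrank_span_eq_card (hu A hA)]
  simp

theorem InGeneralPosition.mem_of_mem_span_image (hu : InGeneralPosition K u)
    (hA : A.card < Module.finrank K V) {i : ι} (hi : u i ∈ Submodule.span K (u '' A)) : i ∈ A := by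
  classical
  refine ((hu A hA.le).mem_span_iff.1 hi) ?_
  rw [← Finset.coe_insert]
  exact hu _ ((Finset.card_insert_le _ _).trans hA)

theorem InGeneralPosition.span_image_inf_span_image [FiniteDimensional K V] [DecidableEq ι]
    (hu : InGeneralPosition K u) (hAB : (A ∪ B).card ≤ Module.finrank K V) :
    Submodule.span K (u '' A) ⊓ Submodule.span K (u '' B) =
      Submodule.span K (u '' (A ∩ B : Finset ι)) := by
  have hcard := Finset.card_union_add_card_inter A B
  have hA := Finset.card_le_card (Finset.subset_union_left (s₁ := A) (s₂ := B))
  have hB := Finset.card_le_card (Finset.subset_union_right (s₁ := A) (s₂ := B))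
  have hsup := Submodule.finrank_sup_add_finrank_inf_eq
    (Submodule.span K (u '' A)) (Submodule.span K (u '' B))
  rw [← Submodule.span_union, ← Set.image_union, ← Finset.coe_union, hu.finrank_span_image hAB,
    hu.finrank_span_image (by omega), hu.finrank_span_image (by omega)] at hsup
  refine (Submodule.eq_of_le_of_finrank_eq (le_inf ?_ ?_) ?_).symm
  · exact Submodule.span_mono (Set.image_mono (by simp))
  · exact Submodule.span_mono (Set.image_mono (by simp))
  · rw [hu.finrank_span_image (by omega)]
    omega

theorem finrank_le_finrank_iInf_add_card [FiniteDimensional K V] (T : Finset ι)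
    {W : ι → Submodule K V} (hW : ∀ i ∈ T, Module.finrank K V ≤ Module.finrank K (W i) + 1) :
    Module.finrank K V ≤ Module.finrank K ↥(⨅ i ∈ T, W i) + T.card := by
  classical
  induction T using Finset.induction_on with
  | empty =>
    have htop : ⨅ i ∈ (∅ : Finset ι), W i = ⊤ := by simp
    rw [htop, finrank_top]
    exact Nat.le_add_right _ _
  | insert i T hi ih =>
    have hT := ih fun j hj => hW j (Finset.mem_insert_of_mem hj)
    have hsup := Submodule.finrank_sup_add_finrank_inf_eq (W i) (⨅ j ∈ T, W j)
    have hle := (W i ⊔ ⨅ j ∈ T, W j).finrank_le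
    have := hW i (Finset.mem_insert_self i T)
    rw [Finset.iInf_insert, Finset.card_insert_of_notMem hi]
    omega

/-- No three planes spanned by disjoint pairs of the vectors `u i` share a line. Projectively, three
lines joining disjoint pairs of the points `u i` are never concurrent. -/
def NoConcurrentLines (K : Type*) {ι V : Type*} [Field K] [AddCommGroup V] [Module K V]
    (u : ι → V) : Prop :=
  ∀ ⦃A B C : Finset ι⦄, A.card = 2 → B.card = 2 → C.card = 2 → Disjoint A B → Disjoint A C →
    Disjoint B C → ∀ x ∈ Submodule.span K (u '' A), x ∈ Submodule.span K (u '' B) →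
      x ∈ Submodule.span K (u '' C) → x = 0

theorem InGeneralPosition.disjoint_of_mem_span_image [FiniteDimensional K V]
    (hu : InGeneralPosition K u) (hV : Module.finrank K V = 3) (hA : A.card = 2) (hB : B.card = 2)
    (hAB : A ≠ B) {x : V} (hx : ∀ i, x ∉ K ∙ u i) (hxA : x ∈ Submodule.span K (u '' A))
    (hxB : x ∈ Submodule.span K (u '' B)) : Disjoint A B := by
  classical
  by_contra hdisj
  have hcard := Finset.card_union_add_card_inter A B
  have hpos : 0 < (A ∩ B).card :=
    Finset.card_pos.2 (Finset.not_disjoint_iff_nonempty_inter.1 hdisj)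
  have hlt : A.card < (A ∪ B).card := by
    refine Finset.card_lt_card (Finset.ssubset_iff_subset_ne.2 ⟨Finset.subset_union_left, ?_⟩)
    exact fun h => hAB (Finset.eq_of_subset_of_card_le (Finset.left_eq_union.1 h) (by omega)).symm
  obtain ⟨i, hi⟩ := Finset.card_eq_one.1 (by omega : (A ∩ B).card = 1)
  have hmem : x ∈ Submodule.span K (u '' A) ⊓ Submodule.span K (u '' B) := ⟨hxA, hxB⟩
  rw [hu.span_image_inf_span_image (by omega), hi, Finset.coe_singleton,
    Set.image_singleton] at hmem
  exact hx i hmem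

end GeneralPosition

section Transport

variable {K K' ι V V' : Type*} [Field K] [Field K'] [AddCommGroup V] [Module K V]
  [FiniteDimensional K V] [AddCommGroup V'] [Module K' V'] [FiniteDimensional K' V'] [Finite ι]
  {u : ι → V} {u' : ι → V'}

theorem exists_ne_zero_forall_mem_span_of_notMem_span_singleton (hu : InGeneralPosition K u)
    (hu' : InGeneralPosition K' u') (hc : NoConcurrentLines K u) (hV : Module.finrank K V = 3)
    (hV' : Module.finrank K' V' = 3) {x : V} (hx : x ≠ 0) (hxu : ∀ i, x ∉ K ∙ u i) :
    ∃ y : V', y ≠ 0 ∧ ∀ A : Finset ι, A.card = 2 → x ∈ Submodule.span K (u '' A) →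
      y ∈ Submodule.span K' (u' '' A) := by
  cases nonempty_fintype ι
  classical
  let S : Finset (Finset ι) := {A | A.card = 2 ∧ x ∈ Submodule.span K (u '' A)}
  have hS : S.card ≤ 2 := by
    by_contra! hlt
    obtain ⟨A, hA, B, hB, C, hC, hAB, hAC, hBC⟩ := Finset.two_lt_card.1 hlt
    simp only [S, Finset.mem_filter_univ] at hA hB hC
    have hdisj {A B : Finset ι} (hA : A.card = 2 ∧ x ∈ Submodule.span K (u '' A))
        (hB : B.card = 2 ∧ x ∈ Submodule.span K (u '' B)) (hAB : A ≠ B) : Disjoint A B :=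
      hu.disjoint_of_mem_span_image hV hA.1 hB.1 hAB hxu hA.2 hB.2
    exact hx (hc hA.1 hB.1 hC.1 (hdisj hA hB hAB) (hdisj hA hC hAC) (hdisj hB hC hBC) x
      hA.2 hB.2 hC.2)
  have hinf := finrank_le_finrank_iInf_add_card S
    (W := fun A => Submodule.span K' (u' '' A)) fun A hA => by
      have hA2 := (Finset.mem_filter_univ _ |>.1 hA).1
      rw [hu'.finrank_span_image (by omega)]
      omega
  obtain ⟨y, hy, hy0⟩ := Submodule.exists_mem_ne_zero_of_ne_bot
    (p := ⨅ A ∈ S, Submodule.span K' (u' '' (A : Set ι)))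
    fun h => by rw [h, finrank_bot] at hinf; omega
  simp only [Submodule.mem_iInf] at hy
  exact ⟨y, hy0, fun A hA hxA => hy A ((Finset.mem_filter_univ A).2 ⟨hA, hxA⟩)⟩

theorem exists_ne_zero_forall_mem_span (hu : InGeneralPosition K u)
    (hu' : InGeneralPosition K' u') (hc : NoConcurrentLines K u) (hV : Module.finrank K V = 3)
    (hV' : Module.finrank K' V' = 3) {x : V} (hx : x ≠ 0) :
    ∃ y : V', y ≠ 0 ∧ ∀ A : Finset ι, A.card ≤ 3 → x ∈ Submodule.span K (u '' A) →
      y ∈ Submodule.span K' (u' '' A) := by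
  suffices ∃ y : V', y ≠ 0 ∧ ∀ A : Finset ι, A.card ≤ 2 → x ∈ Submodule.span K (u '' A) →
      y ∈ Submodule.span K' (u' '' A) by
    obtain ⟨y, hy, h⟩ := this
    refine ⟨y, hy, fun A hA hxA => ?_⟩
    rcases hA.lt_or_eq with hA | hA
    · exact h A (by omega) hxA
    · rw [span_image_eq_top_of_inGeneralPosition hu' (hA.trans hV'.symm)]
      trivial
  by_cases hxu : ∃ i, x ∈ K ∙ u i
  · obtain ⟨i, hi⟩ := hxu
    obtain ⟨a, rfl⟩ := Submodule.mem_span_singleton.1 hi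
    have hui : u i ∈ K ∙ a • u i :=
      Submodule.mem_span_singleton.2 ⟨a⁻¹, inv_smul_smul₀ (left_ne_zero_of_smul hx) _⟩
    refine ⟨u' i, (hu' {i} (by simp [hV'])).ne_zero (by simp), fun A hA hxA => ?_⟩
    have hiA : i ∈ A := hu.mem_of_mem_span_image (by omega)
      ((Submodule.span_singleton_le_iff_mem _ _).2 hxA hui)
    exact Submodule.subset_span ⟨i, hiA, rfl⟩
  · push Not at hxu
    obtain ⟨y, hy, h⟩ :=
      exists_ne_zero_forall_mem_span_of_notMem_span_singleton hu hu' hc hV hV' hx hxu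
    refine ⟨y, hy, fun A hA hxA => ?_⟩
    rcases hA.lt_or_eq with hA | hA
    · rcases Nat.lt_succ_iff.1 hA |>.lt_or_eq with hA | hA
      · simp_all [Finset.card_eq_zero]
      · obtain ⟨i, rfl⟩ := Finset.card_eq_one.1 hA
        exact absurd (by simpa using hxA) (hxu i)
    · exact h A hA hxA

theorem exists_finrank_inf_span_image_le_of_hyperplane (hu : InGeneralPosition K u)
    (hu' : InGeneralPosition K' u') (hVV' : Module.finrank K V = Module.finrank K' V')
    {H : Submodule K V} (hH : Module.finrank K H + 1 = Module.finrank K V) :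
    ∃ H' : Submodule K' V', Module.finrank K' H' = Module.finrank K H ∧
      ∀ A : Finset ι, A.card ≤ Module.finrank K V →
        Module.finrank K ↥(Submodule.span K (u '' A) ⊓ H) ≤
          Module.finrank K' ↥(Submodule.span K' (u' '' A) ⊓ H') := by
  cases nonempty_fintype ι
  classical
  let I : Finset ι := {i | u i ∈ H}
  have hspan {A : Finset ι} : Submodule.span K (u '' A) ≤ H ↔ A ⊆ I := by
    rw [Submodule.span_le, Set.image_subset_iff]
    simp [I, Set.subset_def, Finset.subset_iff]
  have hI : I.card < Module.finrank K' V' := by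
    by_contra! hle
    obtain ⟨J, hJ, hJcard⟩ := Finset.exists_subset_card_eq hle
    have hfin := Submodule.finrank_mono (hspan.2 hJ)
    rw [hu.finrank_span_image (by omega)] at hfin
    omega
  obtain ⟨f, hf, hIf⟩ := Submodule.exists_le_ker_of_lt_top (Submodule.span K' (u' '' I)) <|
    lt_top_iff_ne_top.2 fun htop => by
      have hfin := hu'.finrank_span_image hI.le
      rw [htop, finrank_top] at hfin
      omega
  have hker := Module.Dual.finrank_ker_add_one_of_ne_zero hf
  refine ⟨LinearMap.ker f, by omega, fun A hA => ?_⟩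
  have hfin := hu.finrank_span_image hA
  have hfin' := hu'.finrank_span_image (hVV' ▸ hA)
  by_cases hAI : A ⊆ I
  · rw [inf_eq_left.2 (hspan.2 hAI), hfin, inf_eq_left.2, hfin']
    exact (Submodule.span_mono (Set.image_mono (by simpa using hAI))).trans hIf
  · have hlt := Submodule.finrank_lt_finrank_of_lt (inf_lt_left.2 (mt hspan.1 hAI))
    have hsup := Submodule.finrank_sup_add_finrank_inf_eq
      (Submodule.span K' (u' '' A)) (LinearMap.ker f)
    have hle := (Submodule.span K' (u' '' A) ⊔ LinearMap.ker f).finrank_le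
    omega

theorem exists_finrank_inf_span_image_le_of_line (hu : InGeneralPosition K u)
    (hu' : InGeneralPosition K' u') (hc : NoConcurrentLines K u) (hV : Module.finrank K V = 3)
    (hV' : Module.finrank K' V' = 3) {H : Submodule K V} (hH : Module.finrank K H = 1) :
    ∃ H' : Submodule K' V', Module.finrank K' H' = 1 ∧ ∀ A : Finset ι, A.card ≤ 3 →
      Module.finrank K ↥(Submodule.span K (u '' A) ⊓ H) ≤
        Module.finrank K' ↥(Submodule.span K' (u' '' A) ⊓ H') := by
  obtain ⟨x, hxH, hx⟩ := Submodule.exists_mem_ne_zero_of_ne_bot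
    (Submodule.one_le_finrank_iff.1 hH.ge)
  obtain rfl : K ∙ x = H := Submodule.eq_of_le_of_finrank_eq
    ((Submodule.span_singleton_le_iff_mem _ _).2 hxH) (by rw [hH, finrank_span_singleton hx])
  obtain ⟨y, hy, hA⟩ := exists_ne_zero_forall_mem_span hu hu' hc hV hV' hx
  refine ⟨K' ∙ y, finrank_span_singleton hy, fun A hAcard => ?_⟩
  by_cases hxA : x ∈ Submodule.span K (u '' A)
  · rw [inf_eq_right.2 ((Submodule.span_singleton_le_iff_mem _ _).2 hxA), finrank_span_singleton hx,
      inf_eq_right.2 ((Submodule.span_singleton_le_iff_mem _ _).2 (hA A hAcard hxA)),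
      finrank_span_singleton hy]
  · rw [((Submodule.disjoint_span_singleton' hx).2 hxA).eq_bot, finrank_bot]
    exact Nat.zero_le _

theorem exists_finrank_inf_span_image_le (hu : InGeneralPosition K u)
    (hu' : InGeneralPosition K' u') (hV : Module.finrank K V ≤ 3)
    (hVV' : Module.finrank K V = Module.finrank K' V')
    (hc : Module.finrank K V = 3 → NoConcurrentLines K u) (H : Submodule K V) :
    ∃ H' : Submodule K' V', Module.finrank K' H' = Module.finrank K H ∧
      ∀ A : Finset ι, A.card ≤ Module.finrank K V →
        Module.finrank K ↥(Submodule.span K (u '' A) ⊓ H) ≤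
          Module.finrank K' ↥(Submodule.span K' (u' '' A) ⊓ H') := by
  have hle := H.finrank_le
  obtain h | h | h | ⟨h3, h⟩ : Module.finrank K H = 0 ∨ Module.finrank K H = Module.finrank K V ∨
      Module.finrank K H + 1 = Module.finrank K V ∨
      Module.finrank K V = 3 ∧ Module.finrank K H = 1 := by omega
  · exact ⟨⊥, by rw [h, finrank_bot], fun A _ => by
      rw [Submodule.finrank_eq_zero.1 h, inf_bot_eq, finrank_bot]
      exact Nat.zero_le _⟩
  · refine ⟨⊤, by rw [h, finrank_top, hVV'], fun A hA => ?_⟩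
    rw [inf_top_eq, hu'.finrank_span_image (hVV' ▸ hA), ← hu.finrank_span_image hA]
    exact Submodule.finrank_mono inf_le_left
  · exact exists_finrank_inf_span_image_le_of_hyperplane hu hu' hVV' h
  · rw [h3, h]
    exact exists_finrank_inf_span_image_le_of_line hu hu' (hc h3) h3 (hVV' ▸ h3) h

end Transport

section NoConcurrentLines

variable {K : Type*} [Field K]

/-- A row relation `∑ t, ∑ e, α (t, e) • row (t, e) = 0` of this matrix says that the three vectors
`∑ e, α (t, e) • w (t, e)` with `t : Fin 3` coincide: the two blocks of columns record the
differences of consecutive ones. -/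
def coincidenceMatrix {R σ : Type*} [CommRing R] (w : Fin 3 × Fin 2 → σ → R) :
    Matrix (Fin 3 × Fin 2) (Fin 2 × σ) R :=
  fun t x => (![![1, 0], ![-1, 1], ![0, -1]] t.1 x.1 : ℤ) • w t x.2

theorem map_coincidenceMatrix {R S σ : Type*} [CommRing R] [CommRing S] (f : R →+* S)
    (w : Fin 3 × Fin 2 → σ → R) (t : Fin 3 × Fin 2) (x : Fin 2 × σ) :
    f (coincidenceMatrix w t x) = coincidenceMatrix (fun t k => f (w t k)) t x :=
  map_zsmul f _ _

theorem linearIndependent_coincidenceMatrix_single :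
    LinearIndependent K (coincidenceMatrix fun t : Fin 3 × Fin 2 =>
      (Pi.single (t.1 + t.2.castSucc) 1 : Fin 3 → K)).row := by
  rw [Fintype.linearIndependent_iff]
  intro g hg
  have hcol (c : Fin 2) (k : Fin 3) :
      ∑ t, g t * coincidenceMatrix (fun t => (Pi.single (t.1 + t.2.castSucc) 1 : Fin 3 → K)) t
        (c, k) = 0 := by
    simpa using! congrFun hg (c, k)
  simp only [coincidenceMatrix, Fintype.sum_prod_type, Fin.sum_univ_succ, Pi.single_apply] at hcol
  have h00 : g (0, 0) = 0 := by simpa using hcol 0 0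
  have h21 : g (2, 1) = 0 := by simpa using hcol 1 0
  have h10 : g (1, 0) = 0 := by simpa using hcol 1 1
  have h11 : g (1, 1) = 0 := by simpa using hcol 0 2
  have h01 : g (0, 1) = 0 := by simpa [h10] using hcol 0 1
  have h20 : g (2, 0) = 0 := by simpa [h11] using hcol 1 2
  rintro ⟨t, e⟩
  fin_cases t <;> fin_cases e
  exacts [h00, h01, h10, h11, h20, h21]

theorem linearIndependent_coincidenceMatrix {F : Type*} [Field F] [Algebra F K]
    {w : Fin 3 × Fin 2 → Fin 3 → K}
    (hw : AlgebraicIndependent F fun x : (Fin 3 × Fin 2) × Fin 3 => w x.1 x.2) :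
    LinearIndependent K (coincidenceMatrix w).row := by
  let φ : MvPolynomial ((Fin 3 × Fin 2) × Fin 3) F →+* F :=
    MvPolynomial.eval fun x => (Pi.single (x.1.1 + x.1.2.castSucc) 1 : Fin 3 → F) x.2
  have h := linearIndependent_of_specialization
    (ψ := (MvPolynomial.aeval (R := F) fun x : (Fin 3 × Fin 2) × Fin 3 => w x.1 x.2).toRingHom) hw φ
    (coincidenceMatrix fun t k => MvPolynomial.X (t, k))
    (by simpa only [map_coincidenceMatrix, φ, MvPolynomial.eval_X]
      using! linearIndependent_coincidenceMatrix_single)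
  simpa only [map_coincidenceMatrix, AlgHom.toRingHom_eq_coe, RingHom.coe_coe,
    MvPolynomial.aeval_X] using! h

theorem eq_zero_of_linearIndependent_coincidenceMatrix {σ : Type*} {w : Fin 3 × Fin 2 → σ → K}
    (hw : LinearIndependent K (coincidenceMatrix w).row) {x : σ → K}
    (hx : ∀ t, x ∈ Submodule.span K {w (t, 0), w (t, 1)}) : x = 0 := by
  simp only [Submodule.mem_span_pair] at hx
  choose a b hab using hx
  have hab' (t : Fin 3) (k : σ) : a t * w (t, 0) k + b t * w (t, 1) k = x k := congrFun (hab t) k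
  have h0 := Fintype.linearIndependent_iff.1 hw (fun t => ![a t.1, b t.1] t.2) <| by
    funext ⟨c, k⟩
    fin_cases c <;>
      simp [coincidenceMatrix, Fintype.sum_prod_type, Fin.sum_univ_succ]
    · linear_combination hab' 0 k - hab' 1 k
    · linear_combination hab' 1 k - hab' 2 k
  have ha : a 0 = 0 := h0 (0, 0)
  have hb : b 0 = 0 := h0 (0, 1)
  rw [← hab 0, ha, hb, zero_smul, zero_smul, add_zero]

theorem noConcurrentLines_of_algebraicIndependent {F ι : Type*} [Field F] [Algebra F K]
    {u : ι → Fin 3 → K} (hu : AlgebraicIndependent F fun x : ι × Fin 3 => u x.1 x.2) :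
    NoConcurrentLines K u := by
  classical
  intro A B C hA hB hC hAB hAC hBC x hxA hxB hxC
  obtain ⟨a₀, a₁, ha, rfl⟩ := Finset.card_eq_two.1 hA
  obtain ⟨b₀, b₁, hb, rfl⟩ := Finset.card_eq_two.1 hB
  obtain ⟨c₀, c₁, hc, rfl⟩ := Finset.card_eq_two.1 hC
  let q (t : Fin 3 × Fin 2) : ι := ![![a₀, a₁], ![b₀, b₁], ![c₀, c₁]] t.1 t.2
  have hq : Function.Injective q := by
    simp only [Finset.disjoint_insert_left, Finset.disjoint_singleton_left, Finset.mem_insert,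
      Finset.mem_singleton, not_or] at hAB hAC hBC
    rintro ⟨t, e⟩ ⟨t', e'⟩ h
    fin_cases t <;> fin_cases e <;> fin_cases t' <;> fin_cases e' <;> simp_all [q]
  refine eq_zero_of_linearIndependent_coincidenceMatrix (w := fun t => u (q t))
    (linearIndependent_coincidenceMatrix (F := F)
      (hu.comp (Prod.map q id) (hq.prodMap Function.injective_id))) fun t => ?_
  simp only [Finset.coe_pair, Set.image_pair] at hxA hxB hxC
  fin_cases t
  exacts [hxA, hxB, hxC]

theorem noConcurrentLines_genericLeft (F : Type*) [Field F] (m n r : ℕ) :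
    NoConcurrentLines (TField F m n 3 r) (genericLeft F m n 3 r).row :=
  noConcurrentLines_of_algebraicIndependent <|
    (algebraicIndependent_algebraMap_X F m n 3 r).comp _ Sum.inl_injective

end NoConcurrentLines

section RankPerturbation

theorem exists_ne_zero_det_add_smul_ne_zero {ι K : Type*} [Field K] [Infinite K] [Fintype ι]
    [DecidableEq ι] {A : Matrix ι ι K} (B : Matrix ι ι K) (hA : A.det ≠ 0) :
    ∃ t : K, t ≠ 0 ∧ (A + t • B).det ≠ 0 := by
  let M : Matrix ι ι (Polynomial K) := A.map Polynomial.C + (Polynomial.X : Polynomial K) •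
    B.map Polynomial.C
  have heval (t : K) : M.det.eval t = (A + t • B).det := by
    rw [← Polynomial.coe_evalRingHom, RingHom.map_det]
    congr 1
    ext i j
    simpa [M] using mul_comm _ _
  have hM : M.det ≠ 0 := fun h => hA <| by
    rw [← add_zero A, ← zero_smul K B, ← heval, h, Polynomial.eval_zero]
  obtain ⟨t, ht⟩ : ∃ t : K, (Polynomial.X * M.det).eval t ≠ 0 := by
    by_contra! h
    exact mul_ne_zero Polynomial.X_ne_zero hM (Polynomial.funext fun t => by simpa using h t)
  rw [Polynomial.eval_mul, Polynomial.eval_X, heval] at ht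
  exact ⟨t, left_ne_zero_of_mul ht, right_ne_zero_of_mul ht⟩

variable {K V W : Type*} [Field K] [Infinite K] [AddCommGroup V] [Module K V] [AddCommGroup W]
  [Module K W] [FiniteDimensional K W]

theorem exists_ne_zero_linearIndependent_add_smul {ι : Type*} {a : ι → W}
    (b : ι → W) (ha : LinearIndependent K a) :
    ∃ t : K, t ≠ 0 ∧ LinearIndependent K (a + t • b) := by
  classical
  have := ha.finite
  cases nonempty_fintype ι
  let e := (Module.finBasis K W).equivFun
  obtain ⟨g, hg⟩ := exists_det_submatrix_ne_zero (A := Matrix.of (e ∘ a)) <|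
    ha.map' e.toLinearMap e.ker
  obtain ⟨t, ht, hdet⟩ := exists_ne_zero_det_add_smul_ne_zero
    ((Matrix.of (e ∘ b)).submatrix id g) hg
  refine ⟨t, ht, LinearIndependent.of_comp (LinearMap.funLeft K K g ∘ₗ e.toLinearMap) ?_⟩
  convert! Matrix.linearIndependent_rows_of_det_ne_zero hdet using 1
  ext i j
  simp

-- A vector `g x` outside `S.map f` would still be independent of a basis of `S.map f` after a small
-- perturbation of `f`, and it is `t⁻¹ • (f + t • g) x`, so the rank would go up.
theorem map_inf_ker_le_map_of_forall_finrank_map_le {f g : V →ₗ[K] W} {S : Submodule K V}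
    (h : ∀ t : K, Module.finrank K (S.map (f + t • g)) ≤ Module.finrank K (S.map f)) :
    (S ⊓ LinearMap.ker f).map g ≤ S.map f := by
  rintro _ ⟨x, ⟨hxS, hx⟩, rfl⟩
  by_contra hgx
  let b := Module.finBasis K (S.map f)
  choose y hyS hy using fun i => (b i).2
  have hfy : f ∘ y = Subtype.val ∘ b := funext hy
  have hspan : Submodule.span K (Set.range (f ∘ y)) = S.map f := by
    rw [hfy, Set.range_comp, ← Submodule.coe_subtype, Submodule.span_image, b.span_eq,
      Submodule.map_subtype_top]
  let a₀ : Fin (_ + 1) → W := Fin.cons (g x) (f ∘ y)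
  let a₁ : Fin (_ + 1) → W := Fin.cons 0 (g ∘ y)
  have hli : LinearIndependent K a₀ := linearIndependent_finCons.2
    ⟨hfy ▸ b.linearIndependent.map' _ (Submodule.ker_subtype _), by rwa [hspan]⟩
  obtain ⟨t, ht, hlit⟩ := exists_ne_zero_linearIndependent_add_smul a₁ hli
  have hmem (i) : (a₀ + t • a₁) i ∈ S.map (f + t • g) := by
    cases i using Fin.cases with
    | zero => exact ⟨t⁻¹ • x, S.smul_mem _ hxS, by simp [LinearMap.mem_ker.1 hx, ht, a₀, a₁]⟩
    | succ i => exact ⟨y i, hyS i, by simp [a₀, a₁]⟩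
  have hcard := (LinearIndependent.of_comp (v := fun i => (⟨_, hmem i⟩ : S.map (f + t • g)))
    (Submodule.subtype _) hlit).fintype_card_le_finrank
  rw [Fintype.card_fin] at hcard
  exact (h t).not_gt hcard

end RankPerturbation

section TensorSum

theorem mem_span_image_iff_exists_sum_smul {ι K X : Type*} [Fintype ι] [Field K] [AddCommGroup X]
    [Module K X] {u : ι → X} {s : Set ι} {x : X} :
    x ∈ Submodule.span K (u '' s) ↔ ∃ c : ι → K, (∀ i ∉ s, c i = 0) ∧ ∑ i, c i • u i = x := by
  have hsum (c : ι →₀ K) : Finsupp.linearCombination K u c = ∑ i, c i • u i :=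
    Finsupp.sum_fintype _ _ fun i => zero_smul K (u i)
  rw [Finsupp.mem_span_image_iff_linearCombination]
  constructor
  · rintro ⟨c, hc, rfl⟩
    exact ⟨c, fun i hi => Finsupp.notMem_support_iff.1 fun h => hi (hc h), (hsum c).symm⟩
  · rintro ⟨c, hc, rfl⟩
    refine ⟨Finsupp.equivFunOnFinite.symm c, fun i hi => ?_, hsum _⟩
    by_contra his
    exact Finsupp.mem_support_iff.1 hi (hc i his)

variable {K ι κ σ τ X : Type*} [Field K] [AddCommGroup X] [Module K X]

theorem finrank_pi_univ [Fintype κ] [FiniteDimensional K X] (U : κ → Submodule K X) :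
    Module.finrank K (Submodule.pi Set.univ U) = ∑ j, Module.finrank K (U j) := by
  have hrange : LinearMap.range (LinearMap.piMap fun j => (U j).subtype) =
      Submodule.pi Set.univ U := by
    ext z
    constructor
    · rintro ⟨y, rfl⟩ j -
      exact (y j).2
    · exact fun hz => ⟨fun j => ⟨z j, hz j trivial⟩, rfl⟩
  rw [← hrange, LinearMap.finrank_range_of_inj, Module.finrank_pi_fintype]
  exact fun y z h => funext fun j => Subtype.ext (congrFun h j)

/-- The span of the vectors in column `j` of the pattern `E`. -/
def columnSpan (u : ι → X) (E : Set (ι × κ)) (j : κ) : Submodule K X :=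
  Submodule.span K (u '' {i | (i, j) ∈ E})

theorem mem_pi_columnSpan_iff [Fintype ι] {u : ι → X} {E : Set (ι × κ)}
    {z : κ → X} :
    z ∈ Submodule.pi Set.univ (columnSpan (K := K) u E) ↔ ∃ c : ι × κ → K,
      (∀ e ∉ E, c e = 0) ∧ z = fun j => ∑ i, c (i, j) • u i := by
  simp only [Submodule.mem_pi, Set.mem_univ, forall_const, columnSpan,
    mem_span_image_iff_exists_sum_smul]
  constructor
  · intro h
    choose c hc hcz using h
    exact ⟨fun e => c e.2 e.1, fun e => hc e.2 e.1, funext fun j => (hcz j).symm⟩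
  · rintro ⟨c, hc, rfl⟩ j
    exact ⟨fun i => c (i, j), fun i => hc (i, j), rfl⟩

/-- The pure tensor `w ⊗ y` of `K^τ ⊗ X`, which is encoded as `τ → X`. -/
def pureTensor : (τ → K) →ₗ[K] X →ₗ[K] τ → X :=
  LinearMap.mk₂ K (fun w y l => w l • y) (fun _ _ _ => funext fun _ => add_smul _ _ _)
    (fun _ _ _ => funext fun _ => mul_smul _ _ _) (fun _ _ _ => funext fun _ => smul_add _ _ _)
    (fun _ _ _ => funext fun _ => smul_comm _ _ _)

variable [Fintype κ]

/-- For vectors `v j` of `K^τ`, the map `z ↦ ∑ j, v j ⊗ z j` from `X^κ` to `K^τ ⊗ X`. -/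
def tensorSum : (κ → τ → K) →ₗ[K] (κ → X) →ₗ[K] τ → X :=
  ∑ j, pureTensor.compl₁₂ (LinearMap.proj j) (LinearMap.proj j)

theorem tensorSum_apply (v : κ → τ → K) (z : κ → X) :
    tensorSum v z = ∑ j, pureTensor (v j) (z j) := by
  simp [tensorSum]

theorem tensorSum_single_right [DecidableEq κ] (v : κ → τ → K) (j : κ) (y : X) :
    tensorSum v (Pi.single j y) = pureTensor (v j) y := by
  rw [tensorSum_apply, Fintype.sum_eq_single j fun k hk => by rw [Pi.single_eq_of_ne hk, map_zero],
    Pi.single_eq_same]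

theorem tensorSum_single_left [DecidableEq κ] (j : κ) (w : τ → K) (z : κ → X) :
    tensorSum (Pi.single j w) z = pureTensor w (z j) := by
  rw [tensorSum_apply, Fintype.sum_eq_single j fun k hk => by
    rw [Pi.single_eq_of_ne hk, map_zero, LinearMap.zero_apply], Pi.single_eq_same]

variable {u : Matrix ι σ K} {v : Matrix κ τ K} {E : Set (ι × κ)}

theorem sum_smul_row_kronecker_apply [Fintype ι] (c : ι × κ → K) (k : σ) (l : τ) :
    (∑ e, c e • (u ⊗ₖ v).row e) (k, l) =
      tensorSum v.row (fun j => ∑ i, c (i, j) • u.row i) l k := by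
  rw [tensorSum_apply, Fintype.sum_prod_type_right]
  simp only [Finset.sum_apply]
  refine Finset.sum_congr rfl fun j _ => ?_
  change _ = v j l * (∑ i, c (i, j) • u.row i) k
  rw [Finset.sum_apply, Finset.mul_sum]
  refine Finset.sum_congr rfl fun i _ => ?_
  change c (i, j) * (u i k * v j l) = v j l * (c (i, j) * u i k)
  ring

theorem linearIndepOn_kronecker_row_iff_disjoint [Finite ι] :
    LinearIndepOn K (u ⊗ₖ v).row E ↔ (∀ j, LinearIndepOn K u.row {i | (i, j) ∈ E}) ∧
      Disjoint (Submodule.pi Set.univ (columnSpan u.row E)) (LinearMap.ker (tensorSum v.row)) := by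
  classical
  cases nonempty_fintype ι
  have hsum (c : ι × κ → K) : ∑ e, c e • (u ⊗ₖ v).row e = 0 ↔
      tensorSum v.row (fun j => ∑ i, c (i, j) • u.row i) = 0 := by
    simp only [funext_iff, Prod.forall, sum_smul_row_kronecker_apply, Pi.zero_apply]
    exact forall_comm
  simp only [linearIndepOn_iff_forall_sum_smul, hsum, Submodule.disjoint_def,
    mem_pi_columnSpan_iff, LinearMap.mem_ker]
  constructor
  · refine fun h => ⟨fun j d hd h0 => ?_, ?_⟩
    · have hc := h (fun e => if e.2 = j then d e.1 else 0)
        (fun e he => ite_eq_right_iff.2 fun hej => hd e.1 (hej ▸ he)) <| by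
          convert (tensorSum v.row).map_zero with j'
          by_cases hj : j' = j <;> simp [hj, h0]
      exact funext fun i => by simpa using congrFun hc (i, j)
    · rintro _ ⟨c, hc, rfl⟩ h0
      simp only [h c hc h0, Pi.zero_apply, zero_smul, Finset.sum_const_zero]
      rfl
  · rintro ⟨hcol, hdisj⟩ c hc h0
    have hz := hdisj _ ⟨c, hc, rfl⟩ h0
    exact funext fun e => congrFun
      (hcol e.2 (fun i => c (i, e.2)) (fun i hi => hc _ hi) (congrFun hz e.2)) e.1

theorem finrank_span_image_row_kronecker [Finite ι] :
    Module.finrank K (Submodule.span K ((u ⊗ₖ v).row '' E)) = Module.finrank K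
      ((Submodule.pi Set.univ (columnSpan u.row E)).map (tensorSum v.row)) := by
  cases nonempty_fintype ι
  let f : (τ → σ → K) ≃ₗ[K] σ × τ → K := (LinearEquiv.curry K K τ σ).symm ≪≫ₗ
    LinearEquiv.funCongrLeft K K (Equiv.prodComm σ τ)
  have hf (c : ι × κ → K) : f (tensorSum v.row fun j => ∑ i, c (i, j) • u.row i) =
      ∑ e, c e • (u ⊗ₖ v).row e :=
    funext fun x => (sum_smul_row_kronecker_apply c x.1 x.2).symm
  suffices hspan : Submodule.span K ((u ⊗ₖ v).row '' E) =
      ((Submodule.pi Set.univ (columnSpan u.row E)).map (tensorSum v.row)).map f.toLinearMap by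
    rw [hspan]
    exact f.finrank_map_eq _
  ext x
  simp only [mem_span_image_iff_exists_sum_smul, Submodule.mem_map, mem_pi_columnSpan_iff]
  constructor
  · rintro ⟨c, hc, rfl⟩
    exact ⟨_, ⟨_, ⟨c, hc, rfl⟩, rfl⟩, hf c⟩
  · rintro ⟨_, ⟨_, ⟨c, hc, rfl⟩, rfl⟩, rfl⟩
    exact ⟨c, hc, (hf c).symm⟩

end TensorSum

section ViolatingSubspace

variable {K κ τ X : Type*} [Field K] [Fintype κ] [AddCommGroup X] [Module K X]
  {v : κ → τ → K} {U : κ → Submodule K X} {V : Submodule K X}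

theorem map_tensorSum_le_pi (hU : ∀ j, U j ≤ V) :
    (Submodule.pi Set.univ U).map (tensorSum v) ≤ Submodule.pi Set.univ fun _ => V := by
  rintro _ ⟨z, hz, rfl⟩ l -
  rw [tensorSum_apply, Finset.sum_apply]
  exact V.sum_mem fun j _ => V.smul_mem _ (hU j (hz j trivial))

theorem comp_tensorSum {Y : Type*} [AddCommGroup Y] [Module K Y] (f : X →ₗ[K] Y) (z : κ → X) :
    f ∘ tensorSum v z = tensorSum v (f ∘ z) := by
  ext l
  simp [tensorSum_apply, pureTensor]

theorem eq_zero_of_tensorSum_eq_zero {J : Finset κ} (hv : LinearIndepOn K v J) {z : κ → X}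
    (hz : ∀ j ∉ J, z j = 0) (hker : tensorSum v z = 0) : z = 0 := by
  refine funext fun j => (Module.forall_dual_apply_eq_zero_iff K (z j)).1 fun f => ?_
  refine congrFun (linearIndepOn_iff_forall_sum_smul.1 hv (fun j => f (z j))
    (fun j hj => by rw [hz j hj, map_zero]) (funext fun l => ?_)) j
  have hl := congrArg f (congrFun hker l)
  simpa [tensorSum_apply, pureTensor, mul_comm] using hl

theorem pi_const_le_map_tensorSum_inf {J : Finset κ} (hv : LinearIndepOn K v J)
    (hU : ∀ j ∉ J, U j ≤ V)
    (hle : Submodule.pi Set.univ (fun _ => V) ≤ (Submodule.pi Set.univ U).map (tensorSum v)) :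
    Submodule.pi Set.univ (fun _ => V) ≤
      (Submodule.pi Set.univ fun j => U j ⊓ V).map (tensorSum v) := by
  intro y hy
  obtain ⟨z, hz, rfl⟩ := hle hy
  have hzV : V.mkQ ∘ z = 0 := eq_zero_of_tensorSum_eq_zero hv
    (fun j hj => (Submodule.Quotient.mk_eq_zero V).2 (hU j hj (hz j trivial))) <| by
      ext l
      rw [← comp_tensorSum]
      exact (Submodule.Quotient.mk_eq_zero V).2 (hy l trivial)
  exact ⟨z, fun j _ => ⟨hz j trivial, (Submodule.Quotient.mk_eq_zero V).1 (congrFun hzV j)⟩, rfl⟩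

theorem pi_const_le_of_forall_pureTensor_mem [Finite τ] {S : Submodule K (τ → X)}
    (h : ∀ w : τ → K, ∀ y ∈ V, pureTensor w y ∈ S) : Submodule.pi Set.univ (fun _ => V) ≤ S := by
  classical
  cases nonempty_fintype τ
  intro z hz
  have hsum : z = ∑ l, pureTensor (Pi.single l (1 : K)) (z l) := by
    ext l
    simp [pureTensor, Finset.sum_apply, Pi.single_apply, ite_smul]
  rw [hsum]
  exact S.sum_mem fun l _ => h _ _ (hz l trivial)

theorem pi_span_le_of_forall_pureTensor_mem [Finite τ] {S : Submodule K (τ → X)} {s : Set X}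
    (h : ∀ w : τ → K, ∀ y ∈ s, pureTensor w y ∈ S) :
    Submodule.pi Set.univ (fun _ => Submodule.span K s) ≤ S :=
  pi_const_le_of_forall_pureTensor_mem fun w _ hy =>
    Submodule.span_le (p := S.comap (pureTensor w)).2 (h w) hy

theorem pi_top_le_map_tensorSum [Finite τ] {J : Set κ} (hv : Submodule.span K (v '' J) = ⊤)
    (hU : ∀ j ∈ J, V ⊔ U j = ⊤)
    (hle : Submodule.pi Set.univ (fun _ => V) ≤ (Submodule.pi Set.univ U).map (tensorSum v)) :
    Submodule.pi Set.univ (fun _ => ⊤) ≤ (Submodule.pi Set.univ U).map (tensorSum v) := by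
  classical
  refine pi_const_le_of_forall_pureTensor_mem fun w y _ => ?_
  have hspan : Submodule.span K (v '' J) ≤
      ((Submodule.pi Set.univ U).map (tensorSum v)).comap (pureTensor.flip y) := by
    rw [Submodule.span_le]
    rintro _ ⟨j, hj, rfl⟩
    obtain ⟨a, ha, b, hb, rfl⟩ := Submodule.mem_sup.1 ((hU j hj).ge (Submodule.mem_top (x := y)))
    change pureTensor (v j) (a + b) ∈ (Submodule.pi Set.univ U).map (tensorSum v)
    rw [map_add]
    refine add_mem (hle fun l _ => V.smul_mem _ ha) ⟨Pi.single j b, fun k _ => ?_,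
      tensorSum_single_right v j b⟩
    obtain rfl | hk := eq_or_ne k j
    · rwa [Pi.single_eq_same]
    · rw [Pi.single_eq_of_ne hk]
      exact zero_mem _
  exact hspan (hv.ge Submodule.mem_top)

variable [Fintype τ]

theorem sum_finrank_inf_le_of_disjoint [FiniteDimensional K X]
    (h : Disjoint (Submodule.pi Set.univ U) (LinearMap.ker (tensorSum v))) :
    ∑ j, Module.finrank K ↥(U j ⊓ V) ≤ Fintype.card τ * Module.finrank K V := by
  have hle : Submodule.pi Set.univ (fun j => U j ⊓ V) ≤ Submodule.pi Set.univ U :=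
    fun z hz j _ => (hz j trivial).1
  have hker := finrank_map_add_finrank_inf_ker (tensorSum v)
    (Submodule.pi Set.univ fun j => U j ⊓ V)
  have hmap := Submodule.finrank_mono <|
    map_tensorSum_le_pi (v := v) fun j => inf_le_right (a := U j) (b := V)
  rw [(h.mono_left hle).eq_bot, finrank_bot, finrank_pi_univ] at hker
  rw [finrank_pi_univ, Finset.sum_const, Finset.card_univ, smul_eq_mul] at hmap
  omega

theorem card_mul_finrank_lt_sum_finrank_inf [FiniteDimensional K X] {x : κ → X}
    (hx0 : x ≠ 0) (hx : x ∈ Submodule.pi Set.univ fun j => U j ⊓ V) (hker : tensorSum v x = 0)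
    (hle : Submodule.pi Set.univ (fun _ => V) ≤
      (Submodule.pi Set.univ fun j => U j ⊓ V).map (tensorSum v)) :
    Fintype.card τ * Module.finrank K V < ∑ j, Module.finrank K ↥(U j ⊓ V) := by
  have hsum := finrank_map_add_finrank_inf_ker (tensorSum v)
    (Submodule.pi Set.univ fun j => U j ⊓ V)
  have hmap := Submodule.finrank_mono hle
  have hpos : 0 < Module.finrank K ↥((Submodule.pi Set.univ fun j => U j ⊓ V) ⊓
      LinearMap.ker (tensorSum v)) :=
    Submodule.one_le_finrank_iff.2 (Submodule.ne_bot_iff _ |>.2 ⟨x, ⟨hx, hker⟩, hx0⟩)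
  rw [finrank_pi_univ, Finset.sum_const, Finset.card_univ, smul_eq_mul] at hmap
  rw [finrank_pi_univ] at hsum
  omega

variable [FiniteDimensional K X] {x : κ → X}

theorem card_mul_finrank_lt_sum_finrank_inf_of_finrank_eq_one (hv : InGeneralPosition K v)
    (hV : Module.finrank K V = 1) (hx0 : x ≠ 0)
    (hx : x ∈ Submodule.pi Set.univ fun j => U j ⊓ V) (hker : tensorSum v x = 0) :
    Fintype.card τ * Module.finrank K V < ∑ j, Module.finrank K ↥(U j ⊓ V) := by
  classical
  let J : Finset κ := {j | x j ≠ 0}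
  have hJ : Fintype.card τ < J.card := by
    by_contra! hle
    exact hx0 (eq_zero_of_tensorSum_eq_zero (hv J (by simpa using hle))
      (fun j hj => by simpa [J] using hj) hker)
  calc Fintype.card τ * Module.finrank K V < ∑ j ∈ J, 1 := by simpa [hV] using hJ
    _ ≤ ∑ j ∈ J, Module.finrank K ↥(U j ⊓ V) := Finset.sum_le_sum fun j hj =>
        Submodule.one_le_finrank_iff.2 <| (Submodule.ne_bot_iff _).2
          ⟨x j, hx j trivial, (Finset.mem_filter_univ j).1 hj⟩
    _ ≤ ∑ j, Module.finrank K ↥(U j ⊓ V) :=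
        Finset.sum_le_univ_sum_of_nonneg fun _ => Nat.zero_le _

theorem exists_card_mul_finrank_lt_sum_finrank_inf (hX : Module.finrank K X ≤ 3)
    (hv : InGeneralPosition K v) (hx0 : x ≠ 0) (hx : x ∈ Submodule.pi Set.univ U)
    (hker : tensorSum v x = 0)
    (hS : ∀ j (w : τ → K), pureTensor w (x j) ∈ (Submodule.pi Set.univ U).map (tensorSum v)) :
    ∃ V : Submodule K X,
      Fintype.card τ * Module.finrank K V < ∑ j, Module.finrank K ↥(U j ⊓ V) := by
  classical
  let V : Submodule K X := Submodule.span K (Set.range x)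
  have hxV : x ∈ Submodule.pi Set.univ fun j => U j ⊓ V :=
    fun j _ => ⟨hx j trivial, Submodule.subset_span ⟨j, rfl⟩⟩
  have hV0 : Module.finrank K V ≠ 0 := fun h => hx0 <| funext fun j =>
    (Submodule.mem_bot K).1 (Submodule.finrank_eq_zero.1 h ▸ (hxV j trivial).2)
  have hle : Submodule.pi Set.univ (fun _ => V) ≤ (Submodule.pi Set.univ U).map (tensorSum v) :=
    pi_span_le_of_forall_pureTensor_mem fun w => Set.forall_mem_range.2 fun j => hS j w
  let J : Finset κ := {j | ¬U j ≤ V}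
  obtain hJ | hJ := le_or_gt J.card (Fintype.card τ)
  · exact ⟨V, card_mul_finrank_lt_sum_finrank_inf hx0 hxV hker <|
      pi_const_le_map_tensorSum_inf (hv J (by simpa using hJ)) (fun j hj => by simpa [J] using hj)
        hle⟩
  obtain ⟨j, hj⟩ : ∃ j, ¬U j ≤ V := by
    simpa [J, Finset.filter_nonempty_iff] using Finset.card_pos.1 (Nat.zero_le _ |>.trans_lt hJ)
  have hlt := Submodule.finrank_lt fun h : V = ⊤ => hj (h ▸ le_top)
  obtain h1 | hhyp : Module.finrank K V = 1 ∨ Module.finrank K V + 1 = Module.finrank K X := by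
    omega
  · exact ⟨V, card_mul_finrank_lt_sum_finrank_inf_of_finrank_eq_one hv h1 hx0 hxV hker⟩
  · obtain ⟨J₀, hJ₀, hcard⟩ := Finset.exists_subset_card_eq hJ.le
    refine ⟨⊤, card_mul_finrank_lt_sum_finrank_inf hx0 (by simpa using hx) hker ?_⟩
    simp only [inf_top_eq]
    refine pi_top_le_map_tensorSum
      (span_image_eq_top_of_inGeneralPosition hv (hcard.trans (by simp))) (fun j hj => ?_) hle
    have hjV := (Finset.mem_filter_univ j).1 (hJ₀ hj)
    have hlt := Submodule.finrank_lt_finrank_of_lt (left_lt_sup.2 hjV)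
    exact Submodule.eq_top_of_finrank_eq (le_antisymm (Submodule.finrank_le _) (by omega))

end ViolatingSubspace

section LeftRankThree

theorem finrank_span_image_le_of_forall_linearIndepOn {K ι V W : Type*} [Field K] [Finite ι]
    [AddCommGroup V] [Module K V] [AddCommGroup W] [Module K W] {w : ι → V} {w' : ι → W}
    {E : Set ι} (h : ∀ B ⊆ E, LinearIndepOn K w' B → LinearIndepOn K w B) :
    Module.finrank K (Submodule.span K (w' '' E)) ≤
      Module.finrank K (Submodule.span K (w '' E)) := by
  cases nonempty_fintype ι
  obtain ⟨B, hBE, -, hspan, hB⟩ :=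
    exists_linearIndepOn_extension (linearIndepOn_empty K w') (Set.empty_subset E)
  have := Module.Finite.span_of_finite K (Set.toFinite (w' '' B))
  have := Module.Finite.span_of_finite K (Set.toFinite (w '' E))
  calc Module.finrank K (Submodule.span K (w' '' E))
    _ ≤ Module.finrank K (Submodule.span K (w' '' B)) :=
      Submodule.finrank_mono (Submodule.span_le.2 hspan)
    _ = Module.finrank K (Submodule.span K (w '' B)) := by
      rw [Set.image_eq_range, Set.image_eq_range, finrank_span_eq_card hB,
        finrank_span_eq_card (h B hBE hB)]
    _ ≤ Module.finrank K (Submodule.span K (w '' E)) :=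
      Submodule.finrank_mono (Submodule.span_mono (Set.image_mono hBE))

theorem exists_sum_finrank_columnSpan_inf_le {K K' ι κ V V' : Type*} [Field K] [Field K']
    [Finite ι] [Fintype κ] [AddCommGroup V] [Module K V] [FiniteDimensional K V]
    [AddCommGroup V'] [Module K' V'] [FiniteDimensional K' V'] {u : ι → V} {u' : ι → V'}
    {E : Set (ι × κ)} (hu : InGeneralPosition K u) (hu' : InGeneralPosition K' u')
    (hV : Module.finrank K V ≤ 3) (hVV' : Module.finrank K V = Module.finrank K' V')
    (hc : Module.finrank K V = 3 → NoConcurrentLines K u)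
    (hE : ∀ j, {i | (i, j) ∈ E}.ncard ≤ Module.finrank K V) (H : Submodule K V) :
    ∃ H' : Submodule K' V', Module.finrank K' H' = Module.finrank K H ∧
      ∑ j, Module.finrank K ↥(columnSpan u E j ⊓ H) ≤
        ∑ j, Module.finrank K' ↥(columnSpan u' E j ⊓ H') := by
  obtain ⟨H', hHH', hle⟩ := exists_finrank_inf_span_image_le hu hu' hV hVV' hc H
  refine ⟨H', hHH', Finset.sum_le_sum fun j _ => ?_⟩
  have hfin := Set.toFinite {i | (i, j) ∈ E}
  have hj := hle hfin.toFinset ((Set.ncard_eq_toFinset_card _ hfin).symm.trans_le (hE j))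
  rwa [hfin.coe_toFinset] at hj

variable {F : Type*} [Field F] {m n s r : ℕ} {E : Set (Fin m × Fin n)}

theorem finrank_map_tensorSum_le_generic (v : Matrix (Fin n) (Fin r) (TField F m n s r)) :
    Module.finrank (TField F m n s r)
        ((Submodule.pi Set.univ (columnSpan (genericLeft F m n s r).row E)).map
          (tensorSum v.row)) ≤
      Module.finrank (TField F m n s r)
        ((Submodule.pi Set.univ (columnSpan (genericLeft F m n s r).row E)).map
          (tensorSum (genericRight F m n s r).row)) := by
  rw [← finrank_span_image_row_kronecker, ← finrank_span_image_row_kronecker]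
  exact finrank_span_image_le_of_forall_linearIndepOn fun B _ hB => tensorIndep_of_linearIndepOn hB

theorem pureTensor_mem_map_tensorSum_generic [Infinite (TField F m n s r)]
    {x : Fin n → Fin s → TField F m n s r}
    (hx : x ∈ Submodule.pi Set.univ
      (columnSpan (K := TField F m n s r) (genericLeft F m n s r).row E))
    (hker : tensorSum (genericRight F m n s r).row x = 0) (j : Fin n)
    (w : Fin r → TField F m n s r) :
    pureTensor w (x j) ∈ (Submodule.pi Set.univ (columnSpan (genericLeft F m n s r).row E)).map
      (tensorSum (genericRight F m n s r).row) := by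
  rw [← tensorSum_single_left]
  refine map_inf_ker_le_map_of_forall_finrank_map_le (fun t => ?_) ⟨x, ⟨hx, hker⟩, rfl⟩
  rw [← map_smul, ← map_add]
  exact finrank_map_tensorSum_le_generic _

theorem exists_mul_finrank_lt_sum_finrank_columnSpan_inf (hs : s ≤ 3)
    (hE : ¬Disjoint (Submodule.pi Set.univ (columnSpan (genericLeft F m n s r).row E))
      (LinearMap.ker (tensorSum (genericRight F m n s r).row))) :
    ∃ V : Submodule (TField F m n s r) (Fin s → TField F m n s r),
      r * Module.finrank (TField F m n s r) V < ∑ j, Module.finrank (TField F m n s r)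
        ↥(columnSpan (genericLeft F m n s r).row E j ⊓ V) := by
  rw [Submodule.disjoint_def] at hE
  push Not at hE
  obtain ⟨x, hx, hker, hx0⟩ := hE
  have : Infinite (TField F m n s r) := by
    obtain ⟨j, hj⟩ := Function.ne_iff.1 hx0
    obtain ⟨k, -⟩ := Function.ne_iff.1 hj
    obtain ⟨i, -⟩ : {i | (i, j) ∈ E}.Nonempty := by
      by_contra! hne
      exact hj (by simpa [columnSpan, hne] using hx j trivial)
    have : Nonempty ((Fin m × Fin s) ⊕ (Fin n × Fin r)) := ⟨.inl (i, k)⟩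
    exact .of_injective _ (IsFractionRing.injective
      (MvPolynomial ((Fin m × Fin s) ⊕ (Fin n × Fin r)) F) (TField F m n s r))
  simpa using exists_card_mul_finrank_lt_sum_finrank_inf (by simpa using hs)
    (inGeneralPosition_genericRight F m n s r) hx0 hx hker
    (pureTensor_mem_map_tensorSum_generic hx hker)

theorem tensorIndep_of_rat_of_le_three (hs : s ≤ 3) (hE : TensorIndep ℚ m n s r E) :
    TensorIndep F m n s r E := by
  have hF := inGeneralPosition_genericLeft F m n s r
  have hQ := inGeneralPosition_genericLeft ℚ m n s r
  have hcrit := linearIndepOn_kronecker_row_iff_disjoint (u := genericLeft ℚ m n s r)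
    (v := genericRight ℚ m n s r) (E := E)
  obtain ⟨hcolQ, hdisjQ⟩ := hcrit.1 hE
  have hcard (j) : {i | (i, j) ∈ E}.ncard ≤ s := by
    simpa using hQ.linearIndepOn_iff.1 (hcolQ j)
  refine (linearIndepOn_kronecker_row_iff_disjoint (u := genericLeft F m n s r)
    (v := genericRight F m n s r) (E := E)).2
      ⟨fun j => hF.linearIndepOn_iff.2 (by simpa using hcard j), ?_⟩
  have hconc (h : Module.finrank (TField F m n s r) (Fin s → TField F m n s r) = 3) :
      NoConcurrentLines (TField F m n s r) (genericLeft F m n s r).row := by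
    obtain rfl : s = 3 := by simpa using h
    exact noConcurrentLines_genericLeft F m n r
  by_contra hdisj
  obtain ⟨V, hV⟩ := exists_mul_finrank_lt_sum_finrank_columnSpan_inf hs hdisj
  obtain ⟨V', hVV', hle⟩ := exists_sum_finrank_columnSpan_inf_le hF hQ (by simpa using hs)
    (by simp) hconc (by simpa using hcard) V
  have hV' := sum_finrank_inf_le_of_disjoint hdisjQ (V := V')
  rw [Fintype.card_fin, hVV'] at hV'
  exact (hV.trans_le hle).not_ge hV'

end LeftRankThree

theorem char_independence_general (F : Type*) [Field F] (m n s r : ℕ)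
    (h : s ≤ 3 ∨ m ≤ s + 1 ∨ (m = s + 2 ∧ n = r + 2)) (E : Set (Fin m × Fin n)) :
    TensorIndep F m n s r E ↔ TensorIndep ℚ m n s r E := by
  refine ⟨tensorIndep_rat, fun hE => ?_⟩
  obtain hs | hm | ⟨rfl, rfl⟩ := h
  · exact tensorIndep_of_rat_of_le_three hs hE
  · obtain hm | rfl := Nat.le_succ_iff.1 hm
    · exact tensorIndep_of_rat_of_le (.inl hm) hE
    · exact tensorIndep_of_rat_of_corank_one_left hE
  · exact tensorIndep_of_rat_of_corank_two hE

theorem char_independence (p : ℕ) [Fact p.Prime] (m n s r : ℕ) (hs : s ≤ m) (hr : r ≤ n)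
    (h : s ≤ 3 ∨ m - s ≤ 1 ∨ (m - s = 2 ∧ n - r = 2)) (E : Set (Fin m × Fin n)) :
    TensorIndep (ZMod p) m n s r E ↔ TensorIndep ℚ m n s r E :=
  char_independence_general (ZMod p) m n s r (by omega) E
end
end

section
/- Let m, n ≥ 2 and let F be any field. If a bipartite graph G ⊆ [m]×[n] admits an orientation of its edges with no directed cycles and no alternating cycles, then the complement ([m]×[n]) ∖ G is spanning in the tensor matroid T_{m,n}(m−2, n−2, F) (equivalently, G is independent in the dual of T_{m,n}(m−2, n−2, F)). -/
open scoped Classical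

noncomputable section

/-- A cycle of length `2k` in a bipartite graph `G ⊆ [m]×[n]`: distinct `i_1,…,i_k ∈ [m]`
and distinct `j_1,…,j_k ∈ [n]` such that every edge `(i_t, j_t)` and `(i_{t+1}, j_t)`
(indices mod `k`) lies in `G`. -/
def IsCycle {m n : ℕ} (G : Set (Fin m × Fin n)) (k : ℕ)
    (i : ZMod k → Fin m) (j : ZMod k → Fin n) : Prop :=
  2 ≤ k ∧ Function.Injective i ∧ Function.Injective j ∧
    (∀ t, (i t, j t) ∈ G) ∧ (∀ t, (i (t + 1), j t) ∈ G)

/-- An orientation of the edges of `G` is a map `o` assigning to each edge a direction;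
`o e = true` means the edge `e` is oriented from its `[m]`-endpoint to its `[n]`-endpoint.
The orientation is good if no cycle of `G` is directed (all edges oriented in the
direction of some traversal) and no cycle of `G` is alternating (every vertex of the
cycle is a source or a sink for the two incident cycle edges). -/
def GoodOrientation {m n : ℕ} (G : Set (Fin m × Fin n)) (o : Fin m × Fin n → Bool) : Prop :=
  ∀ (k : ℕ) (i : ZMod k → Fin m) (j : ZMod k → Fin n), IsCycle G k i j →
    (¬ ((∀ t, o (i t, j t) = true ∧ o (i (t + 1), j t) = false) ∨
        (∀ t, o (i t, j t) = false ∧ o (i (t + 1), j t) = true))) ∧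
    (¬ (∀ t, o (i t, j t) = o (i (t + 1), j t) ∧ o (i t, j t) = o (i t, j (t - 1))))

/-!
A specialization of the generic vectors whose tensor products span forces the generic ones to span,
because a nonzero maximal minor cannot specialize from zero. So it suffices to find good vectors
over one field containing `F`, and the Laurent series field `F⸨X⸩` works.

An orientation without directed cycles has integer potentials `p`, `q` decreasing along every edge.
Take the `u_i` to satisfy the relations `∑ u_i = ∑ X ^ p_i u_i = 0`, and the `v_j` the relations
`∑ v_j = ∑ X ^ (-q_j) v_j = 0`. If the `u_i ⊗ v_j` with `(i, j) ∉ G` do not span, then a nonzero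
functional vanishing on them yields a nonzero matrix `M` supported on `G` that is killed by both
relations on each side. In the lowest-order terms of `M` the unweighted relations only see the
edges directed from `[m]` to `[n]`, and the weighted relations only see the edges directed
from `[n]` to `[m]`. Since no cycle is alternating, both edge classes are forests, and a matrix
supported on a forest with zero row and column sums is zero.
-/

open scoped Matrix Kronecker LaurentSeries

section Cycles

variable {α β : Type*} {P Q : α → β → Prop}

/-- There is a cycle `i 0, j 0, i 1, j 1, …` in the complete bipartite graph on `α` and `β` whose
edges out of the `i t` satisfy `P` and whose edges back into the `i t` satisfy `Q`. Directed cycles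
are the case where `P` and `Q` are the two directions of edges, and cycles of a bipartite graph the
case `P = Q`. As in `IsCycle`, indices live in `ZMod k`. -/
def HasCycle (P Q : α → β → Prop) : Prop :=
  ∃ (k : ℕ) (i : ZMod k → α) (j : ZMod k → β), 2 ≤ k ∧ Function.Injective i ∧
    Function.Injective j ∧ (∀ t, P (i t) (j t)) ∧ ∀ t, Q (i (t + 1)) (j t)

theorem hasCycle_of_closed_path {l : ℕ} (hl : l ≠ 0) {a : Fin (l + 1) → α} {b : Fin (l + 1) → β}
    (ha : Function.Injective a) (hb : Function.Injective b) (hP : ∀ t, P (a t) (b t))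
    (hQ : ∀ t : Fin l, Q (a t.succ) (b t.castSucc)) (hclose : Q (a 0) (b (Fin.last l))) :
    HasCycle P Q := by
  suffices hQ' : ∀ t : Fin (l + 1), Q (a (t + 1)) (b t) from
    ⟨l + 1, a, b, by omega, ha, hb, hP, hQ'⟩
  intro t
  induction t using Fin.lastCases with
  | last => rwa [Fin.last_add_one]
  | cast t => simpa only [Fin.coeSucc_eq_succ] using hQ t

theorem hasCycle_of_walk [Finite α] {a : ℕ → α} {b : ℕ → β} (hP : ∀ t, P (a t) (b t))
    (hQ : ∀ t, Q (a (t + 1)) (b t)) (ha : ∀ t, a t ≠ a (t + 1)) (hb : ∀ t, b t ≠ b (t + 1)) :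
    HasCycle P Q := by
  let IsChord (l : ℕ) : Prop := l ≠ 0 ∧ ∃ s, Q (a s) (b (s + l))
  have chord_of_a_eq {x l : ℕ} (h : a x = a (x + l + 1)) : IsChord l := by
    refine ⟨?_, x, h ▸ hQ (x + l)⟩
    rintro rfl
    exact ha x h
  have chord_of_b_eq {x l : ℕ} (h : b x = b (x + l + 1)) : IsChord l := by
    refine ⟨?_, x + 1, by rw [add_right_comm, ← h]; exact hQ x⟩
    rintro rfl
    exact hb x h
  have exists_chord : ∃ l, IsChord l := by
    obtain ⟨x, y, hxy, h⟩ : ∃ x y, x < y ∧ a x = a y := by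
      obtain ⟨x, y, hne, h⟩ := Finite.exists_ne_map_eq_of_infinite a
      exact hne.lt_or_gt.elim (⟨x, y, ·, h⟩) (⟨y, x, ·, h.symm⟩)
    obtain ⟨l, rfl⟩ := Nat.exists_eq_add_of_lt hxy
    exact ⟨l, chord_of_a_eq h⟩
  obtain ⟨l, ⟨hl, s, hs⟩, hmin⟩ : ∃ l, IsChord l ∧ ∀ l' < l, ¬IsChord l' :=
    ⟨_, Nat.find_spec exists_chord, fun _ => Nat.find_min exists_chord⟩
  refine hasCycle_of_closed_path hl (a := fun t => a (s + t)) (b := fun t => b (s + t))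
    (.of_lt_imp_ne fun x y hxy h => ?_) (.of_lt_imp_ne fun x y hxy h => ?_)
    (fun _ => hP _) (fun _ => hQ _) hs
  · obtain ⟨d, hd⟩ := Nat.exists_eq_add_of_lt (Fin.lt_def.1 hxy)
    exact hmin d (by omega) (chord_of_a_eq (x := s + x) (by rw [h, hd]; ring_nf))
  · obtain ⟨d, hd⟩ := Nat.exists_eq_add_of_lt (Fin.lt_def.1 hxy)
    exact hmin d (by omega) (chord_of_b_eq (x := s + x) (by rw [h, hd]; ring_nf))

end Cycles

section Potentials

theorem exists_nat_rank_of_wellFounded {α : Type*} [Finite α] {r : α → α → Prop}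
    (hr : WellFounded r) : ∃ f : α → ℕ, ∀ x y, r x y → f x < f y := by
  refine ⟨fun y => {x | Relation.TransGen r x y}.ncard, fun x y hxy => Set.ncard_lt_ncard ?_⟩
  refine ⟨fun z hz => hz.tail hxy, fun hsub => ?_⟩
  exact hr.transGen.irrefl.irrefl x (hsub (Relation.TransGen.single hxy))

theorem exists_potential {α β : Type*} [Finite α] {P Q : α → β → Prop}
    (hdisj : ∀ i j, P i j → ¬Q i j) (hPQ : ¬HasCycle P Q) :
    ∃ (p : α → ℤ) (q : β → ℤ), (∀ i j, P i j → q j < p i) ∧ ∀ i j, Q i j → p i < q j := by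
  have := Fintype.ofFinite α
  have hwf : WellFounded fun i' i => ∃ j, P i j ∧ Q i' j := by
    refine wellFounded_iff_isEmpty_descending_chain.2 ⟨fun ⟨a, ha⟩ => hPQ ?_⟩
    choose b hP hQ using ha
    exact hasCycle_of_walk hP hQ (fun t h => hdisj _ _ (hP t) (h ▸ hQ t))
      fun t h => hdisj _ _ (hP (t + 1)) (h ▸ hQ t)
  obtain ⟨f, hf⟩ := exists_nat_rank_of_wellFounded hwf
  let g (j : β) : ℕ := (Finset.univ.filter (Q · j)).sup (f · + 1)
  -- Doubling leaves room to place `p i` strictly between consecutive values of `q`.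
  refine ⟨fun i => 2 * f i + 1, fun j => 2 * g j, fun i j hP => ?_, fun i j hQ => ?_⟩
  · have : g j ≤ f i := Finset.sup_le fun i' hi' => hf _ _ ⟨j, hP, (Finset.mem_filter.1 hi').2⟩
    dsimp only
    omega
  · have : f i + 1 ≤ g j :=
      Finset.le_sup (f := (f · + 1)) (Finset.mem_filter.2 ⟨Finset.mem_univ i, hQ⟩)
    dsimp only
    omega

end Potentials

section Vanishing

theorem exists_ne_ne_zero_of_sum_eq_zero {ι A : Type*} [Fintype ι] [AddCommMonoid A] {f : ι → A}
    (hf : ∑ i, f i = 0) {i : ι} (hi : f i ≠ 0) : ∃ i', i' ≠ i ∧ f i' ≠ 0 := by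
  contrapose! hi
  rwa [Fintype.sum_eq_single i hi] at hf

variable {α β : Type*} [Fintype α] [Fintype β] {P Q : α → β → Prop}

theorem eq_zero_of_sum_eq_zero_of_not_hasCycle {A : Type*} [AddCommMonoid A] (hP : ¬HasCycle P P)
    {N : α → β → A} (hN : ∀ i j, N i j ≠ 0 → P i j) (hrow : ∀ i, ∑ j, N i j = 0)
    (hcol : ∀ j, ∑ i, N i j = 0) : N = 0 := by
  by_contra hne
  obtain ⟨i₀, j₀, h₀⟩ : ∃ i j, N i j ≠ 0 := by
    contrapose! hne
    exact funext₂ hne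
  have hstep (e : {e : α × β // N e.1 e.2 ≠ 0}) : ∃ e' : {e : α × β // N e.1 e.2 ≠ 0},
      e'.1.1 ≠ e.1.1 ∧ e'.1.2 ≠ e.1.2 ∧ N e'.1.1 e.1.2 ≠ 0 := by
    obtain ⟨i', hi', hN'⟩ := exists_ne_ne_zero_of_sum_eq_zero (hcol e.1.2) e.2
    obtain ⟨j', hj', hN''⟩ := exists_ne_ne_zero_of_sum_eq_zero (hrow i') hN'
    exact ⟨⟨(i', j'), hN''⟩, hi', hj', hN'⟩
  choose next hi hj hN' using hstep
  let e (t : ℕ) : {e : α × β // N e.1 e.2 ≠ 0} := next^[t] ⟨(i₀, j₀), h₀⟩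
  have e_succ (t : ℕ) : e (t + 1) = next (e t) := Function.iterate_succ_apply' ..
  refine hP (hasCycle_of_walk (a := fun t => (e t).1.1) (b := fun t => (e t).1.2)
    (fun t => hN _ _ (e t).2) (fun t => ?_) (fun t => ?_) fun t => ?_)
  · exact hN _ _ (e_succ t ▸ hN' (e t))
  · exact e_succ t ▸ (hi (e t)).symm
  · exact e_succ t ▸ (hj (e t)).symm

theorem eq_zero_of_shifted_sums_eq_zero {A : Type*} [AddCommMonoid A] (hP : ¬HasCycle P P)
    (hQ : ¬HasCycle Q Q) {p : α → ℤ} {q : β → ℤ} (hpP : ∀ i j, P i j → q j < p i)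
    (hpQ : ∀ i j, Q i j → p i < q j) {c : ℤ → α → β → A} {d₀ : ℤ} (hd₀ : ∀ d < d₀, c d = 0)
    (hsupp : ∀ d i j, c d i j ≠ 0 → P i j ∨ Q i j)
    (hrow : ∀ d i, ∑ j, c d i j = 0) (hcol : ∀ d j, ∑ i, c d i j = 0)
    (hrow' : ∀ d i, ∑ j, c (d + q j) i j = 0) (hcol' : ∀ d j, ∑ i, c (d - p i) i j = 0) :
    c = 0 := by
  obtain ⟨d₁, hd₁⟩ : ∃ d₁, ∀ e : α × β, d₁ ≤ min d₀ (d₀ - q e.2 + p e.1) := by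
    obtain ⟨d₁, hd₁⟩ := Set.finite_range (fun e : α × β => min d₀ (d₀ - q e.2 + p e.1)) |>.bddBelow
    exact ⟨d₁, fun e => hd₁ ⟨e, rfl⟩⟩
  suffices h : ∀ d, c d = 0 ∧ (fun i j => c (d + q j - p i) i j) = 0 from funext fun d => (h d).1
  intro d
  induction d using Int.strongRec (m := d₁) with
  | lt d hd =>
    refine ⟨funext₂ fun i j => ?_, funext₂ fun i j => ?_⟩ <;> have := hd₁ (i, j)
    · exact congrFun₂ (hd₀ d (by dsimp only at this; omega)) i j
    · exact congrFun₂ (hd₀ _ (by dsimp only at this; omega)) i j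
  | ge d _ ih =>
    constructor
    · refine eq_zero_of_sum_eq_zero_of_not_hasCycle hP (fun i j hne => ?_) (hrow d) (hcol d)
      refine (hsupp _ _ _ hne).resolve_right fun hij => hne ?_
      have hlt : d - (q j - p i) < d := by have := hpQ i j hij; omega
      simpa only [show d - (q j - p i) + q j - p i = d by ring, Pi.zero_apply]
        using congrFun₂ (ih _ hlt).2 i j
    · refine eq_zero_of_sum_eq_zero_of_not_hasCycle hQ (fun i j hne => ?_) (fun i => ?_)
        fun j => hcol' (d + q j) j
      · refine (hsupp _ _ _ hne).resolve_left fun hij => hne ?_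
        have hlt : d + q j - p i < d := by have := hpP i j hij; omega
        exact congrFun₂ (ih _ hlt).1 i j
      · simpa only [sub_add_eq_add_sub] using hrow' (d - p i) i

theorem laurentMatrix_eq_zero_of_mulVec_eq_zero {R : Type*} [Semiring R] (hP : ¬HasCycle P P)
    (hQ : ¬HasCycle Q Q) {p : α → ℤ} {q : β → ℤ} (hpP : ∀ i j, P i j → q j < p i)
    (hpQ : ∀ i j, Q i j → p i < q j) {M : Matrix α β R⸨X⸩}
    (hsupp : ∀ i j, M i j ≠ 0 → P i j ∨ Q i j) (hrow : M *ᵥ 1 = 0) (hcol : 1 ᵥ* M = 0)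
    (hrow' : M *ᵥ (fun j => HahnSeries.single (-q j) 1) = 0)
    (hcol' : (fun i => HahnSeries.single (p i) 1) ᵥ* M = 0) : M = 0 := by
  obtain ⟨d₀, hd₀⟩ := Set.finite_range (fun e : α × β => (M e.1 e.2).order) |>.bddBelow
  have hcoeff : (fun d i j => (M i j).coeff d) = 0 := by
    refine eq_zero_of_shifted_sums_eq_zero hP hQ hpP hpQ (d₀ := d₀) (fun d hd => ?_)
      (fun d i j hne => hsupp i j fun h => hne (by rw [h, HahnSeries.coeff_zero]))
      (fun d i => ?_) (fun d j => ?_) (fun d i => ?_) fun d j => ?_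
    · exact funext₂ fun i j =>
        HahnSeries.coeff_eq_zero_of_lt_order (hd.trans_le (hd₀ ⟨(i, j), rfl⟩))
    · simpa [Matrix.mulVec, dotProduct] using congr(($hrow i).coeff d)
    · simpa [Matrix.vecMul, dotProduct] using congr(($hcol j).coeff d)
    · simpa [Matrix.mulVec, dotProduct, HahnSeries.coeff_mul_single]
        using congr(($hrow' i).coeff d)
    · simpa [Matrix.vecMul, dotProduct, HahnSeries.coeff_single_mul]
        using congr(($hcol' j).coeff d)
  exact Matrix.ext fun i j => HahnSeries.ext (funext fun d => congr($hcoeff d i j))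

end Vanishing

section Spanning

variable {α β σ ρ ι κ K L : Type*} [Field K] [Field L]

theorem exists_linearIndependent_rows_mulVec_eq_zero [Fintype α] [Fintype κ] {s : ℕ}
    (hs : s + Fintype.card κ ≤ Fintype.card α) (x : κ → α → L) :
    ∃ U : Matrix (Fin s) α L, LinearIndependent L U.row ∧ ∀ c, U *ᵥ x c = 0 := by
  let T := (Matrix.of x).mulVecLin
  have hker : s ≤ Module.finrank L (LinearMap.ker T) := by
    have hdim := T.finrank_range_add_finrank_ker
    have hrange := (LinearMap.range T).finrank_le
    rw [Module.finrank_fintype_fun_eq_card] at hdim hrange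
    omega
  obtain ⟨u, hu⟩ := exists_linearIndependent_of_le_finrank hker
  refine ⟨Matrix.of fun k => u k, hu.map' _ (LinearMap.ker T).ker_subtype, fun c => ?_⟩
  ext k
  have hT : Matrix.of x *ᵥ (u k : α → L) = 0 := (u k).2
  exact (dotProduct_comm _ _).trans (congrFun hT c)

theorem eq_zero_of_mul_eq_zero_of_linearIndependent_row [Fintype ρ] {V : Matrix ρ β L}
    (hV : LinearIndependent L V.row) {B : Matrix α ρ L} (h : B * V = 0) : B = 0 := by
  funext i
  have hi : B i ᵥ* V = 0 := congrFun h i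
  exact Matrix.vecMul_injective_iff.2 hV (hi.trans (Matrix.zero_vecMul V).symm)

theorem span_col_image_eq_top [Fintype κ] {W : Matrix κ ι L} {E : Set ι}
    (h : ∀ a : κ → L, (∀ e ∈ E, (a ᵥ* W) e = 0) → a = 0) :
    Submodule.span L (W.col '' E) = ⊤ := by
  by_contra hne
  obtain ⟨f, hf, hker⟩ := Submodule.exists_le_ker_of_lt_top _ (lt_top_iff_ne_top.2 hne)
  obtain ⟨a, rfl⟩ := (dotProductEquiv L κ).surjective f
  refine hf ?_
  rw [h a fun e he => hker (Submodule.subset_span ⟨e, he, rfl⟩), map_zero]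

theorem span_kronecker_col_image_eq_top [Fintype σ] [Fintype ρ] {U : Matrix σ α L}
    {V : Matrix ρ β L} {E : Set (α × β)}
    (h : ∀ A : Matrix σ ρ L, (∀ e ∈ E, (Uᵀ * A * V) e.1 e.2 = 0) → A = 0) :
    Submodule.span L ((U ⊗ₖ V).col '' E) = ⊤ := by
  refine span_col_image_eq_top fun a ha => ?_
  obtain ⟨A, rfl⟩ := Matrix.vec_bijective.surjective a
  rw [Matrix.vec_vecMul_kronecker] at ha
  rw [Matrix.vec_eq_zero_iff, ← Matrix.transpose_eq_zero]
  refine h Aᵀ fun e he => ?_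
  rw [← ha e he, Matrix.vec, ← Matrix.transpose_apply (Vᵀ * A * U)]
  simp only [Matrix.transpose_mul, Matrix.transpose_transpose, Matrix.mul_assoc]

theorem exists_linearIndependent_submatrix_col [Finite κ] {W : Matrix κ ι L} {E : Set ι}
    (h : Submodule.span L (W.col '' E) = ⊤) :
    ∃ g : κ → ι, (∀ k, g k ∈ E) ∧ LinearIndependent L (W.submatrix id g).col := by
  obtain ⟨τ, c, -, hspan, hli⟩ := exists_linearIndependent' L fun e : E => W.col e
  rw [← Set.image_eq_range, h] at hspan
  let e := (Pi.basisFun L κ).indexEquiv (Module.Basis.mk hli hspan.ge)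
  exact ⟨fun k => c (e k), fun k => (c (e k)).2, hli.comp e e.injective⟩

theorem span_map_col_image_eq_top_of_injective [Finite κ] {R : Type*} [CommRing R] {φ : R →+* L}
    {ψ : R →+* K} (hψ : Function.Injective ψ) {W : Matrix κ ι R} {E : Set ι}
    (h : Submodule.span L ((W.map φ).col '' E) = ⊤) :
    Submodule.span K ((W.map ψ).col '' E) = ⊤ := by
  have := Fintype.ofFinite κ
  obtain ⟨g, hgE, hli⟩ := exists_linearIndependent_submatrix_col h
  let D := W.submatrix id g
  have hφD : φ D.det ≠ 0 := by
    rw [RingHom.map_det, ← isUnit_iff_ne_zero, ← Matrix.isUnit_iff_isUnit_det]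
    exact Matrix.linearIndependent_cols_iff_isUnit.1 hli
  have hψD : (ψ.mapMatrix D).det ≠ 0 := by
    rw [← RingHom.map_det, map_ne_zero_iff ψ hψ]
    exact fun h₀ => hφD (by rw [h₀, map_zero])
  have hspan := (Matrix.linearIndependent_cols_of_det_ne_zero hψD).span_eq_top_of_card_eq_finrank'
    (Module.finrank_fintype_fun_eq_card K).symm
  refine top_le_iff.1 (hspan.ge.trans (Submodule.span_mono ?_))
  rintro _ ⟨k, rfl⟩
  exact ⟨g k, hgE k, rfl⟩

end Spanning

section Specialization

theorem exists_span_kronecker_eq_top {α β : Type*} [Fintype α] [Fintype β] {P Q : α → β → Prop}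
    (hdisj : ∀ i j, P i j → ¬Q i j) (hPQ : ¬HasCycle P Q) (hP : ¬HasCycle P P)
    (hQ : ¬HasCycle Q Q) {s r : ℕ} (hs : s + 2 ≤ Fintype.card α) (hr : r + 2 ≤ Fintype.card β)
    (F : Type*) [Field F] :
    ∃ (U : Matrix (Fin s) α F⸨X⸩) (V : Matrix (Fin r) β F⸨X⸩), Submodule.span F⸨X⸩
      ((U ⊗ₖ V).col '' {e | ¬(P e.1 e.2 ∨ Q e.1 e.2)}) = ⊤ := by
  obtain ⟨p, q, hpP, hpQ⟩ := exists_potential hdisj hPQ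
  let x : α → F⸨X⸩ := fun i => HahnSeries.single (p i) 1
  let y : β → F⸨X⸩ := fun j => HahnSeries.single (-q j) 1
  obtain ⟨U, hU, hUx⟩ := exists_linearIndependent_rows_mulVec_eq_zero (by simpa) ![1, x]
  obtain ⟨V, hV, hVy⟩ := exists_linearIndependent_rows_mulVec_eq_zero (by simpa) ![1, y]
  refine ⟨U, V, span_kronecker_col_image_eq_top fun A hA => ?_⟩
  have hcol {z : α → F⸨X⸩} (hz : U *ᵥ z = 0) : z ᵥ* (Uᵀ * A * V) = 0 := by
    simp only [← Matrix.vecMul_vecMul, Matrix.vecMul_transpose, hz, Matrix.zero_vecMul]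
  have hrow {z : β → F⸨X⸩} (hz : V *ᵥ z = 0) : (Uᵀ * A * V) *ᵥ z = 0 := by
    simp only [← Matrix.mulVec_mulVec, hz, Matrix.mulVec_zero]
  have hM : Uᵀ * A * V = 0 := laurentMatrix_eq_zero_of_mulVec_eq_zero hP hQ hpP hpQ
    (fun i j => not_imp_comm.1 (hA (i, j))) (hrow (hVy 0)) (hcol (hUx 0)) (hrow (hVy 1))
    (hcol (hUx 1))
  have hUA : Uᵀ * A = 0 := eq_zero_of_mul_eq_zero_of_linearIndependent_row hV hM
  refine Matrix.transpose_eq_zero.1 (eq_zero_of_mul_eq_zero_of_linearIndependent_row hU ?_)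
  simpa only [Matrix.transpose_mul, Matrix.transpose_transpose, Matrix.transpose_zero]
    using congr($hUAᵀ)

theorem tensorSpanning_of_span_kronecker_eq_top {F L : Type*} [Field F] [Field L] [Algebra F L]
    {m n s r : ℕ} {E : Set (Fin m × Fin n)} (U : Matrix (Fin s) (Fin m) L)
    (V : Matrix (Fin r) (Fin n) L) (h : Submodule.span L ((U ⊗ₖ V).col '' E) = ⊤) :
    TensorSpanning F m n s r E := by
  let W : Matrix (Fin s × Fin r) (Fin m × Fin n)
      (MvPolynomial ((Fin m × Fin s) ⊕ (Fin n × Fin r)) F) :=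
    .of fun kl e => .X (.inl (e.1, kl.1)) * .X (.inr (e.2, kl.2))
  let φ := (MvPolynomial.aeval (R := F) (Sum.elim (fun x : Fin m × Fin s => U x.2 x.1)
    fun y : Fin n × Fin r => V y.2 y.1)).toRingHom
  have hφ : W.map φ = U ⊗ₖ V := by
    ext kl e
    simp [W, φ]
  have hψ : (W.map (algebraMap _ (TField F m n s r))).col = tvec F m n s r := by
    ext e kl
    simp [W, tvec]
  rw [TensorSpanning, ← hψ]
  exact span_map_col_image_eq_top_of_injective (IsFractionRing.injective _ _) (hφ ▸ h)

end Specialization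

section Orientations

/-- The edges `(i, j)` of `G` with `o (i, j) = d`: those directed from `[m]` to `[n]` if `d` is
`true`, and those directed from `[n]` to `[m]` if `d` is `false`. -/
def OrientedEdge {m n : ℕ} (G : Set (Fin m × Fin n)) (o : Fin m × Fin n → Bool) (d : Bool)
    (i : Fin m) (j : Fin n) : Prop :=
  (i, j) ∈ G ∧ o (i, j) = d

variable {m n : ℕ} {G : Set (Fin m × Fin n)} {o : Fin m × Fin n → Bool}

theorem GoodOrientation.not_hasCycle_directed (ho : GoodOrientation G o) :
    ¬HasCycle (OrientedEdge G o true) (OrientedEdge G o false) := by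
  rintro ⟨k, i, j, hk, hi, hj, hout, hin⟩
  have hcycle : IsCycle G k i j := ⟨hk, hi, hj, fun t => (hout t).1, fun t => (hin t).1⟩
  exact (ho k i j hcycle).1 (.inl fun t => ⟨(hout t).2, (hin t).2⟩)

theorem GoodOrientation.not_hasCycle_alternating (ho : GoodOrientation G o) (d : Bool) :
    ¬HasCycle (OrientedEdge G o d) (OrientedEdge G o d) := by
  rintro ⟨k, i, j, hk, hi, hj, hfst, hsnd⟩
  have hcycle : IsCycle G k i j := ⟨hk, hi, hj, fun t => (hfst t).1, fun t => (hsnd t).1⟩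
  refine (ho k i j hcycle).2 fun t => ⟨(hfst t).2.trans (hsnd t).2.symm, (hfst t).2.trans ?_⟩
  simpa only [sub_add_cancel] using (hsnd (t - 1)).2.symm

theorem setOf_not_orientedEdge :
    {e : Fin m × Fin n | ¬(OrientedEdge G o true e.1 e.2 ∨ OrientedEdge G o false e.1 e.2)} =
      Gᶜ := by
  ext e
  cases h : o e <;> simp [OrientedEdge, h]

end Orientations

theorem orientation_implies_spanning_general (F : Type*) [Field F] {m n s r : ℕ} (hs : s + 2 ≤ m)
    (hr : r + 2 ≤ n) {G : Set (Fin m × Fin n)} (h : ∃ o, GoodOrientation G o) :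
    TensorSpanning F m n s r Gᶜ := by
  obtain ⟨o, ho⟩ := h
  have hdisj (i : Fin m) (j : Fin n) (hij : OrientedEdge G o true i j) :
      ¬OrientedEdge G o false i j := fun hij' => Bool.noConfusion (hij.2.symm.trans hij'.2)
  obtain ⟨U, V, hUV⟩ := exists_span_kronecker_eq_top hdisj ho.not_hasCycle_directed
    (ho.not_hasCycle_alternating true) (ho.not_hasCycle_alternating false)
    (hs.trans_eq (Fintype.card_fin m).symm) (hr.trans_eq (Fintype.card_fin n).symm) F
  rw [setOf_not_orientedEdge] at hUV
  exact tensorSpanning_of_span_kronecker_eq_top U V hUV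

theorem orientation_implies_spanning (F : Type*) [Field F] (m n : ℕ) (hm : 2 ≤ m) (hn : 2 ≤ n)
    (G : Set (Fin m × Fin n)) (h : ∃ o : Fin m × Fin n → Bool, GoodOrientation G o) :
    TensorSpanning F m n (m - 2) (n - 2) Gᶜ :=
  orientation_implies_spanning_general F (Nat.sub_add_cancel hm).le (Nat.sub_add_cancel hn).le h
end
end
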